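/- arXiv:2502.05939 — 8 statements merged into one kernel-verified Lean document; each statement's English description precedes it below -/
import Mathlib

section
/- The map sending a permutation π of [n] to the sequence λ(π) defined by λ(π)_i = max{π_1, …, π_i} is a bijection from the set of 312-avoiding permutations in S_n onto the set of weakly increasing sequences λ = (λ_1 ≤ λ_2 ≤ … ≤ λ_n) of positive integers satisfying λ_i ≥ i for all i ∈ [n] and λ_n = n. -/
/-- A permutation `σ` avoids the pattern `312` if there are no indices `i < j < k`
with `σ j < σ k < σ i`. -/
def Avoids312 {n : ℕ} (σ : Equiv.Perm (Fin n)) : Prop :=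
  ¬ ∃ i j k : Fin n, i < j ∧ j < k ∧ σ j < σ k ∧ σ k < σ i

/-- `runningMax σ i = max {σ_1, …, σ_i}`, where the values of `σ` are taken as
1-based positive integers (so the value at position `j : Fin n` is `(σ j : ℕ) + 1`). -/
def runningMax {n : ℕ} (σ : Equiv.Perm (Fin n)) (i : Fin n) : ℕ :=
  (Finset.Iic i).sup fun j => (σ j : ℕ) + 1

/-- Greedy sequence: the largest value below `L i` that was not used before. -/
def greedySeq (L : ℕ → ℕ) (i : ℕ) : ℕ :=
  (Finset.range (L i) \ (Finset.univ.image fun j : Fin i => greedySeq L j.1)).sup id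
termination_by i
decreasing_by exact j.2

theorem greedySeq_spec (L : ℕ → ℕ) (i : ℕ) (hi : i + 1 ≤ L i) :
    greedySeq L i < L i ∧ (∀ j < i, greedySeq L j ≠ greedySeq L i) ∧
      ∀ v < L i, (∀ j < i, greedySeq L j ≠ v) → v ≤ greedySeq L i := by
  set S := Finset.range (L i) \ (Finset.univ.image fun j : Fin i => greedySeq L j.1) with hS
  have hdef : greedySeq L i = S.sup id := by rw [greedySeq]
  have hmem : ∀ v, v ∈ S ↔ v < L i ∧ ∀ j < i, greedySeq L j ≠ v := by
    intro v
    rw [hS, Finset.mem_sdiff, Finset.mem_range, Finset.mem_image]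
    constructor
    · rintro ⟨h1, h2⟩
      exact ⟨h1, fun j hj h => h2 ⟨⟨j, hj⟩, Finset.mem_univ _, h⟩⟩
    · rintro ⟨h1, h2⟩
      refine ⟨h1, ?_⟩
      rintro ⟨j, -, h⟩
      exact h2 j.1 j.2 h
  have hne : S.Nonempty := by
    rw [← Finset.card_pos, hS]
    have h1 := Finset.le_card_sdiff
      (Finset.univ.image fun j : Fin i => greedySeq L j.1) (Finset.range (L i))
    have h2 : (Finset.univ.image fun j : Fin i => greedySeq L j.1).card ≤ i :=
      Finset.card_image_le.trans (by simp)
    rw [Finset.card_range] at h1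
    omega
  obtain ⟨x, hx, hxe⟩ := Finset.exists_mem_eq_sup S hne id
  have hin : greedySeq L i ∈ S := by
    rw [hdef, hxe]; exact hx
  refine ⟨((hmem _).1 hin).1, ((hmem _).1 hin).2, fun v hv h => ?_⟩
  rw [hdef]
  exact Finset.le_sup (f := id) ((hmem v).2 ⟨hv, h⟩)

theorem le_runningMax {n : ℕ} (σ : Equiv.Perm (Fin n)) {i j : Fin n} (h : j ≤ i) :
    (σ j : ℕ) + 1 ≤ runningMax σ i :=
  Finset.le_sup (f := fun j => (σ j : ℕ) + 1) (Finset.mem_Iic.2 h)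

theorem exists_runningMax {n : ℕ} (σ : Equiv.Perm (Fin n)) (i : Fin n) :
    ∃ j ≤ i, runningMax σ i = (σ j : ℕ) + 1 := by
  obtain ⟨x, hx, h⟩ := Finset.exists_mem_eq_sup (Finset.Iic i) ⟨i, by simp⟩
    (fun j => (σ j : ℕ) + 1)
  exact ⟨x, Finset.mem_Iic.1 hx, h⟩

theorem succ_le_runningMax {n : ℕ} (σ : Equiv.Perm (Fin n)) (i : Fin n) :
    (i : ℕ) + 1 ≤ runningMax σ i := by
  have h : ((Finset.Iic i).image fun j => (σ j : ℕ)) ⊆ Finset.range (runningMax σ i) := by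
    intro v hv
    obtain ⟨j, hj, rfl⟩ := Finset.mem_image.1 hv
    exact Finset.mem_range.2 (le_runningMax σ (Finset.mem_Iic.1 hj))
  have h2 := Finset.card_le_card h
  have hinj : Function.Injective fun j => (σ j : ℕ) := Fin.val_injective.comp σ.injective
  rw [Finset.card_image_of_injective _ hinj] at h2
  simpa using h2

theorem avoids_max {n : ℕ} {σ : Equiv.Perm (Fin n)} (hσ : Avoids312 σ) (i : Fin n) (v : Fin n)
    (hv : (v : ℕ) + 1 ≤ runningMax σ i) (hu : ∀ j < i, σ j ≠ v) : v ≤ σ i := by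
  by_contra hlt
  push Not at hlt
  obtain ⟨k, rfl⟩ := σ.surjective v
  obtain ⟨m, hm, hme⟩ := exists_runningMax σ i
  have hik : i < k := by
    rcases lt_trichotomy i k with h | h | h
    · exact h
    · subst h; exact absurd hlt (lt_irrefl _)
    · exact absurd rfl (hu k h)
  have hle : σ k ≤ σ m := by
    rw [Fin.le_def]; omega
  have hlt2 : σ k < σ m := by
    refine lt_of_le_of_ne hle fun h => ?_
    have := σ.injective h
    subst this
    exact absurd hik (not_lt.2 hm)
  have hmi : m < i := by
    refine lt_of_le_of_ne hm fun h => ?_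
    subst h
    exact lt_asymm hlt hlt2
  exact hσ ⟨m, i, k, hmi, hik, hlt, hlt2⟩

/-- The map `π ↦ λ(π)` with `λ(π)_i = max {π_1, …, π_i}` is a bijection from the
312-avoiding permutations in `S_n` onto the weakly increasing sequences
`λ_1 ≤ λ_2 ≤ … ≤ λ_n` of positive integers with `λ_i ≥ i` for all `i` and `λ_n = n`. -/
theorem runningMax_bijOn (n : ℕ) :
    Set.BijOn (fun σ : Equiv.Perm (Fin n) => runningMax σ)
      {σ : Equiv.Perm (Fin n) | Avoids312 σ}
      {L : Fin n → ℕ | Monotone L ∧ (∀ i : Fin n, (i : ℕ) + 1 ≤ L i) ∧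
        ∀ h : 0 < n, L ⟨n - 1, Nat.sub_lt h one_pos⟩ = n} := by
  refine ⟨?_, ?_, ?_⟩
  · intro σ _
    refine ⟨fun i j hij => Finset.sup_mono (Finset.Iic_subset_Iic.2 hij),
      succ_le_runningMax σ, fun h => ?_⟩
    apply le_antisymm
    · exact Finset.sup_le fun j _ => (σ j).2
    · have := succ_le_runningMax σ ⟨n - 1, Nat.sub_lt h one_pos⟩
      simp only at this ⊢
      omega
  · intro σ hσ τ hτ hst
    have hst' : runningMax σ = runningMax τ := hst
    ext1 i
    induction i using WellFoundedLT.induction with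
    | ind i ih =>
      apply le_antisymm
      · refine avoids_max hτ i (σ i) (hst' ▸ le_runningMax σ le_rfl) fun j hj h => ?_
        rw [← ih j hj] at h
        exact hj.ne (σ.injective h)
      · refine avoids_max hσ i (τ i) (hst' ▸ le_runningMax τ le_rfl) fun j hj h => ?_
        rw [ih j hj] at h
        exact hj.ne (τ.injective h)
  · rintro L ⟨hmono, hge, hlast⟩
    have hLn : ∀ i, L i ≤ n := by
      intro i
      have hn : 0 < n := i.pos
      refine (hmono (show i ≤ ⟨n - 1, Nat.sub_lt hn one_pos⟩ from ?_)).trans (hlast hn).le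
      rw [Fin.le_def]
      have := i.2
      simp only
      omega
    let M : ℕ → ℕ := fun i => if h : i < n then L ⟨i, h⟩ else 0
    have hM : ∀ i : Fin n, M i = L i := fun i => by simp [M]
    have spec := fun i : Fin n => greedySeq_spec M i (by rw [hM]; exact hge i)
    simp only [hM] at spec
    let f : Fin n → Fin n := fun i => ⟨greedySeq M i, (spec i).1.trans_le (hLn i)⟩
    have hf : ∀ i, (f i : ℕ) = greedySeq M i := fun i => rfl
    have hinj : Function.Injective f := by
      intro i j h
      have h' : greedySeq M i = greedySeq M j := congrArg Fin.val h
      rcases lt_trichotomy i j with hl | hl | hl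
      · exact absurd h' ((spec j).2.1 i hl)
      · exact hl
      · exact absurd h'.symm ((spec i).2.1 j hl)
    let σ : Equiv.Perm (Fin n) := Equiv.ofBijective f (Finite.injective_iff_bijective.1 hinj)
    have hσ : ∀ i, (σ i : ℕ) = greedySeq M i := fun i => rfl
    refine ⟨σ, ?_, ?_⟩
    · rintro ⟨i, j, k, hij, hjk, h1, h2⟩
      rw [Fin.lt_def] at h1 h2
      have hk : (σ k : ℕ) < L j :=
        h2.trans ((hσ i ▸ (spec i).1).trans_le (hmono hij.le))
      have := (spec j).2.2 (σ k) hk fun m hm => (spec k).2.1 m (hm.trans hjk)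
      rw [← hσ] at this
      omega
    · funext i
      apply le_antisymm
      · refine Finset.sup_le fun j hj => ?_
        exact ((spec j).1 : _).trans_le (hmono (Finset.mem_Iic.1 hj))
      · have hpos := hge i
        by_cases h : ∀ j < (i : ℕ), greedySeq M j ≠ L i - 1
        · have h1 := (spec i).2.2 (L i - 1) (by omega) h
          have h2 := le_runningMax σ (le_refl i)
          rw [hσ] at h2
          show L i ≤ runningMax σ i
          omega
        · push Not at h
          obtain ⟨j, hj, hje⟩ := h
          have h2 := le_runningMax σ (i := i) (j := ⟨j, hj.trans i.2⟩) hj.le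
          rw [hσ] at h2
          show L i ≤ runningMax σ i
          simp only at h2
          omega
end

section
/- Let λ = (λ_1 ≤ λ_2 ≤ … ≤ λ_n) be a weakly increasing sequence of positive integers with λ_i ≥ i for all i and λ_n = n. Define σ′ greedily by letting σ′_i be the largest element of {1, …, λ_i} not among {σ′_1, …, σ′_{i-1}}, for i = 1, …, n. Then σ′ is a well-defined permutation in S_n, σ′ avoids the pattern 312, and max{σ′_1, …, σ′_i} = λ_i for all i ∈ [n]. -/
/-- The greedy word: `greedy L i` is the largest element of `{1, …, L i}` not among
`greedy L 0, …, greedy L (i - 1)` (and `0` if there is no such element, i.e. if the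
greedy choice is not well-defined at step `i`). -/
noncomputable def greedy (L : ℕ → ℕ) : ℕ → ℕ := fun i =>
  Nat.strongRecOn i fun i ih =>
    (Finset.Icc 1 (L i) \
      (Finset.range i).attach.image fun j => ih j.1 (Finset.mem_range.mp j.2)).sup id

theorem greedy_eq (L : ℕ → ℕ) (i : ℕ) :
    greedy L i = (Finset.Icc 1 (L i) \ (Finset.range i).image (greedy L)).sup id := by
  have h : greedy L i = (Finset.Icc 1 (L i) \
      (Finset.range i).attach.image fun j => greedy L j.1).sup id := by
    conv_lhs => unfold greedy
    rw [Nat.strongRecOn_eq]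
    rfl
  rw [h]
  congr 2
  ext x
  simp

theorem greedy_max (L : ℕ → ℕ) (i x : ℕ) (h1 : 1 ≤ x) (h2 : x ≤ L i)
    (h3 : ∀ j < i, greedy L j ≠ x) : x ≤ greedy L i := by
  rw [greedy_eq]
  apply Finset.le_sup (f := id) (b := x)
  simp only [Finset.mem_sdiff, Finset.mem_Icc, Finset.mem_image, Finset.mem_range]
  exact ⟨⟨h1, h2⟩, fun ⟨j, hj, e⟩ => h3 j hj e⟩

theorem greedy_mem (L : ℕ → ℕ) (i : ℕ) (h : i + 1 ≤ L i) :
    1 ≤ greedy L i ∧ greedy L i ≤ L i ∧ ∀ j < i, greedy L j ≠ greedy L i := by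
  have hne : (Finset.Icc 1 (L i) \ (Finset.range i).image (greedy L)).Nonempty := by
    rw [← Finset.card_pos]
    have h1 := Finset.le_card_sdiff ((Finset.range i).image (greedy L)) (Finset.Icc 1 (L i))
    have h2 := Finset.card_image_le (s := Finset.range i) (f := greedy L)
    simp only [Nat.card_Icc, Finset.card_range] at h1 h2
    omega
  obtain ⟨x, hx, e⟩ := Finset.exists_mem_eq_sup _ hne id
  rw [← greedy_eq] at e
  simp only [id] at e
  rw [← e] at hx
  simp only [Finset.mem_sdiff, Finset.mem_Icc, Finset.mem_image, Finset.mem_range] at hx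
  exact ⟨hx.1.1, hx.1.2, fun j hj e => hx.2 ⟨j, hj, e⟩⟩

/-- For a weakly increasing sequence `λ_1 ≤ … ≤ λ_n` of positive integers with
`λ_i ≥ i` for all `i` and `λ_n = n`, the greedy word (choosing at each step `i` the largest
unused element of `{1, …, λ_i}`) is a well-defined permutation `σ′ ∈ S_n`, it avoids the
pattern `312`, and `max {σ′_1, …, σ′_i} = λ_i` for all `i`. -/
theorem greedy_is_312_avoiding_perm (n : ℕ) (hn : 0 < n) (L : Fin n → ℕ)
    (hmono : Monotone L) (hL : ∀ i : Fin n, (i : ℕ) + 1 ≤ L i)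
    (hlast : L ⟨n - 1, Nat.sub_lt hn one_pos⟩ = n) :
    ∃ σ : Equiv.Perm (Fin n),
      (∀ i : Fin n, (σ i : ℕ) + 1 = greedy (fun j => if h : j < n then L ⟨j, h⟩ else 0) i) ∧
      Avoids312 σ ∧ ∀ i : Fin n, runningMax σ i = L i := by
  set M : ℕ → ℕ := fun j => if h : j < n then L ⟨j, h⟩ else 0 with hM
  have hML : ∀ i : Fin n, M i = L i := fun i => by simp [hM]
  have hmem : ∀ i : Fin n, 1 ≤ greedy M i ∧ greedy M i ≤ L i ∧
      ∀ j < (i : ℕ), greedy M j ≠ greedy M i := fun i => by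
    have := greedy_mem M i (by rw [hML]; exact hL i)
    rwa [hML] at this
  have hLn : ∀ i, L i ≤ n := fun i => by
    rw [← hlast]
    apply hmono
    rw [Fin.le_def]
    have := i.2
    show (i : ℕ) ≤ n - 1
    omega
  let f : Fin n → Fin n := fun i => ⟨greedy M i - 1, by
    have := hmem i; have := hLn i; omega⟩
  have hf : ∀ i, (f i : ℕ) + 1 = greedy M i := fun i => by
    have := (hmem i).1
    show greedy M i - 1 + 1 = _
    omega
  have hinj : Function.Injective f := by
    intro a b hab
    have e : greedy M a = greedy M b := by rw [← hf, ← hf, hab]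
    rcases lt_trichotomy a b with h | h | h
    · exact absurd e ((hmem b).2.2 a h)
    · exact h
    · exact absurd e.symm ((hmem a).2.2 b h)
  let σ : Equiv.Perm (Fin n) := Equiv.ofBijective f (Finite.injective_iff_bijective.mp hinj)
  have hσ : ∀ i, (σ i : ℕ) + 1 = greedy M i := hf
  refine ⟨σ, hσ, ?_, ?_⟩
  · rintro ⟨i, j, k, hij, hjk, h1, h2⟩
    rw [Fin.lt_def] at h1 h2
    have hi := hσ i
    have hj := hσ j
    have hk := hσ k
    have hiL := (hmem i).2.1
    have hm := hmono hij.le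
    have := greedy_max M j (greedy M k) (hmem k).1 (by rw [hML]; omega)
      (fun l hl => (hmem k).2.2 l (lt_trans hl hjk))
    omega
  · intro i
    unfold runningMax
    apply le_antisymm
    · apply Finset.sup_le
      intro j hj
      rw [hσ]
      exact (hmem j).2.1.trans (hmono (Finset.mem_Iic.mp hj))
    · by_cases h : ∃ j < (i : ℕ), greedy M j = L i
      · obtain ⟨j, hj, e⟩ := h
        have := Finset.le_sup (s := Finset.Iic i) (f := fun j => (σ j : ℕ) + 1)
          (b := ⟨j, hj.trans i.2⟩) (Finset.mem_Iic.mpr (Fin.le_def.mpr hj.le))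
        simp only [hσ] at this ⊢
        rwa [e] at this
      · push Not at h
        have h3 := greedy_max M i (L i) (by have := hL i; omega) (hML i).ge h
        have := Finset.le_sup (s := Finset.Iic i) (f := fun j => (σ j : ℕ) + 1)
          (b := i) (Finset.mem_Iic.mpr le_rfl)
        simp only [hσ] at this ⊢
        exact h3.trans this
end

section
/- Let λ = (λ_1 ≤ … ≤ λ_n) be a weakly increasing sequence of positive integers with λ_i ≥ i for all i, let m be a positive integer with m ≤ λ_1 + 1, and set λ⁺ = (m, λ_1 + 1, …, λ_n + 1). Then for every i with 1 ≤ i ≤ m, Q^{λ⁺}_i(t) = Σ_{j=1}^{i-1} Q^{λ}_j(t) + t · Σ_{j=i}^{λ_1} Q^{λ}_j(t). -/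
open Polynomial

/-- Row-complete rook placements on the Ferrers board `L` (with `n` rows): in row `i` a rook
is placed in column `(p i : ℕ) + 1 ∈ {1, …, L i}`, and all columns are distinct. -/
def RookPlacements {n : ℕ} (L : Fin n → ℕ) : Finset (∀ i : Fin n, Fin (L i)) :=
  Finset.univ.filter fun p => ∀ i j : Fin n, i ≠ j → (p i : ℕ) ≠ (p j : ℕ)

/-- The number of ascents of a rook placement: indices `i` with `σ_i < σ_{i+1}`. -/
def ascCount {n : ℕ} (L : Fin n → ℕ) (p : ∀ i : Fin n, Fin (L i)) : ℕ :=
  (Finset.univ.filter fun i : Fin n =>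
    ∃ h : (i : ℕ) + 1 < n, (p i : ℕ) < (p ⟨(i : ℕ) + 1, h⟩ : ℕ)).card

/-- The refined rook-Eulerian polynomial `Q^λ_j(t)`: the ascent-generating polynomial of the
row-complete rook placements on `λ` whose rook in the first row is in column `j`. -/
noncomputable def rookEulerianAt {n : ℕ} (L : Fin (n + 1) → ℕ) (j : ℕ) : Polynomial ℝ :=
  ∑ p ∈ (RookPlacements L).filter (fun p => (p 0 : ℕ) + 1 = j), X ^ ascCount L p

lemma sum_rookEulerianAt {n : ℕ} (L : Fin (n + 1) → ℕ) (S : Finset ℕ) :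
    ∑ j ∈ S, rookEulerianAt L j =
      ∑ p ∈ RookPlacements L, if (p 0 : ℕ) + 1 ∈ S then (X : Polynomial ℝ) ^ ascCount L p else 0 := by
  unfold rookEulerianAt
  simp_rw [Finset.sum_filter]
  rw [Finset.sum_comm]
  refine Finset.sum_congr rfl fun p _ => ?_
  rw [Finset.sum_ite_eq]

/-- The extended board. -/
abbrev boardUp {n : ℕ} (L : Fin (n + 1) → ℕ) (m : ℕ) : Fin (n + 2) → ℕ :=
  (Fin.cases m (fun j => L j + 1) : Fin (n + 2) → ℕ)

/-- Prepend the column `c` to a placement, shifting the columns `≥ c` by one. -/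
def upPl {n : ℕ} (L : Fin (n + 1) → ℕ) (m c : ℕ) (hc : c < m) (p : ∀ i, Fin (L i)) :
    ∀ i, Fin (boardUp L m i) :=
  Fin.cases (motive := fun i => Fin (boardUp L m i))
    (⟨c, hc⟩ : Fin m)
    (fun k => (⟨if (p k : ℕ) < c then (p k : ℕ) else (p k : ℕ) + 1, by
      have := (p k).2
      split_ifs <;> omega⟩ : Fin (L k + 1)))

lemma upPl_zero {n : ℕ} (L : Fin (n + 1) → ℕ) (m c : ℕ) (hc : c < m) (p : ∀ i, Fin (L i)) :
    (upPl L m c hc p 0 : ℕ) = c := rfl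

lemma upPl_succ {n : ℕ} (L : Fin (n + 1) → ℕ) (m c : ℕ) (hc : c < m) (p : ∀ i, Fin (L i))
    (k : Fin (n + 1)) :
    (upPl L m c hc p k.succ : ℕ) = if (p k : ℕ) < c then (p k : ℕ) else (p k : ℕ) + 1 := rfl

lemma ascCount_upPl {n : ℕ} (L : Fin (n + 1) → ℕ) (m c : ℕ) (hc : c < m) (p : ∀ i, Fin (L i)) :
    ascCount _ (upPl L m c hc p) = (if (p 0 : ℕ) < c then 0 else 1) + ascCount L p := by
  unfold ascCount
  rw [Finset.card_filter, Finset.card_filter, Fin.sum_univ_succ]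
  congr 1
  · have h1 : (⟨((0 : Fin (n + 2)) : ℕ) + 1, by simp⟩ : Fin (n + 2)) = (0 : Fin (n + 1)).succ := rfl
    have h2 : (∃ h : ((0 : Fin (n + 2)) : ℕ) + 1 < n + 2, (upPl L m c hc p 0 : ℕ) <
        (upPl L m c hc p ⟨((0 : Fin (n + 2)) : ℕ) + 1, h⟩ : ℕ)) ↔ ¬ (p 0 : ℕ) < c := by
      constructor
      · rintro ⟨h, h'⟩
        change c < (upPl L m c hc p (0 : Fin (n + 1)).succ : ℕ) at h'
        rw [upPl_succ] at h'
        split_ifs at h' <;> omega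
      · intro h
        refine ⟨by simp, ?_⟩
        change c < (upPl L m c hc p (0 : Fin (n + 1)).succ : ℕ)
        rw [upPl_succ, if_neg h]
        omega
    by_cases h : (p 0 : ℕ) < c
    · rw [if_neg (by rw [h2]; simpa using h), if_pos h]
    · rw [if_pos (h2.2 h), if_neg h]
  · refine Finset.sum_congr rfl fun k _ => ?_
    refine if_congr ?_ rfl rfl
    constructor
    · rintro ⟨h, h'⟩
      have hk : (k : ℕ) + 1 < n + 1 := by simpa using h
      refine ⟨hk, ?_⟩
      change _ < (upPl L m c hc p (⟨(k : ℕ) + 1, hk⟩ : Fin (n + 1)).succ : ℕ) at h'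
      rw [upPl_succ, upPl_succ] at h'
      split_ifs at h' <;> omega
    · rintro ⟨hk, h'⟩
      refine ⟨by simpa using hk, ?_⟩
      change _ < (upPl L m c hc p (⟨(k : ℕ) + 1, hk⟩ : Fin (n + 1)).succ : ℕ)
      rw [upPl_succ, upPl_succ]
      split_ifs <;> omega

lemma upPl_mem {n : ℕ} (L : Fin (n + 1) → ℕ) (m c : ℕ) (hc : c < m) (p : ∀ i, Fin (L i))
    (hp : p ∈ RookPlacements L) : upPl L m c hc p ∈ RookPlacements _ := by
  simp only [RookPlacements, Finset.mem_filter, Finset.mem_univ, true_and] at hp ⊢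
  intro a b
  refine Fin.cases ?_ (fun a => ?_) a <;> refine Fin.cases ?_ (fun b => ?_) b
  · intro h; exact absurd rfl h
  · intro _
    rw [upPl_zero, upPl_succ]
    split_ifs <;> omega
  · intro _
    rw [upPl_zero, upPl_succ]
    split_ifs <;> omega
  · intro h
    have := hp a b (fun e => h (by rw [e]))
    rw [upPl_succ, upPl_succ]
    split_ifs <;> omega

lemma upPl_inj {n : ℕ} (L : Fin (n + 1) → ℕ) (m c : ℕ) (hc : c < m) (p q : ∀ i, Fin (L i))
    (h : upPl L m c hc p = upPl L m c hc q) : p = q := by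
  funext k
  have h1 : (upPl L m c hc p k.succ : ℕ) = upPl L m c hc q k.succ := by rw [h]
  rw [upPl_succ, upPl_succ] at h1
  apply Fin.ext
  split_ifs at h1 <;> omega

lemma upPl_surj {n : ℕ} (L : Fin (n + 1) → ℕ) (hmono : Monotone L) (m c : ℕ) (hc : c < m)
    (hm' : m ≤ L 0 + 1)
    (q : ∀ i, Fin (boardUp L m i))
    (hq : q ∈ RookPlacements _) (h0 : (q 0 : ℕ) = c) :
    ∃ p ∈ RookPlacements L, upPl L m c hc p = q := by
  simp only [RookPlacements, Finset.mem_filter, Finset.mem_univ, true_and] at hq ⊢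
  have hlt : ∀ k : Fin (n + 1), (q k.succ : ℕ) < L k + 1 := fun k => (q k.succ).2
  have hne : ∀ k : Fin (n + 1), (q k.succ : ℕ) ≠ c := fun k => by
    rw [← h0]; exact hq _ _ (Fin.succ_ne_zero k)
  refine ⟨fun k => ⟨if (q k.succ : ℕ) < c then (q k.succ : ℕ) else (q k.succ : ℕ) - 1, ?_⟩, ?_, ?_⟩
  · have := hlt k
    have := hne k
    have := hmono (Fin.zero_le k)
    split_ifs <;> omega
  · intro a b hab
    have := hq a.succ b.succ (fun e => hab (Fin.succ_injective _ e))
    have := hne a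
    have := hne b
    dsimp only
    split_ifs <;> omega
  · funext k
    apply Fin.ext
    refine Fin.cases ?_ (fun k => ?_) k
    · rw [upPl_zero, h0]
    · rw [upPl_succ]
      have := hne k
      dsimp only
      split_ifs <;> omega

/-- If `λ = (λ_1 ≤ … ≤ λ_n)` is a Ferrers board with `λ_i ≥ i`, `m` is a positive integer
with `m ≤ λ_1 + 1` and `λ⁺ = (m, λ_1 + 1, …, λ_n + 1)`, then for every `1 ≤ i ≤ m`,
`Q^{λ⁺}_i(t) = Σ_{j=1}^{i-1} Q^λ_j(t) + t · Σ_{j=i}^{λ_1} Q^λ_j(t)`. -/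
theorem rookEulerianAt_recursion (n : ℕ) (L : Fin (n + 1) → ℕ) (hmono : Monotone L)
    (hL : ∀ i : Fin (n + 1), (i : ℕ) + 1 ≤ L i)
    (m : ℕ) (hm : 0 < m) (hm' : m ≤ L 0 + 1)
    (i : ℕ) (hi : 1 ≤ i) (him : i ≤ m) :
    rookEulerianAt (Fin.cases m (fun j => L j + 1) : Fin (n + 2) → ℕ) i =
      (∑ j ∈ Finset.Icc 1 (i - 1), rookEulerianAt L j)
        + X * ∑ j ∈ Finset.Icc i (L 0), rookEulerianAt L j := by
  have hc : i - 1 < m := by omega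
  rw [sum_rookEulerianAt, sum_rookEulerianAt, Finset.mul_sum, ← Finset.sum_add_distrib]
  unfold rookEulerianAt
  symm
  refine Finset.sum_bij (fun p _ => upPl L m (i - 1) hc p) ?_ ?_ ?_ ?_
  · intro p hp
    refine Finset.mem_filter.2 ⟨upPl_mem L m _ hc p hp, ?_⟩
    rw [upPl_zero]; omega
  · intro p _ q _ h
    exact upPl_inj L m _ hc p q h
  · intro q hq
    obtain ⟨hq, h0⟩ := Finset.mem_filter.1 hq
    obtain ⟨p, hp, h⟩ := upPl_surj L hmono m (i - 1) hc hm' q hq (by omega)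
    exact ⟨p, hp, h⟩
  · intro p _
    have := (p 0).2
    rw [ascCount_upPl]
    simp only [Finset.mem_Icc]
    by_cases h : (p 0 : ℕ) < i - 1
    · rw [if_pos (by omega), if_neg (by omega), if_pos h]; simp
    · rw [if_neg (by omega), if_pos (by omega), if_neg h, pow_add]; simp
end

section
/- Let λ = (λ_1 ≤ … ≤ λ_n) be a weakly increasing sequence of positive integers with λ_i ≥ i for all i, where n > 1. Then the sequence of polynomials (Q^{λ}_{λ_1}(t), Q^{λ}_{λ_1 - 1}(t), …, Q^{λ}_2(t), Q^{λ}_1(t)) is an interlacing sequence; that is, Q^{λ}_i(t) interlaces Q^{λ}_j(t) whenever λ_1 ≥ i > j ≥ 1. -/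
open Polynomial

/-- The list of real roots of `f`, with multiplicity, in weakly decreasing order. -/
noncomputable def descRoots (f : Polynomial ℝ) : List ℝ :=
  (f.roots.sort (· ≤ ·)).reverse

/-- `f` interlaces `g` (written `f ⪯ g`): both have positive leading coefficients, all their
roots are real and non-positive, `deg g = deg f` or `deg f + 1`, and listing the roots of `f` as
`a_1 ≥ a_2 ≥ …` and those of `g` as `b_1 ≥ b_2 ≥ …` one has
`⋯ ≤ a_2 ≤ b_2 ≤ a_1 ≤ b_1 ≤ 0`. -/
def Interlaces (f g : Polynomial ℝ) : Prop :=
  0 < f.leadingCoeff ∧ 0 < g.leadingCoeff ∧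
  (f.roots.card = f.natDegree) ∧ (g.roots.card = g.natDegree) ∧
  (∀ x ∈ f.roots, x ≤ 0) ∧ (∀ x ∈ g.roots, x ≤ 0) ∧
  (g.natDegree = f.natDegree ∨ g.natDegree = f.natDegree + 1) ∧
  (∀ i : ℕ, i < f.natDegree → (descRoots f).getD i 0 ≤ (descRoots g).getD i 0) ∧
  (∀ i : ℕ, i + 1 < g.natDegree → (descRoots g).getD (i + 1) 0 ≤ (descRoots f).getD i 0)

/-- the skew form -/
noncomputable def skw (u v : ℂ) : ℝ := v.im * u.re - v.re * u.im

lemma skw_sum (s t : Finset ℕ) (f g : ℕ → ℂ) :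
    skw (∑ k ∈ s, f k) (∑ l ∈ t, g l) = ∑ k ∈ s, ∑ l ∈ t, skw (f k) (g l) := by
  simp only [skw, Complex.re_sum, Complex.im_sum, Finset.sum_sub_distrib, Finset.sum_mul_sum]
  congr 1 <;> exact Finset.sum_comm

lemma skw_step (z A B C : ℂ) (hz : 0 < z.im) (hCB : 0 ≤ skw C B) (hCA : 0 ≤ skw C A)
    (hBA : 0 ≤ skw B A) (hBC : 0 ≤ skw B (z * C)) (hAC : 0 ≤ skw A (z * C))
    (hAB : 0 ≤ skw A (z * B)) :
    z.im * Complex.normSq B ≤ skw (A + B + z * C) (A + z * B + z * C) ∧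
    0 ≤ skw (A + z * B + z * C) (z * (A + B + z * C)) := by
  constructor
  · have e : skw (A + B + z * C) (A + z * B + z * C) = skw A (z * B) + skw B A +
        z.im * Complex.normSq B + skw B (z * C) + Complex.normSq z * skw C B := by
      simp only [skw, Complex.normSq_apply, Complex.add_re, Complex.add_im, Complex.mul_re,
        Complex.mul_im]
      ring
    have := mul_nonneg (Complex.normSq_nonneg z) hCB
    linarith
  · have e : skw (A + z * B + z * C) (z * (A + B + z * C)) = skw A (z * B) +
        Complex.normSq z * skw B A + Complex.normSq z * skw B (z * C) +
        Complex.normSq z * skw C B + z.im * Complex.normSq (A + z * C) := by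
      simp only [skw, Complex.normSq_apply, Complex.add_re, Complex.add_im, Complex.mul_re,
        Complex.mul_im]
      ring
    have h0 := Complex.normSq_nonneg z
    have h1 := Complex.normSq_nonneg (A + z * C)
    rw [e]
    positivity

def NonnegPairs (m : ℕ) (z : ℂ) (f : ℕ → ℂ) : Prop :=
  ∀ a b, b < a → a < m → 0 ≤ skw (f a) (f b) ∧ 0 ≤ skw (f b) (z * f a)

lemma pairs_step (m : ℕ) (z : ℂ) (hz : 0 < z.im) (f : ℕ → ℂ) (h : NonnegPairs m z f)
    (a b : ℕ) (hba : b < a) (ham : a ≤ m) (g : ℕ → ℂ)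
    (hg : ∀ a, g a = ∑ k ∈ Finset.range m, (if k < a then 1 else z) * f k) :
    z.im * Complex.normSq (∑ k ∈ Finset.Ico b a, f k) ≤ skw (g a) (g b) ∧
      0 ≤ skw (g b) (z * g a) := by
  have split : ∀ F : ℕ → ℂ, ∑ k ∈ Finset.range m, F k =
      ∑ k ∈ Finset.Ico 0 b, F k + ∑ k ∈ Finset.Ico b a, F k + ∑ k ∈ Finset.Ico a m, F k := by
    intro F
    rw [Finset.sum_Ico_consecutive _ (by omega) (by omega),
      Finset.sum_Ico_consecutive _ (by omega) (by omega), Finset.range_eq_Ico]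
  have c1 : ∀ (s : Finset ℕ) (c : ℕ), (∀ k ∈ s, k < c) →
      ∑ k ∈ s, (if k < c then 1 else z) * f k = ∑ k ∈ s, f k := by
    intro s c hs
    refine Finset.sum_congr rfl fun k hk => ?_
    rw [if_pos (hs k hk), one_mul]
  have c2 : ∀ (s : Finset ℕ) (c : ℕ), (∀ k ∈ s, c ≤ k) →
      ∑ k ∈ s, (if k < c then 1 else z) * f k = z * ∑ k ∈ s, f k := by
    intro s c hs
    rw [Finset.mul_sum]
    refine Finset.sum_congr rfl fun k hk => ?_
    rw [if_neg (not_lt.2 (hs k hk))]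
  have n1 : ∀ s t : Finset ℕ, (∀ k ∈ s, ∀ l ∈ t, l < k ∧ k < m) →
      0 ≤ skw (∑ k ∈ s, f k) (∑ k ∈ t, f k) := by
    intro s t hst
    rw [skw_sum]
    exact Finset.sum_nonneg fun k hk => Finset.sum_nonneg fun l hl =>
      (h k l (hst k hk l hl).1 (hst k hk l hl).2).1
  have n2 : ∀ s t : Finset ℕ, (∀ k ∈ s, ∀ l ∈ t, k < l ∧ l < m) →
      0 ≤ skw (∑ k ∈ s, f k) (z * ∑ k ∈ t, f k) := by
    intro s t hst
    rw [Finset.mul_sum, skw_sum]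
    exact Finset.sum_nonneg fun k hk => Finset.sum_nonneg fun l hl =>
      (h l k (hst k hk l hl).1 (hst k hk l hl).2).2
  have ga : g a = ∑ k ∈ Finset.Ico 0 b, f k + ∑ k ∈ Finset.Ico b a, f k +
      z * ∑ k ∈ Finset.Ico a m, f k := by
    rw [hg, split, c1, c1, c2] <;> simp only [Finset.mem_Ico] <;> omega
  have gb : g b = ∑ k ∈ Finset.Ico 0 b, f k + z * ∑ k ∈ Finset.Ico b a, f k +
      z * ∑ k ∈ Finset.Ico a m, f k := by
    rw [hg, split, c1, c2, c2] <;> simp only [Finset.mem_Ico] <;> omega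
  rw [ga, gb]
  apply skw_step _ _ _ _ hz
  all_goals first
    | (apply n1; simp only [Finset.mem_Ico]; omega)
    | (apply n2; simp only [Finset.mem_Ico]; omega)
noncomputable def argSum (s : Multiset ℝ) (z : ℂ) : ℝ :=
  (s.map fun a => Complex.arg (z - (a : ℂ))).sum

lemma argSum_cons (a : ℝ) (s : Multiset ℝ) (z : ℂ) :
    argSum (a ::ₘ s) z = Complex.arg (z - (a : ℂ)) + argSum s z := by
  simp [argSum]

lemma prod_polar (s : Multiset ℝ) (z : ℂ) (hz : 0 < z.im) :
    ∃ r : ℝ, 0 < r ∧ (s.map fun a : ℝ => z - (a : ℂ)).prod =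
      (r : ℂ) * Complex.exp (argSum s z * Complex.I) := by
  induction s using Multiset.induction_on with
  | empty => exact ⟨1, one_pos, by simp [argSum]⟩
  | cons a s ih =>
    obtain ⟨r, hr, h⟩ := ih
    have hne : z - (a : ℂ) ≠ 0 := by
      intro h0
      have := congrArg Complex.im h0
      simp at this
      linarith
    refine ⟨‖z - (a : ℂ)‖ * r, mul_pos (norm_pos_iff.2 hne) hr, ?_⟩
    rw [Multiset.map_cons, Multiset.prod_cons, h, argSum_cons]
    nth_rewrite 1 [← Complex.norm_mul_exp_arg_mul_I (z - (a : ℂ))]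
    push_cast
    rw [add_mul, Complex.exp_add]
    ring

lemma argSum_continuousOn (s : Multiset ℝ) : ContinuousOn (argSum s) {z : ℂ | 0 < z.im} := by
  induction s using Multiset.induction_on with
  | empty =>
    have : argSum 0 = fun _ => 0 := by ext z; simp [argSum]
    rw [this]; exact continuousOn_const
  | cons a s ih =>
    have : argSum (a ::ₘ s) = fun z => Complex.arg (z - (a : ℂ)) + argSum s z := by
      ext z; exact argSum_cons a s z
    rw [this]
    refine ContinuousOn.add ?_ ih
    intro z hz
    have h1 : ContinuousAt Complex.arg (z - (a : ℂ)) := by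
      apply Complex.continuousAt_arg
      right
      simp only [Set.mem_setOf_eq] at hz
      simp
      exact hz.ne'
    exact (ContinuousAt.comp (f := fun z : ℂ => z - (a : ℂ)) h1
      (by fun_prop)).continuousWithinAt

open Filter Topology in
lemma argSum_tendsto (s : Multiset ℝ) (x : ℝ) (hx : x ∉ s) :
    Tendsto (fun e : ℝ => argSum s ((x : ℂ) + e * Complex.I)) (𝓝[>] 0)
      (𝓝 (Real.pi * (s.countP (fun a => x < a) : ℕ))) := by
  induction s using Multiset.induction_on with
  | empty => simp [argSum]
  | cons a s ih =>
    simp only [Multiset.mem_cons, not_or] at hx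
    simp only [argSum_cons, Multiset.countP_cons]
    push_cast
    rw [mul_add, add_comm (Real.pi * _)]
    refine Tendsto.add ?_ (ih hx.2)
    have hlim : Tendsto (fun e : ℝ => (x : ℂ) + e * Complex.I - (a : ℂ)) (𝓝[>] 0)
        (𝓝 ((x : ℂ) - a)) := by
      have : ContinuousAt (fun e : ℝ => (x : ℂ) + e * Complex.I - (a : ℂ)) 0 := by fun_prop
      have h2 := this.tendsto
      simp only [Complex.ofReal_zero, zero_mul, add_zero] at h2
      exact h2.mono_left nhdsWithin_le_nhds
    rcases lt_or_gt_of_ne hx.1 with h | h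
    · rw [if_pos h]
      have hc := Complex.continuousWithinAt_arg_of_re_neg_of_im_zero (z := (x : ℂ) - a)
        (by simpa using h) (by simp)
      have hval : Complex.arg ((x : ℂ) - a) = Real.pi := by
        rw [← Complex.ofReal_sub, Complex.arg_ofReal_of_neg (by linarith)]
      rw [ContinuousWithinAt, hval] at hc
      simp only [Nat.cast_one, mul_one]
      refine hc.comp (tendsto_nhdsWithin_iff.2 ⟨hlim, ?_⟩)
      filter_upwards [self_mem_nhdsWithin] with e he
      simp only [Set.mem_Ioi] at he
      simp [he.le]
    · rw [if_neg (not_lt.2 (le_of_lt h))]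
      have hc := Complex.continuousAt_arg (x := (x : ℂ) - a) (by left; simpa using h)
      have hval : Complex.arg ((x : ℂ) - a) = 0 := by
        rw [← Complex.ofReal_sub, Complex.arg_ofReal_of_nonneg (by linarith)]
      rw [ContinuousAt, hval] at hc
      simp only [Nat.cast_zero, mul_zero]
      exact hc.comp hlim

lemma upper_preconnected : IsPreconnected {z : ℂ | 0 < z.im} :=
  (convex_halfSpace_im_gt 0).isPreconnected

lemma skw_polar (r r' θ θ' : ℝ) :
    skw ((r : ℂ) * Complex.exp (θ * Complex.I)) ((r' : ℂ) * Complex.exp (θ' * Complex.I)) =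
      r * r' * Real.sin (θ' - θ) := by
  simp only [skw, Complex.re_ofReal_mul, Complex.im_ofReal_mul, Complex.exp_ofReal_mul_I_re,
    Complex.exp_ofReal_mul_I_im, Real.sin_sub]
  ring

open Filter Topology in
lemma count_ineq (s t : Multiset ℝ)
    (h : ∀ z : ℂ, 0 < z.im → 0 ≤ Real.sin (argSum t z - argSum s z)) (x : ℝ)
    (hxs : x ∉ s) (hxt : x ∉ t) :
    s.countP (fun a => x < a) ≤ t.countP (fun a => x < a) ∧
      t.countP (fun a => x < a) ≤ s.countP (fun a => x < a) + 1 := by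
  set D : ℂ → ℝ := fun z => argSum t z - argSum s z with hD
  have hcont : ContinuousOn D {z : ℂ | 0 < z.im} :=
    (argSum_continuousOn t).sub (argSum_continuousOn s)
  have hlim : ∀ x : ℝ, x ∉ s → x ∉ t →
      Tendsto (fun e : ℝ => D ((x : ℂ) + e * Complex.I)) (𝓝[>] 0)
      (𝓝 (Real.pi * (t.countP (fun a => x < a) : ℕ) - Real.pi * (s.countP (fun a => x < a) : ℕ)))
    := fun x h1 h2 => (argSum_tendsto t x h2).sub (argSum_tendsto s x h1)
  have hpi := Real.pi_pos
  -- a base point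
  obtain ⟨z0, hz0, hz0l, hz0u⟩ : ∃ z0 : ℂ, 0 < z0.im ∧ -Real.pi / 2 < D z0 ∧
      D z0 < Real.pi / 2 := by
    obtain ⟨M, hM⟩ := (s + t).toFinset.bddAbove
    have hM' : ∀ a ∈ s + t, a ≤ M := fun a ha => hM (by simpa using ha)
    have h1 : M + 1 ∉ s := fun hc => by
      have := hM' _ (Multiset.mem_add.2 (Or.inl hc)); linarith
    have h2 : M + 1 ∉ t := fun hc => by
      have := hM' _ (Multiset.mem_add.2 (Or.inr hc)); linarith
    have hl := hlim (M + 1) h1 h2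
    have c1 : s.countP (fun a => M + 1 < a) = 0 := Multiset.countP_eq_zero.2 fun a ha => by
      have := hM' _ (Multiset.mem_add.2 (Or.inl ha)); linarith
    have c2 : t.countP (fun a => M + 1 < a) = 0 := Multiset.countP_eq_zero.2 fun a ha => by
      have := hM' _ (Multiset.mem_add.2 (Or.inr ha)); linarith
    rw [c1, c2] at hl
    simp only [Nat.cast_zero, mul_zero, sub_zero] at hl
    have he := hl.eventually (Ioo_mem_nhds (show -Real.pi / 2 < 0 by linarith)
      (show 0 < Real.pi / 2 by linarith))
    obtain ⟨e, he1, he2⟩ := (he.and self_mem_nhdsWithin).exists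
    exact ⟨_, by simpa using he2, he1.1, he1.2⟩
  have hz0n : 0 ≤ D z0 := by
    by_contra hc
    push Not at hc
    have := Real.sin_neg_of_neg_of_neg_pi_lt hc (by linarith)
    have := h z0 hz0
    simp only [hD] at *
    linarith
  have hrange : ∀ z : ℂ, 0 < z.im → 0 ≤ D z ∧ D z ≤ Real.pi := by
    intro z hz
    constructor
    · by_contra hc
      push Not at hc
      obtain ⟨w, hw, hwe⟩ := upper_preconnected.intermediate_value (a := z) (b := z0) hz hz0 hcont
        (show max (D z) (-Real.pi / 2) ∈ Set.Icc (D z) (D z0) from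
          ⟨le_max_left _ _, max_le (by linarith) (by linarith)⟩)
      have h1 : D w < 0 := by rw [hwe]; exact max_lt hc (by linarith)
      have h2 : -Real.pi < D w := by
        rw [hwe]; exact lt_of_lt_of_le (by linarith) (le_max_right _ _)
      have := Real.sin_neg_of_neg_of_neg_pi_lt h1 h2
      exact absurd (h w hw) (not_le.2 this)
    · by_contra hc
      push Not at hc
      obtain ⟨w, hw, hwe⟩ := upper_preconnected.intermediate_value (a := z0) (b := z) hz0 hz hcont
        (show min (D z) (3 * Real.pi / 2) ∈ Set.Icc (D z0) (D z) from
          ⟨le_min (by linarith) (by linarith), min_le_left _ _⟩)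
      have h1 : Real.pi < D w := by rw [hwe]; exact lt_min hc (by linarith)
      have h2 : D w < 2 * Real.pi := by
        rw [hwe]; exact lt_of_le_of_lt (min_le_right _ _) (by linarith)
      have h3 := Real.sin_neg_of_neg_of_neg_pi_lt (x := D w - 2 * Real.pi) (by linarith)
        (by linarith)
      rw [Real.sin_sub_two_pi] at h3
      exact absurd (h w hw) (not_le.2 h3)
  have hev : ∀ᶠ e : ℝ in 𝓝[>] 0, D ((x : ℂ) + e * Complex.I) ∈ Set.Icc 0 Real.pi := by
    filter_upwards [self_mem_nhdsWithin] with e he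
    exact hrange _ (by simpa using he)
  have hm := isClosed_Icc.mem_of_tendsto (hlim x hxs hxt) hev
  rw [← mul_sub] at hm
  obtain ⟨m1, m2⟩ := hm
  have k1 : (0 : ℝ) ≤ (t.countP (fun a => x < a) : ℕ) - (s.countP (fun a => x < a) : ℕ) :=
    nonneg_of_mul_nonneg_right m1 hpi
  have k2 : ((t.countP (fun a => x < a) : ℕ) : ℝ) - (s.countP (fun a => x < a) : ℕ) ≤ 1 := by
    by_contra hc
    push Not at hc
    nlinarith
  constructor
  · have : ((s.countP (fun a => x < a) : ℕ) : ℝ) ≤ (t.countP (fun a => x < a) : ℕ) := by linarith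
    exact_mod_cast this
  · have : ((t.countP (fun a => x < a) : ℕ) : ℝ) ≤ (s.countP (fun a => x < a) : ℕ) + 1 := by
      linarith
    exact_mod_cast this

lemma count_of_lt (l : List ℝ) (hl : l.Pairwise (· ≥ ·)) (i : ℕ) (x : ℝ) (hi : i < l.length)
    (h : x < l.getD i 0) : i + 1 ≤ l.countP (fun a => x < a) := by
  induction l generalizing i with
  | nil => simp at hi
  | cons a l ih =>
    rw [List.pairwise_cons] at hl
    cases i with
    | zero =>
      rw [List.countP_cons]
      simp at h
      simp [h]
    | succ i =>
      simp only [List.length_cons, Nat.add_lt_add_iff_right] at hi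
      have h' : x < l.getD i 0 := by simpa using h
      have h1 := ih hl.2 i hi h'
      have h2 : x < a := by
        refine lt_of_lt_of_le h' (hl.1 _ ?_)
        rw [List.getD_eq_getElem _ _ hi]; exact List.getElem_mem hi
      rw [List.countP_cons]
      simp [h2]
      exact h1

lemma count_of_gt (l : List ℝ) (hl : l.Pairwise (· ≥ ·)) (i : ℕ) (x : ℝ) (hi : i < l.length)
    (h : l.getD i 0 < x) : l.countP (fun a => x < a) ≤ i := by
  induction l generalizing i with
  | nil => simp at hi
  | cons a l ih =>
    rw [List.pairwise_cons] at hl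
    cases i with
    | zero =>
      simp at h
      rw [Nat.le_zero, List.countP_eq_zero]
      intro b hb
      rcases List.mem_cons.1 hb with rfl | hb
      · simp [h.le]
      · have := hl.1 b hb
        simp; linarith
    | succ i =>
      simp only [List.length_cons, Nat.add_lt_add_iff_right] at hi
      have h' : l.getD i 0 < x := by simpa using h
      have h1 := ih hl.2 i hi h'
      rw [List.countP_cons]
      split_ifs <;> omega

lemma exists_between_avoid (s : Multiset ℝ) (a b : ℝ) (h : a < b) :
    ∃ x, a < x ∧ x < b ∧ x ∉ s := by
  obtain ⟨x, hx, hxn⟩ := (Set.Ioo_infinite h).exists_notMem_finset s.toFinset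
  exact ⟨x, hx.1, hx.2, by simpa using hxn⟩
/-- The board after deleting the first row and one column. -/
def tailBoard {n : ℕ} (L : Fin (n + 2) → ℕ) : Fin (n + 1) → ℕ := fun i => L i.succ - 1

def shiftUp (a v : ℕ) : ℕ := if v < a then v else v + 1

def shiftDown (a v : ℕ) : ℕ := if v < a then v else v - 1

lemma ascCount_succ {n : ℕ} (L : Fin (n + 2) → ℕ) (p : ∀ i, Fin (L i)) :
    ascCount L p = (if (p 0 : ℕ) < (p 1 : ℕ) then 1 else 0) +
      (Finset.univ.filter fun i : Fin (n + 1) =>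
        ∃ h : (i : ℕ) + 1 < n + 1,
          (p i.succ : ℕ) < (p (Fin.succ ⟨(i : ℕ) + 1, h⟩) : ℕ)).card := by
  unfold ascCount
  rw [Fin.card_filter_univ_succ']
  congr 1
  · refine if_congr ?_ rfl rfl
    constructor
    · rintro ⟨h, h'⟩; exact h'
    · intro h; exact ⟨by simp, h⟩
  · congr 1
    ext i
    simp only [Finset.mem_filter, Finset.mem_univ, true_and]
    constructor
    · rintro ⟨h, hlt⟩
      exact ⟨by simpa using h, hlt⟩
    · rintro ⟨h, hlt⟩
      exact ⟨by simpa using h, hlt⟩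

/-- Insert a first rook in column `a`. -/
def insertRook {n : ℕ} (L : Fin (n + 2) → ℕ) (a : ℕ) (ha : a < L 0) (q : ∀ i, Fin (tailBoard L i)) : ∀ i, Fin (L i) :=
  Fin.cases ⟨a, ha⟩ fun i => ⟨shiftUp a (q i), by
    have h := (q i).2
    unfold tailBoard at h
    unfold shiftUp
    split_ifs <;> omega⟩

/-- Delete the first rook. -/
def deleteRook {n : ℕ} (L : Fin (n + 2) → ℕ) (a : ℕ) (ha : a < L 0) (hmono : Monotone L)
    (hL : ∀ i : Fin (n + 2), (i : ℕ) + 1 ≤ L i) (p : ∀ i, Fin (L i)) : ∀ i, Fin (tailBoard L i) :=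
  fun i => ⟨shiftDown a (p i.succ), by
    have h := (p i.succ).2
    have h1 := hmono (Fin.zero_le i.succ)
    have h2 := hL i.succ
    simp only [Fin.val_succ] at h2
    unfold tailBoard shiftDown
    split_ifs <;> omega⟩

lemma shiftUp_inj {a v w : ℕ} (h : shiftUp a v = shiftUp a w) : v = w := by
  unfold shiftUp at h; split_ifs at h <;> omega

lemma shiftUp_lt {a v w : ℕ} : shiftUp a v < shiftUp a w ↔ v < w := by
  unfold shiftUp; split_ifs <;> omega

lemma shiftUp_ne {a v : ℕ} : shiftUp a v ≠ a := by
  unfold shiftUp; split_ifs <;> omega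

lemma shiftDown_up {a v : ℕ} : shiftDown a (shiftUp a v) = v := by
  unfold shiftUp shiftDown; split_ifs <;> omega

lemma shiftUp_down {a v : ℕ} (h : v ≠ a) : shiftUp a (shiftDown a v) = v := by
  unfold shiftUp shiftDown; split_ifs <;> omega

lemma ascCount_insert {n : ℕ} (L : Fin (n + 2) → ℕ) (a : ℕ) (ha : a < L 0) (q : ∀ i, Fin (tailBoard L i)) :
    ascCount L (insertRook L a ha q) =
      (if (q 0 : ℕ) < a then 0 else 1) + ascCount (tailBoard L) q := by
  rw [ascCount_succ]
  congr 1
  · have h0 : ((insertRook L a ha q 0 : Fin _) : ℕ) = a := rfl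
    have h1 : ((insertRook L a ha q 1 : Fin _) : ℕ) = shiftUp a (q 0) := rfl
    rw [h0, h1]
    unfold shiftUp
    split_ifs <;> omega
  · unfold ascCount
    congr 1
    ext i
    simp only [Finset.mem_filter, Finset.mem_univ, true_and]
    refine exists_congr fun h => ?_
    exact shiftUp_lt

lemma rook_step_sum {n : ℕ} (L : Fin (n + 2) → ℕ) (a : ℕ) (ha : a < L 0) (hmono : Monotone L)
    (hL : ∀ i : Fin (n + 2), (i : ℕ) + 1 ≤ L i) :
    rookEulerianAt L (a + 1) = ∑ q ∈ RookPlacements (tailBoard L),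
      (if (q 0 : ℕ) < a then 1 else X) * X ^ ascCount (tailBoard L) q := by
  unfold rookEulerianAt
  symm
  refine Finset.sum_bij' (fun q _ => insertRook L a ha q)
    (fun p _ => deleteRook L a ha hmono hL p) ?_ ?_ ?_ ?_ ?_
  · intro q hq
    simp only [RookPlacements, Finset.mem_filter, Finset.mem_univ, true_and] at hq ⊢
    refine ⟨?_, rfl⟩
    intro i j
    refine Fin.cases ?_ (fun i => ?_) i <;> refine Fin.cases ?_ (fun j => ?_) j
    · intro h; exact absurd rfl h
    · intro _; exact shiftUp_ne.symm
    · intro _; exact shiftUp_ne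
    · intro h h'
      exact hq i j (fun e => h (by rw [e])) (shiftUp_inj h')
  · intro p hp
    simp only [RookPlacements, Finset.mem_filter, Finset.mem_univ, true_and] at hp ⊢
    obtain ⟨hp, hp0⟩ := hp
    have hp0' : (p 0 : ℕ) = a := by omega
    intro i j hij h
    have hi : (p i.succ : ℕ) ≠ a := hp0' ▸ hp i.succ 0 (Fin.succ_ne_zero i)
    have hj : (p j.succ : ℕ) ≠ a := hp0' ▸ hp j.succ 0 (Fin.succ_ne_zero j)
    have h' : shiftDown a (p i.succ) = shiftDown a (p j.succ) := h
    apply hp i.succ j.succ (fun e => hij (Fin.succ_injective _ e))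
    rw [← shiftUp_down hi, ← shiftUp_down hj, h']
  · intro q hq
    funext i
    apply Fin.ext
    exact shiftDown_up
  · intro p hp
    simp only [RookPlacements, Finset.mem_filter, Finset.mem_univ, true_and] at hp
    obtain ⟨hp, hp0⟩ := hp
    have hp0' : (p 0 : ℕ) = a := by omega
    funext i
    apply Fin.ext
    refine Fin.cases ?_ (fun i => ?_) i
    · exact hp0'.symm
    · have hi : (p i.succ : ℕ) ≠ a := hp0' ▸ hp i.succ 0 (Fin.succ_ne_zero i)
      exact shiftUp_down hi
  · intro q hq
    rw [ascCount_insert, pow_add]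
    split_ifs <;> simp

lemma rook_step {n : ℕ} (L : Fin (n + 2) → ℕ) (a : ℕ) (ha : a < L 0) (hmono : Monotone L)
    (hL : ∀ i : Fin (n + 2), (i : ℕ) + 1 ≤ L i) :
    rookEulerianAt L (a + 1) = ∑ k ∈ Finset.range (tailBoard L 0),
      (if k < a then 1 else X) * rookEulerianAt (tailBoard L) (k + 1) := by
  rw [rook_step_sum L a ha hmono hL,
    ← Finset.sum_fiberwise_of_maps_to (t := Finset.range (tailBoard L 0))
      (g := fun q => (q 0 : ℕ)) (fun q _ => Finset.mem_range.2 (q 0).2)]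
  refine Finset.sum_congr rfl fun k _ => ?_
  unfold rookEulerianAt
  rw [Finset.mul_sum]
  have : (RookPlacements (tailBoard L)).filter (fun q => (q 0 : ℕ) = k) =
      (RookPlacements (tailBoard L)).filter (fun q => (q 0 : ℕ) + 1 = k + 1) := by
    simp
  rw [this]
  refine Finset.sum_congr rfl fun q hq => ?_
  rw [Finset.mem_filter] at hq
  rw [show (q 0 : ℕ) = k by omega]

lemma tailBoard_mono {n : ℕ} (L : Fin (n + 2) → ℕ) (hmono : Monotone L) : Monotone (tailBoard L) := fun i j h =>
  Nat.sub_le_sub_right (hmono (Fin.succ_le_succ_iff.2 h)) 1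

lemma tailBoard_le {n : ℕ} (L : Fin (n + 2) → ℕ)
    (hL : ∀ i : Fin (n + 2), (i : ℕ) + 1 ≤ L i) (i : Fin (n + 1)) : (i : ℕ) + 1 ≤ tailBoard L i := by
  have := hL i.succ
  simp only [Fin.val_succ] at this
  unfold tailBoard
  omega

lemma rook_zero (L : Fin 1 → ℕ) (a : ℕ) (ha : a < L 0) : rookEulerianAt L (a + 1) = 1 := by
  unfold rookEulerianAt
  have h : (RookPlacements L).filter (fun p => (p 0 : ℕ) + 1 = a + 1) =
      {fun i => ⟨a, by rw [Subsingleton.elim i 0]; exact ha⟩} := by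
    ext p
    simp only [RookPlacements, Finset.mem_filter, Finset.mem_univ, true_and,
      Finset.mem_singleton]
    constructor
    · rintro ⟨_, h⟩
      funext i
      apply Fin.ext
      rw [Subsingleton.elim i 0]
      simpa using h
    · rintro rfl
      exact ⟨fun i j h => absurd (Subsingleton.elim i j) h, rfl⟩
  rw [h, Finset.sum_singleton]
  have : ascCount L (fun i => ⟨a, by rw [Subsingleton.elim i 0]; exact ha⟩) = 0 := by
    unfold ascCount
    rw [Finset.card_eq_zero, Finset.filter_eq_empty_iff]
    rintro i _ ⟨h, _⟩
    omega
  rw [this, pow_zero]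

lemma rook_coeff_nonneg {n : ℕ} (L : Fin (n + 1) → ℕ) (j k : ℕ) :
    0 ≤ (rookEulerianAt L j).coeff k := by
  unfold rookEulerianAt
  rw [finset_sum_coeff]
  refine Finset.sum_nonneg fun p _ => ?_
  rw [coeff_X_pow]
  split_ifs <;> norm_num
lemma aeval_polar (f : ℝ[X]) (hf : f.Splits) (hlc : 0 < f.leadingCoeff) (z : ℂ) (hz : 0 < z.im) :
    ∃ r : ℝ, 0 < r ∧ aeval z f = (r : ℂ) * Complex.exp (argSum f.roots z * Complex.I) := by
  obtain ⟨r, hr, h⟩ := prod_polar f.roots z hz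
  refine ⟨f.leadingCoeff * r, mul_pos hlc hr, ?_⟩
  conv_lhs => rw [hf.eq_prod_roots]
  rw [map_mul, map_multiset_prod, Multiset.map_map]
  have : (f.roots.map ((fun p : ℝ[X] => aeval z p) ∘ fun a => X - C a)) =
      f.roots.map fun a : ℝ => z - (a : ℂ) := by
    apply Multiset.map_congr rfl
    intro a _
    simp
  rw [this, h]
  simp [mul_assoc]

lemma splits_of_upper (f : ℝ[X]) (h : ∀ z : ℂ, 0 < z.im → aeval z f ≠ 0) : f.Splits := by
  refine Splits.of_splits_map (algebraMap ℝ ℂ) (IsAlgClosed.splits _) ?_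
  intro a ha
  have ha' : aeval a f = 0 := by
    rw [← eval_map_algebraMap]; exact (mem_roots'.1 ha).2
  have him : a.im = 0 := by
    rcases lt_trichotomy a.im 0 with h1 | h1 | h1
    · exfalso
      apply h ((starRingEnd ℂ) a) (by simpa using h1)
      rw [aeval_conj, ha', map_zero]
    · exact h1
    · exact absurd ha' (h a h1)
  exact ⟨a.re, Complex.ext (by simp) (by simp [him])⟩

lemma descRoots_pairwise (f : ℝ[X]) : (descRoots f).Pairwise (· ≥ ·) := by
  unfold descRoots
  rw [List.pairwise_reverse]
  exact Multiset.pairwise_sort _ _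

lemma descRoots_coe (f : ℝ[X]) : (descRoots f : Multiset ℝ) = f.roots := by
  unfold descRoots
  rw [Multiset.coe_reverse, Multiset.sort_eq]

lemma interlaces_of (f g : ℝ[X]) (hf0 : 0 < f.leadingCoeff) (hg0 : 0 < g.leadingCoeff)
    (hfp : ∀ x : ℝ, 0 < x → 0 < f.eval x) (hgp : ∀ x : ℝ, 0 < x → 0 < g.eval x)
    (hfu : ∀ z : ℂ, 0 < z.im → aeval z f ≠ 0) (hgu : ∀ z : ℂ, 0 < z.im → aeval z g ≠ 0)
    (h : ∀ z : ℂ, 0 < z.im → 0 ≤ skw (aeval z f) (aeval z g)) : Interlaces f g := by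
  have hfs := splits_of_upper f hfu
  have hgs := splits_of_upper g hgu
  have hsin : ∀ z : ℂ, 0 < z.im → 0 ≤ Real.sin (argSum g.roots z - argSum f.roots z) := by
    intro z hz
    obtain ⟨r, hr, e⟩ := aeval_polar f hfs hf0 z hz
    obtain ⟨r', hr', e'⟩ := aeval_polar g hgs hg0 z hz
    have := h z hz
    rw [e, e', skw_polar] at this
    exact nonneg_of_mul_nonneg_right this (mul_pos hr hr')
  have hcount := count_ineq f.roots g.roots hsin
  have hcf := hfs.natDegree_eq_card_roots
  have hcg := hgs.natDegree_eq_card_roots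
  have lf : (descRoots f).length = f.natDegree := by
    rw [hcf, ← descRoots_coe f, Multiset.coe_card]
  have lg : (descRoots g).length = g.natDegree := by
    rw [hcg, ← descRoots_coe g, Multiset.coe_card]
  have cf : ∀ x : ℝ, f.roots.countP (fun a => x < a) = (descRoots f).countP (fun a => x < a) := by
    intro x; rw [← descRoots_coe f, Multiset.coe_countP]
  have cg : ∀ x : ℝ, g.roots.countP (fun a => x < a) = (descRoots g).countP (fun a => x < a) := by
    intro x; rw [← descRoots_coe g, Multiset.coe_countP]
  have nonpos : ∀ p : ℝ[X], (∀ x : ℝ, 0 < x → 0 < p.eval x) → ∀ x ∈ p.roots, x ≤ 0 := by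
    intro p hp x hx
    by_contra hc
    push Not at hc
    have h1 := hp x hc
    have h2 : p.eval x = 0 := (mem_roots'.1 hx).2
    linarith
  refine ⟨hf0, hg0, hcf.symm, hcg.symm, nonpos f hfp, nonpos g hgp, ?_, ?_, ?_⟩
  · obtain ⟨M, hM⟩ := (f.roots + g.roots).toFinset.bddBelow
    have hM' : ∀ a ∈ f.roots + g.roots, M - 1 < a := fun a ha => by
      have := hM (show a ∈ ((f.roots + g.roots).toFinset : Set ℝ) by
        rw [Finset.mem_coe, Multiset.mem_toFinset]; exact ha)
      linarith
    have h1 : ∀ a ∈ f.roots, M - 1 < a := fun a ha => hM' a (Multiset.mem_add.2 (Or.inl ha))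
    have h2 : ∀ a ∈ g.roots, M - 1 < a := fun a ha => hM' a (Multiset.mem_add.2 (Or.inr ha))
    have := hcount (M - 1) (fun hc => lt_irrefl _ (h1 _ hc)) (fun hc => lt_irrefl _ (h2 _ hc))
    rw [Multiset.countP_eq_card.2 h1, Multiset.countP_eq_card.2 h2] at this
    omega
  · intro i hi
    by_contra hc
    push Not at hc
    obtain ⟨x, hx1, hx2, hx3⟩ := exists_between_avoid (f.roots + g.roots) _ _ hc
    rw [Multiset.mem_add, not_or] at hx3
    have h0 := hcount x hx3.1 hx3.2
    have h1 := count_of_lt _ (descRoots_pairwise f) i x (by omega) hx2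
    rw [cf, cg] at h0
    by_cases hig : i < g.natDegree
    · have h2 := count_of_gt _ (descRoots_pairwise g) i x (by omega) hx1
      omega
    · have h2 : (descRoots g).countP (fun a => x < a) ≤ (descRoots g).length :=
        List.countP_le_length
      omega
  · intro i hi
    by_contra hc
    push Not at hc
    obtain ⟨x, hx1, hx2, hx3⟩ := exists_between_avoid (f.roots + g.roots) _ _ hc
    rw [Multiset.mem_add, not_or] at hx3
    have h0 := hcount x hx3.1 hx3.2
    have h1 := count_of_lt _ (descRoots_pairwise g) (i + 1) x (by omega) hx2
    rw [cf, cg] at h0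
    by_cases hif : i < f.natDegree
    · have h2 := count_of_gt _ (descRoots_pairwise f) i x (by omega) hx1
      omega
    · have h2 : (descRoots f).countP (fun a => x < a) ≤ (descRoots f).length :=
        List.countP_le_length
      omega

lemma rook_main (n : ℕ) : ∀ (L : Fin (n + 1) → ℕ), Monotone L →
    (∀ i : Fin (n + 1), (i : ℕ) + 1 ≤ L i) →
    (∀ a < L 0, ∀ x : ℝ, 0 < x → 0 < (rookEulerianAt L (a + 1)).eval x) ∧
    (∀ z : ℂ, 0 < z.im →
      (∀ a < L 0, aeval z (rookEulerianAt L (a + 1)) ≠ 0) ∧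
      NonnegPairs (L 0) z (fun a => aeval z (rookEulerianAt L (a + 1)))) := by
  induction n with
  | zero =>
    intro L _ _
    refine ⟨fun a ha x _ => by rw [rook_zero L a ha]; simp, fun z hz => ⟨fun a ha => by
      rw [rook_zero L a ha]; simp, fun a b hba ha => ?_⟩⟩
    simp only [rook_zero L a ha, rook_zero L b (hba.trans ha), map_one]
    simp [skw, hz.le]
  | succ n ih =>
    intro L hmono hL
    obtain ⟨ih1, ih2⟩ := ih (tailBoard L) (tailBoard_mono L hmono) (tailBoard_le L hL)
    have hm1 : 0 + 1 ≤ tailBoard L 0 := by simpa using tailBoard_le L hL 0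
    have hm : L 0 ≤ tailBoard L 0 + 1 := by
      have := hmono (Fin.zero_le (Fin.succ (0 : Fin (n + 1))))
      unfold tailBoard
      omega
    refine ⟨fun a ha x hx => ?_, fun z hz => ?_⟩
    · rw [rook_step L a ha hmono hL, eval_finset_sum]
      refine Finset.sum_pos (fun k hk => ?_) ⟨0, Finset.mem_range.2 (by omega)⟩
      have := ih1 k (Finset.mem_range.1 hk) x hx
      rw [eval_mul]
      split_ifs
      · simpa using this
      · simpa using mul_pos hx this
    · obtain ⟨ihn, ihp⟩ := ih2 z hz
      set f : ℕ → ℂ := fun k => aeval z (rookEulerianAt (tailBoard L) (k + 1)) with hf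
      set g : ℕ → ℂ := fun a => ∑ k ∈ Finset.range (tailBoard L 0),
        (if k < a then 1 else z) * f k with hg
      have hga : ∀ a < L 0, aeval z (rookEulerianAt L (a + 1)) = g a := by
        intro a ha
        rw [rook_step L a ha hmono hL, map_sum]
        refine Finset.sum_congr rfl fun k _ => ?_
        rw [map_mul]
        split_ifs <;> simp [hf]
      have key := fun a b hba ham => pairs_step (tailBoard L 0) z hz f ihp a b hba ham g
        (fun _ => rfl)
      have strict : ∀ b, b < tailBoard L 0 → 0 < skw (g (b + 1)) (g b) := by
        intro b hb
        refine lt_of_lt_of_le ?_ (key (b + 1) b (by omega) (by omega)).1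
        rw [Nat.Ico_succ_singleton, Finset.sum_singleton]
        exact mul_pos hz (Complex.normSq_pos.2 (ihn b hb))
      refine ⟨fun a ha h0 => ?_, fun a b hba ha => ?_⟩
      · rw [hga a ha] at h0
        rcases Nat.lt_or_ge a (tailBoard L 0) with h1 | h1
        · have := strict a h1
          rw [h0] at this
          simp [skw] at this
        · have := strict (a - 1) (by omega)
          rw [show a - 1 + 1 = a by omega, h0] at this
          simp [skw] at this
      · simp only [hga a ha, hga b (hba.trans ha)]
        have := key a b hba (by omega)
        exact ⟨le_trans (mul_nonneg hz.le (Complex.normSq_nonneg _)) this.1, this.2⟩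

/-- For a Ferrers board `λ = (λ_1 ≤ … ≤ λ_n)` of positive integers with `λ_i ≥ i` and
`n > 1` rows, the sequence `(Q^λ_{λ_1}, Q^λ_{λ_1 - 1}, …, Q^λ_2, Q^λ_1)` is interlacing:
`Q^λ_i ⪯ Q^λ_j` whenever `λ_1 ≥ i > j ≥ 1`. -/
theorem rookEulerianAt_interlacing (n : ℕ) (hn : 0 < n) (L : Fin (n + 1) → ℕ)
    (hmono : Monotone L) (hL : ∀ i : Fin (n + 1), (i : ℕ) + 1 ≤ L i)
    (i j : ℕ) (hj : 1 ≤ j) (hji : j < i) (hi : i ≤ L 0) :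
    Interlaces (rookEulerianAt L i) (rookEulerianAt L j) := by
  obtain ⟨a, rfl⟩ : ∃ a, i = a + 1 := ⟨i - 1, by omega⟩
  obtain ⟨b, rfl⟩ : ∃ b, j = b + 1 := ⟨j - 1, by omega⟩
  obtain ⟨h1, h2⟩ := rook_main n L hmono hL
  have ha : a < L 0 := by omega
  have hb : b < L 0 := by omega
  have lc : ∀ c < L 0, 0 < (rookEulerianAt L (c + 1)).leadingCoeff := by
    intro c hc
    refine lt_of_le_of_ne (rook_coeff_nonneg L _ _) ?_
    intro h0
    have h3 := h1 c hc 1 one_pos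
    rw [leadingCoeff_eq_zero.1 h0.symm] at h3
    simp at h3
  exact interlaces_of _ _ (lc a ha) (lc b hb) (h1 a ha) (h1 b hb)
    (fun z hz => (h2 z hz).1 a ha) (fun z hz => (h2 z hz).1 b hb)
    (fun z hz => ((h2 z hz).2 a b (by omega) ha).1)
end

section
/- Let λ = (λ_1 ≤ … ≤ λ_n) be a weakly increasing sequence of positive integers with λ_i ≥ i for all i. Then the rook-Eulerian polynomial Q^{λ}(t) is real-rooted. -/
open Polynomial

/-- The rook-Eulerian polynomial `Q^λ(t) = Σ_σ t^{asc(σ)}`, summed over all row-complete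
rook placements `σ` on `λ`. -/
noncomputable def rookEulerian {n : ℕ} (L : Fin n → ℕ) : Polynomial ℝ :=
  ∑ p ∈ RookPlacements L, X ^ ascCount L p

/-- A real polynomial is real-rooted if it is nonzero and all of its complex roots are real. -/
def RealRooted (p : Polynomial ℝ) : Prop :=
  p ≠ 0 ∧ ∀ z : ℂ, Polynomial.aeval z p = 0 → z.im = 0

/-- The pairing `Im (u * conj v)`. -/
def pairIm (u v : ℂ) : ℝ := u.im * v.re - u.re * v.im

theorem pairIm_sum_left (s : Finset ℕ) (a : ℕ → ℂ) (v : ℂ) :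
    pairIm (∑ i ∈ s, a i) v = ∑ i ∈ s, pairIm (a i) v := by
  simp only [pairIm, Complex.re_sum, Complex.im_sum, Finset.sum_mul, Finset.sum_sub_distrib]

theorem pairIm_sum_right (s : Finset ℕ) (a : ℕ → ℂ) (v : ℂ) :
    pairIm v (∑ i ∈ s, a i) = ∑ i ∈ s, pairIm v (a i) := by
  simp only [pairIm, Complex.re_sum, Complex.im_sum, Finset.mul_sum, Finset.sum_sub_distrib]

/-- Pointwise form of an interlacing sequence of polynomials, at a point `z`. -/
structure GoodSeq (z : ℂ) (a : ℕ → ℂ) : Prop where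
  ne : ∀ i, a i ≠ 0
  p1 : ∀ i j, i ≤ j → 0 ≤ pairIm (a i) (a j)
  p2 : ∀ i j, i ≤ j → 0 ≤ pairIm (z * a j) (a i)

theorem pairIm_mul_self (z u : ℂ) : pairIm (z * u) u = z.im * (u.re ^ 2 + u.im ^ 2) := by
  simp only [pairIm, Complex.mul_re, Complex.mul_im]; ring

theorem sq_pos_of_ne {u : ℂ} (hu : u ≠ 0) : 0 < u.re ^ 2 + u.im ^ 2 := by
  have := Complex.normSq_pos.2 hu
  rw [Complex.normSq_apply] at this
  nlinarith

theorem GoodSeq.sum_ne {z : ℂ} {a : ℕ → ℂ} (hz : 0 < z.im) (h : GoodSeq z a)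
    (s : Finset ℕ) (hs : s.Nonempty) : ∑ j ∈ s, a j ≠ 0 := by
  intro h0
  have h1 : pairIm (z * ∑ j ∈ s, a j) (a (s.min' hs)) = 0 := by
    rw [h0]; simp [pairIm]
  rw [Finset.mul_sum, pairIm_sum_left] at h1
  have h2 : 0 < ∑ i ∈ s, pairIm (z * a i) (a (s.min' hs)) := by
    apply Finset.sum_pos'
    · intro i hi
      exact h.p2 _ _ (Finset.min'_le _ _ hi)
    · refine ⟨s.min' hs, Finset.min'_mem _ _, ?_⟩
      rw [pairIm_mul_self]
      exact mul_pos hz (sq_pos_of_ne (h.ne _))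
  linarith

theorem GoodSeq.pair1 {z : ℂ} {a : ℕ → ℂ} (h : GoodSeq z a)
    (s t : Finset ℕ) (hst : ∀ i ∈ s, ∀ j ∈ t, i ≤ j) :
    0 ≤ pairIm (∑ j ∈ s, a j) (∑ j ∈ t, a j) := by
  rw [pairIm_sum_left]
  refine Finset.sum_nonneg fun i hi => ?_
  rw [pairIm_sum_right]
  exact Finset.sum_nonneg fun j hj => h.p1 _ _ (hst i hi j hj)

theorem GoodSeq.pair2 {z : ℂ} {a : ℕ → ℂ} (h : GoodSeq z a)
    (s t : Finset ℕ) (hst : ∀ i ∈ s, ∀ j ∈ t, i ≤ j) :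
    0 ≤ pairIm (z * ∑ j ∈ t, a j) (∑ j ∈ s, a j) := by
  rw [Finset.mul_sum, pairIm_sum_left]
  refine Finset.sum_nonneg fun i hi => ?_
  rw [pairIm_sum_right]
  exact Finset.sum_nonneg fun j hj => h.p2 _ _ (hst j hj i hi)

/-- The transfer operator. -/
noncomputable def stepSeq (z : ℂ) (M : ℕ) (a : ℕ → ℂ) (r : ℕ) : ℂ :=
  ∑ j ∈ Finset.range M, (if r ≤ j then z else 1) * a j

theorem stepSeq_eq (z : ℂ) (M : ℕ) (a : ℕ → ℂ) (r : ℕ) :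
    stepSeq z M a r = ∑ j ∈ (Finset.range M).filter (fun j => j < r), a j
      + z * ∑ j ∈ (Finset.range M).filter (fun j => r ≤ j), a j := by
  rw [stepSeq, Finset.mul_sum, Finset.sum_filter, Finset.sum_filter, ← Finset.sum_add_distrib]
  refine Finset.sum_congr rfl fun j _ => ?_
  by_cases h : r ≤ j
  · simp [h, not_lt.2 h]
  · simp [h, not_le.1 h]

theorem alg1 (z A B C : ℂ) (hz : 0 < z.im) (h1 : 0 ≤ pairIm A B) (h2 : 0 ≤ pairIm B C)
    (h3 : 0 ≤ pairIm (z * B) A) (h4 : 0 ≤ pairIm (z * C) B) :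
    0 ≤ pairIm (A + z * (B + C)) (A + B + z * C) := by
  have e : pairIm (A + z * (B + C)) (A + B + z * C) = pairIm A B + pairIm (z * B) A
      + z.im * (B.re ^ 2 + B.im ^ 2) + (z.re ^ 2 + z.im ^ 2) * pairIm B C + pairIm (z * C) B := by
    simp only [pairIm, Complex.mul_re, Complex.mul_im, Complex.add_re, Complex.add_im]; ring
  rw [e]; positivity

theorem alg2 (z A B C : ℂ) (hz : 0 < z.im) (h1 : 0 ≤ pairIm A B) (h2 : 0 ≤ pairIm B C)
    (h3 : 0 ≤ pairIm (z * B) A) (h4 : 0 ≤ pairIm (z * C) B) :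
    0 ≤ pairIm (z * (A + B + z * C)) (A + z * (B + C)) := by
  have e : pairIm (z * (A + B + z * C)) (A + z * (B + C)) =
      z.im * ((A + z * C).re ^ 2 + (A + z * C).im ^ 2)
      + (z.re ^ 2 + z.im ^ 2) * (pairIm A B + pairIm (z * C) B)
      + (pairIm (z * B) A + (z.re ^ 2 + z.im ^ 2) * pairIm B C) := by
    simp only [pairIm, Complex.mul_re, Complex.mul_im, Complex.add_re, Complex.add_im]; ring
  rw [e]; positivity

theorem GoodSeq.step {z : ℂ} {a : ℕ → ℂ} (hz : 0 < z.im) (h : GoodSeq z a) (M : ℕ)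
    (hM : 0 < M) : GoodSeq z (stepSeq z M a) := by
  have key : ∀ r s, r ≤ s → ∃ A B C : ℂ, stepSeq z M a r = A + z * (B + C) ∧
      stepSeq z M a s = A + B + z * C ∧ 0 ≤ pairIm A B ∧ 0 ≤ pairIm B C ∧
      0 ≤ pairIm (z * B) A ∧ 0 ≤ pairIm (z * C) B := by
    intro r s hrs
    refine ⟨∑ j ∈ (Finset.range M).filter (fun j => j < r), a j,
      ∑ j ∈ (Finset.range M).filter (fun j => r ≤ j ∧ j < s), a j,
      ∑ j ∈ (Finset.range M).filter (fun j => s ≤ j), a j, ?_, ?_, ?_, ?_, ?_, ?_⟩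
    · rw [stepSeq_eq]
      congr 2
      simp only [Finset.sum_filter, ← Finset.sum_add_distrib]
      refine Finset.sum_congr rfl fun j _ => ?_
      split_ifs <;> first | omega | simp
    · rw [stepSeq_eq]
      congr 1
      simp only [Finset.sum_filter, ← Finset.sum_add_distrib]
      refine Finset.sum_congr rfl fun j _ => ?_
      split_ifs <;> first | omega | simp
    · apply h.pair1
      intro i hi j hj
      simp only [Finset.mem_filter] at hi hj; omega
    · apply h.pair1
      intro i hi j hj
      simp only [Finset.mem_filter] at hi hj; omega
    · apply h.pair2
      intro i hi j hj
      simp only [Finset.mem_filter] at hi hj; omega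
    · apply h.pair2
      intro i hi j hj
      simp only [Finset.mem_filter] at hi hj; omega
  refine ⟨?_, ?_, ?_⟩
  · intro r h0
    rw [stepSeq_eq] at h0
    set s := (Finset.range M).filter (fun j => j < r) with hs
    set t := (Finset.range M).filter (fun j => r ≤ j) with ht
    have h1 := h.pair1 s t (by
      intro i hi j hj
      simp only [hs, ht, Finset.mem_filter] at hi hj; omega)
    have hA : ∑ j ∈ s, a j = - (z * ∑ j ∈ t, a j) := eq_neg_of_add_eq_zero_left h0
    by_cases hC : ∑ j ∈ t, a j = 0
    · have hte : ¬ t.Nonempty := fun hn => h.sum_ne hz t hn hC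
      have hse : ¬ s.Nonempty := fun hn => h.sum_ne hz s hn (by rw [hA, hC]; simp)
      rcases lt_or_ge 0 r with hr | hr
      · exact hse ⟨0, by simp [hs, hM, hr]⟩
      · exact hte ⟨0, by simp [ht, hM]; omega⟩
    · rw [hA] at h1
      have e : pairIm (-(z * ∑ j ∈ t, a j)) (∑ j ∈ t, a j)
          = - pairIm (z * ∑ j ∈ t, a j) (∑ j ∈ t, a j) := by
        simp only [pairIm, Complex.neg_re, Complex.neg_im]; ring
      rw [e, pairIm_mul_self] at h1
      have := mul_pos hz (sq_pos_of_ne hC)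
      linarith
  · intro r s hrs
    obtain ⟨A, B, C, e1, e2, h1, h2, h3, h4⟩ := key r s hrs
    rw [e1, e2]
    exact alg1 z A B C hz h1 h2 h3 h4
  · intro r s hrs
    obtain ⟨A, B, C, e1, e2, h1, h2, h3, h4⟩ := key r s hrs
    rw [e1, e2]
    exact alg2 z A B C hz h1 h2 h3 h4

theorem sum_rank (S : Finset ℕ) (f : ℕ → ℂ) :
    ∑ x ∈ S, f (S.filter (fun y => y < x)).card = ∑ j ∈ Finset.range S.card, f j := by
  induction S using Finset.induction_on_max with
  | empty => simp
  | insert m S hm ih =>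
    have hmS : m ∉ S := fun h => lt_irrefl _ (hm m h)
    rw [Finset.sum_insert hmS, Finset.card_insert_of_notMem hmS, Finset.sum_range_succ, ← ih,
      add_comm]
    congr 1
    · refine Finset.sum_congr rfl fun x hx => ?_
      rw [Finset.filter_insert, if_neg (not_lt.2 (hm x hx).le)]
    · rw [Finset.filter_insert, if_neg (lt_irrefl m), Finset.filter_true_of_mem hm]

/-- ascents of the word `c w_0 w_1 …` -/
def ascW (c : ℕ) {n : ℕ} (w : Fin n → ℕ) : ℕ :=
  ∑ i : Fin n, if (Fin.cons c w : Fin (n + 1) → ℕ) i.castSucc < w i then 1 else 0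

theorem ascW_cons (c x : ℕ) {n : ℕ} (w : Fin n → ℕ) :
    ascW c (Fin.cons x w : Fin (n + 1) → ℕ) = (if c < x then 1 else 0) + ascW x w := by
  simp only [ascW]
  rw [Fin.sum_univ_succ]
  simp only [← Fin.succ_castSucc, Fin.castSucc_zero, Fin.cons_zero, Fin.cons_succ]

/-- Good words. -/
def okW (U : Finset ℕ) {n : ℕ} (w : Fin n → ℕ) : Prop :=
  Function.Injective w ∧ ∀ i, w i ∉ U

theorem okW_cons (U : Finset ℕ) (x : ℕ) {n : ℕ} (w : Fin n → ℕ) :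
    okW U (Fin.cons x w : Fin (n + 1) → ℕ) ↔ x ∉ U ∧ okW (insert x U) w := by
  simp only [okW, Fin.cons_injective_iff, Fin.forall_fin_succ, Fin.cons_zero, Fin.cons_succ,
    Finset.mem_insert, not_or, forall_and, Set.mem_range, not_exists]
  tauto

open Classical in
/-- Weighted sum over completions. -/
noncomputable def rookCompl (z : ℂ) {n : ℕ} (L : Fin n → ℕ) (U : Finset ℕ) (c : ℕ) : ℂ :=
  ∑ p : (∀ i : Fin n, Fin (L i)),
    if okW U (fun i => (p i : ℕ)) then z ^ ascW c (fun i => (p i : ℕ)) else 0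

theorem compl_succ (z : ℂ) {n : ℕ} (L : Fin (n + 1) → ℕ) (U : Finset ℕ) (c : ℕ) :
    rookCompl z L U c = ∑ x ∈ Finset.range (L 0) \ U,
      (if c < x then z else 1) * rookCompl z (fun i => L i.succ) (insert x U) x := by
  classical
  have e : ∀ (x : Fin (L 0)) (q : ∀ i : Fin n, Fin (L i.succ)),
      (fun i => ((Fin.cons x q : ∀ i : Fin (n + 1), Fin (L i)) i : ℕ))
        = (Fin.cons (x : ℕ) (fun i => (q i : ℕ)) : Fin (n + 1) → ℕ) := by
    intro x q
    funext i
    refine Fin.cases ?_ (fun i => ?_) i <;> simp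
  rw [rookCompl, ← (Fin.consEquiv (fun i => Fin (L i))).sum_comp, Fintype.sum_prod_type,
    Finset.sdiff_eq_filter, Finset.sum_filter, Finset.sum_range]
  refine Finset.sum_congr rfl fun x _ => ?_
  have e2 : ∀ q : (∀ i : Fin n, Fin (L i.succ)),
      (fun i => ((Fin.consEquiv (fun i => Fin (L i)) (x, q)) i : ℕ))
        = (Fin.cons (x : ℕ) (fun i => (q i : ℕ)) : Fin (n + 1) → ℕ) := e x
  simp only [e2, okW_cons, ascW_cons]
  by_cases hx : (x : ℕ) ∈ U
  · simp [hx]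
  · simp only [hx, not_false_eq_true, true_and, if_true, rookCompl, Finset.mul_sum]
    refine Finset.sum_congr rfl fun q _ => ?_
    split_ifs <;> simp [pow_add]

theorem main_good (z : ℂ) (hz : 0 < z.im) (n : ℕ) : ∀ (L : Fin n → ℕ) (k : ℕ), Monotone L →
    (∀ i : Fin n, (i : ℕ) + 1 + k ≤ L i) → ∃ G : ℕ → ℂ, GoodSeq z G ∧
      ∀ (U : Finset ℕ) (c : ℕ), U.card = k → (∀ i, U ⊆ Finset.range (L i)) →
        (∀ i, c < L i → c ∈ U) → rookCompl z L U c = G (Finset.range c \ U).card := by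
  induction n with
  | zero =>
    intro L k _ _
    refine ⟨fun _ => 1, ⟨by simp, by simp [pairIm], by simp [pairIm, hz.le]⟩, ?_⟩
    intro U c _ _ _
    simp [rookCompl, okW, ascW, Function.injective_of_subsingleton]
  | succ n ih =>
    intro L k hmono hL
    obtain ⟨G, hG, hH⟩ := ih (fun i => L i.succ) (k + 1)
      (fun i j hij => hmono (Fin.succ_le_succ_iff.2 hij))
      (fun i => by have := hL i.succ; simp only [Fin.val_succ] at this; omega)
    have hL0 := hL 0
    simp only [Fin.val_zero] at hL0
    refine ⟨stepSeq z (L 0 - k) G, hG.step hz _ (by omega), ?_⟩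
    intro U c hU hsub hc
    rw [compl_succ]
    have hcard : (Finset.range (L 0) \ U).card = L 0 - k := by
      rw [Finset.card_sdiff_of_subset (hsub 0), Finset.card_range, hU]
    rw [stepSeq, ← hcard, ← sum_rank (Finset.range (L 0) \ U)
      (fun j => (if (Finset.range c \ U).card ≤ j then z else 1) * G j)]
    refine Finset.sum_congr rfl fun x hx => ?_
    rw [Finset.mem_sdiff, Finset.mem_range] at hx
    have hrank : (Finset.range (L 0) \ U).filter (fun y => y < x) = Finset.range x \ U := by
      ext y
      simp only [Finset.mem_filter, Finset.mem_sdiff, Finset.mem_range]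
      have := hx.1
      constructor
      · rintro ⟨⟨_, h2⟩, h3⟩; exact ⟨h3, h2⟩
      · rintro ⟨h1, h2⟩; exact ⟨⟨by omega, h2⟩, h1⟩
    rw [hrank, hH (insert x U) x]
    · have h1 : Finset.range x \ insert x U = Finset.range x \ U := by
        ext y
        simp only [Finset.mem_sdiff, Finset.mem_range, Finset.mem_insert, not_or]
        constructor
        · rintro ⟨h1, _, h3⟩; exact ⟨h1, h3⟩
        · rintro ⟨h1, h3⟩; exact ⟨h1, by omega, h3⟩
      rw [h1]
      congr 1
      have hiff : c < x ↔ (Finset.range c \ U).card ≤ (Finset.range x \ U).card := by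
        constructor
        · intro h
          exact Finset.card_le_card
            (Finset.sdiff_subset_sdiff (Finset.range_mono h.le) (Finset.Subset.refl _))
        · intro h
          by_contra hcx
          have hne : x ≠ c := by
            rintro rfl
            exact hx.2 (hc 0 hx.1)
          have hlt : x < c := by omega
          have : (Finset.range x \ U).card < (Finset.range c \ U).card := by
            apply Finset.card_lt_card
            rw [Finset.ssubset_iff_of_subset
              (Finset.sdiff_subset_sdiff (Finset.range_mono hlt.le) (Finset.Subset.refl _))]
            exact ⟨x, by simp [hlt, hx.2], by simp⟩
          omega
      simp only [hiff]
    · rw [Finset.card_insert_of_notMem hx.2, hU]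
    · intro i
      apply Finset.insert_subset
      · exact Finset.mem_range.2 (lt_of_lt_of_le hx.1 (hmono (Fin.zero_le _)))
      · exact hsub _
    · intro i _
      exact Finset.mem_insert_self _ _

theorem ascCount_eq {n : ℕ} (L : Fin n → ℕ) (p : ∀ i : Fin n, Fin (L i)) (c : ℕ)
    (hc : ∀ i, L i ≤ c) : ascCount L p = ascW c (fun i => (p i : ℕ)) := by
  cases n with
  | zero => simp [ascCount, ascW]
  | succ n =>
    rw [ascCount, ascW, Finset.card_filter, Fin.sum_univ_castSucc, Fin.sum_univ_succ]
    have h0 : ¬ c < (p 0 : ℕ) := by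
      have := (p 0).2
      have := hc 0
      omega
    simp only [Fin.castSucc_zero, Fin.cons_zero, h0, if_false, zero_add, Fin.val_last,
      lt_irrefl, IsEmpty.exists_iff, add_zero]
    refine Finset.sum_congr rfl fun i _ => ?_
    have : (Fin.cons c (fun i => (p i : ℕ)) : Fin (n + 2) → ℕ) i.succ.castSucc
        = (p i.castSucc : ℕ) := by
      rw [← Fin.succ_castSucc, Fin.cons_succ]
    rw [this]
    congr 1
    apply propext
    constructor
    · rintro ⟨h, h'⟩; exact h'
    · intro h'; exact ⟨by simp, h'⟩

theorem aeval_eq_compl (z : ℂ) {n : ℕ} (L : Fin n → ℕ) (c : ℕ) (hc : ∀ i, L i ≤ c) :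
    Polynomial.aeval z (rookEulerian L) = rookCompl z L ∅ c := by
  classical
  rw [rookEulerian, map_sum, rookCompl, RookPlacements, Finset.sum_filter]
  refine Finset.sum_congr rfl fun p _ => ?_
  have : (∀ i j : Fin n, i ≠ j → (p i : ℕ) ≠ (p j : ℕ)) ↔ okW ∅ (fun i => (p i : ℕ)) := by
    simp only [okW, Finset.notMem_empty, not_false_eq_true, implies_true, and_true]
    constructor
    · intro h i j hij
      by_contra hne
      exact h i j hne hij
    · intro h i j hne hij
      exact hne (h hij)
  simp only [this, map_pow, Polynomial.aeval_X, ascCount_eq L p c hc]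

theorem aeval_ne_zero (n : ℕ) (L : Fin n → ℕ) (hmono : Monotone L)
    (hL : ∀ i : Fin n, (i : ℕ) + 1 ≤ L i) (z : ℂ) (hz : 0 < z.im) :
    Polynomial.aeval z (rookEulerian L) ≠ 0 := by
  obtain ⟨G, hG, hH⟩ := main_good z hz n L 0 hmono (by simpa using hL)
  have hc : ∀ i, L i ≤ ∑ i, L i := fun i =>
    Finset.single_le_sum (f := L) (fun _ _ => Nat.zero_le _) (Finset.mem_univ i)
  rw [aeval_eq_compl z L (∑ i, L i) hc, hH ∅ _ rfl (by simp)
    (fun i hi => absurd hi (not_lt.2 (hc i)))]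
  exact hG.ne _

/-- For every Ferrers board `λ = (λ_1 ≤ … ≤ λ_n)` of positive integers with `λ_i ≥ i`,
the rook-Eulerian polynomial `Q^λ(t)` is real-rooted. -/
theorem rookEulerian_realRooted (n : ℕ) (L : Fin n → ℕ) (hmono : Monotone L)
    (hL : ∀ i : Fin n, (i : ℕ) + 1 ≤ L i) :
    RealRooted (rookEulerian L) := by
  have key := aeval_ne_zero n L hmono hL
  refine ⟨?_, ?_⟩
  · intro h
    exact key Complex.I (by simp) (by rw [h]; simp)
  · intro z h0
    rcases lt_trichotomy z.im 0 with h | h | h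
    · exfalso
      refine key ((starRingEnd ℂ) z) (by simpa using h) ?_
      rw [Polynomial.aeval_conj, h0, map_zero]
    · exact h
    · exact absurd h0 (key z h)
end

section
/- Let λ = (λ_1 ≤ … ≤ λ_n) be a weakly increasing sequence of positive integers with λ_i ≥ i for all i, and define the multivariate rook-Eulerian polynomial Q^{λ}(x_1, …, x_{n-1}) = Σ_σ Π_{i ∈ Asc(σ)} x_i, summed over all row-complete rook placements σ on λ, where Asc(σ) = {i ∈ [n-1] : σ_i < σ_{i+1}}. Then Q^{λ}(x) is same-phase stable: for every μ = (μ_1, …, μ_{n-1}) with all μ_i > 0, the univariate polynomial t ↦ Q^{λ}(tμ_1, …, tμ_{n-1}) is real-rooted. -/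
open Polynomial

/-- The ascent set of a rook placement: the indices `i ∈ [n-1]` with `σ_i < σ_{i+1}`. -/
def ascSet {n : ℕ} (L : Fin n → ℕ) (p : ∀ i : Fin n, Fin (L i)) : Finset (Fin (n - 1)) :=
  Finset.univ.filter fun i : Fin (n - 1) =>
    (p ⟨(i : ℕ), by have := i.isLt; omega⟩ : ℕ) < (p ⟨(i : ℕ) + 1, by have := i.isLt; omega⟩ : ℕ)

/-- The multivariate rook-Eulerian polynomial
`Q^λ(x_1, …, x_{n-1}) = Σ_σ Π_{i ∈ Asc(σ)} x_i`, summed over all row-complete rook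
placements `σ` on `λ`. -/
noncomputable def rookEulerianMv {n : ℕ} (L : Fin n → ℕ) : MvPolynomial (Fin (n - 1)) ℝ :=
  ∑ p ∈ RookPlacements L, ∏ i ∈ ascSet L p, MvPolynomial.X i

/-- The symplectic form `Im (b * conj a)` on `ℂ`. -/
def om (a b : ℂ) : ℝ := a.re * b.im - a.im * b.re

lemma om_sum_left {ι : Type*} (S : Finset ι) (f : ι → ℂ) (b : ℂ) :
    om (∑ i ∈ S, f i) b = ∑ i ∈ S, om (f i) b := by
  simp only [om, Complex.re_sum, Complex.im_sum, Finset.sum_mul, Finset.sum_sub_distrib]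

lemma om_sum_right {ι : Type*} (S : Finset ι) (f : ι → ℂ) (a : ℂ) :
    om a (∑ i ∈ S, f i) = ∑ i ∈ S, om a (f i) := by
  simp only [om, Complex.re_sum, Complex.im_sum, Finset.mul_sum, Finset.sum_sub_distrib]

/-- The phase-interlacing condition at the point `z`. -/
def PhaseInt (z : ℂ) (F : ℕ → ℂ) : Prop :=
  ∀ i j, i ≤ j → 0 ≤ om (F i) (F j) ∧ 0 ≤ om (F j) (z * F i)

lemma PhaseInt.scale {z : ℂ} {F : ℕ → ℂ} (r : ℝ) (hr : 0 ≤ r) (h : PhaseInt z F) :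
    PhaseInt (r * z) F := by
  intro i j hij
  refine ⟨(h i j hij).1, ?_⟩
  have e : om (F j) (r * z * F i) = r * om (F j) (z * F i) := by
    simp [om]; ring
  rw [e]
  exact mul_nonneg hr (h i j hij).2

lemma PhaseInt.sums {z : ℂ} {F : ℕ → ℂ} (h : PhaseInt z F) (S T : Finset ℕ)
    (hST : ∀ s ∈ S, ∀ t ∈ T, s ≤ t) :
    0 ≤ om (∑ s ∈ S, F s) (∑ t ∈ T, F t) ∧ 0 ≤ om (∑ t ∈ T, F t) (z * ∑ s ∈ S, F s) := by
  constructor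
  · rw [om_sum_left]
    refine Finset.sum_nonneg fun s hs => ?_
    rw [om_sum_right]
    exact Finset.sum_nonneg fun t ht => (h s t (hST s hs t ht)).1
  · rw [om_sum_left]
    refine Finset.sum_nonneg fun t ht => ?_
    rw [Finset.mul_sum, om_sum_right]
    exact Finset.sum_nonneg fun s hs => (h s t (hST s hs t ht)).2

/-- One step of the recursion. -/
noncomputable def stepG (z : ℂ) (M : ℕ) (F : ℕ → ℂ) (j : ℕ) : ℂ :=
  ∑ k ∈ Finset.range M, (if k ≤ j then z else 1) * F k

lemma stepG_eq (z : ℂ) (M : ℕ) (F : ℕ → ℂ) (i j : ℕ) (hij : i ≤ j) :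
    stepG z M F i = z * (∑ k ∈ (Finset.range M).filter (fun k => k ≤ i), F k)
        + (∑ k ∈ (Finset.range M).filter (fun k => i < k ∧ k ≤ j), F k)
        + (∑ k ∈ (Finset.range M).filter (fun k => j < k), F k) ∧
    stepG z M F j = z * (∑ k ∈ (Finset.range M).filter (fun k => k ≤ i), F k)
        + z * (∑ k ∈ (Finset.range M).filter (fun k => i < k ∧ k ≤ j), F k)
        + (∑ k ∈ (Finset.range M).filter (fun k => j < k), F k) := by
  constructor <;>
  · rw [stepG]
    simp only [Finset.mul_sum, Finset.sum_filter]
    rw [← Finset.sum_add_distrib, ← Finset.sum_add_distrib]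
    refine Finset.sum_congr rfl fun k _ => ?_
    by_cases h1 : k ≤ i
    · have : k ≤ j := h1.trans hij
      simp [h1, this, not_lt.2 h1, not_lt.2 this]
    · by_cases h2 : k ≤ j
      · simp [h1, h2, not_le.1 h1, not_lt.2 h2]
      · simp [h1, h2, not_le.1 h2]

lemma PhaseInt.step {z : ℂ} (hz : 0 < z.im) {F : ℕ → ℂ} (h : PhaseInt z F) (M : ℕ) :
    PhaseInt z (stepG z M F) := by
  intro i j hij
  obtain ⟨e1, e2⟩ := stepG_eq z M F i j hij
  have hAB := h.sums ((Finset.range M).filter (fun k => k ≤ i))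
    ((Finset.range M).filter (fun k => i < k ∧ k ≤ j)) (by
      intro s hs t ht; simp at hs ht; omega)
  have hAC := h.sums ((Finset.range M).filter (fun k => k ≤ i))
    ((Finset.range M).filter (fun k => j < k)) (by
      intro s hs t ht; simp at hs ht; omega)
  have hBC := h.sums ((Finset.range M).filter (fun k => i < k ∧ k ≤ j))
    ((Finset.range M).filter (fun k => j < k)) (by
      intro s hs t ht; simp at hs ht; omega)
  rw [e1, e2]
  clear e1 e2
  generalize (∑ k ∈ (Finset.range M).filter (fun k => k ≤ i), F k) = A at *
  generalize (∑ k ∈ (Finset.range M).filter (fun k => i < k ∧ k ≤ j), F k) = B at *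
  generalize (∑ k ∈ (Finset.range M).filter (fun k => j < k), F k) = C at *
  obtain ⟨hAB1, hAB2⟩ := hAB
  obtain ⟨hAC1, hAC2⟩ := hAC
  obtain ⟨hBC1, hBC2⟩ := hBC
  have hn := Complex.normSq_nonneg z
  constructor
  · have e : om (z * A + B + C) (z * A + z * B + C) = Complex.normSq z * om A B + om B (z * A)
        + z.im * Complex.normSq B + om B C + om C (z * B) := by
      simp [om, Complex.normSq_apply]; ring
    rw [e]
    have := Complex.normSq_nonneg B
    positivity
  · have e : om (z * A + z * B + C) (z * (z * A + B + C)) = z.im * Complex.normSq (z * A + C)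
        + Complex.normSq z * om A B + om C (z * B) + Complex.normSq z * (om B (z * A) + om B C) := by
      simp [om, Complex.normSq_apply]; ring
    rw [e]
    have := Complex.normSq_nonneg (z * A + C)
    positivity

lemma PhaseInt.step_ne {z : ℂ} (hz : 0 < z.im) {F : ℕ → ℂ} (h : PhaseInt z F) (M : ℕ)
    (hM : 0 < M) (h0 : F 0 ≠ 0) : stepG z M F 0 ≠ 0 := by
  have e1 := (stepG_eq z M F 0 0 le_rfl).1
  have hAC := (h.sums ((Finset.range M).filter (fun k => k ≤ 0))
    ((Finset.range M).filter (fun k => 0 < k)) (by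
      intro s hs t ht; simp only [Finset.mem_filter] at hs ht; omega)).1
  have hB : (Finset.range M).filter (fun k => 0 < k ∧ k ≤ 0) = ∅ := by
    ext k; simp only [Finset.mem_filter, Finset.notMem_empty, iff_false]; omega
  have hA : (Finset.range M).filter (fun k => k ≤ 0) = {0} := by
    ext k; simp only [Finset.mem_filter, Finset.mem_range, Finset.mem_singleton]; omega
  rw [hB, hA] at e1
  rw [hA] at hAC
  rw [e1]
  simp only [Finset.sum_singleton, Finset.sum_empty, add_zero] at hAC ⊢
  generalize (∑ k ∈ (Finset.range M).filter (fun k => 0 < k), F k) = C at *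
  intro hc
  have hC : C = -(z * F 0) := by linear_combination hc
  have e : om (F 0) (-(z * F 0)) = - (z.im * Complex.normSq (F 0)) := by
    simp [om, Complex.normSq_apply]; ring
  rw [hC, e] at hAC
  have : 0 < z.im * Complex.normSq (F 0) := mul_pos hz (Complex.normSq_pos.2 h0)
  linarith

lemma PhaseInt.sum_ne {z : ℂ} (hz : 0 < z.im) {F : ℕ → ℂ} (h : PhaseInt z F) (M : ℕ)
    (hM : 0 < M) (h0 : F 0 ≠ 0) : ∑ k ∈ Finset.range M, F k ≠ 0 := by
  intro hc
  have h1 : om (F 0) (∑ k ∈ Finset.range M, F k) + om (∑ k ∈ Finset.range M, F k) (z * F 0) = 0 := by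
    rw [hc]; simp [om]
  rw [om_sum_left, om_sum_right, ← Finset.sum_add_distrib] at h1
  have h2 := (Finset.sum_eq_zero_iff_of_nonneg (fun k _ =>
    add_nonneg (h 0 k (Nat.zero_le k)).1 (h 0 k (Nat.zero_le k)).2)).1 h1 0 (by simpa using hM)
  have e : om (F 0) (F 0) + om (F 0) (z * F 0) = z.im * Complex.normSq (F 0) := by
    simp [om, Complex.normSq_apply]; ring
  rw [e] at h2
  have : 0 < z.im * Complex.normSq (F 0) := mul_pos hz (Complex.normSq_pos.2 h0)
  linarith

/-- The refined rook-Eulerian values. -/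
noncomputable def refF (L : ℕ → ℕ) (x : ℕ → ℂ) : ℕ → ℕ → ℂ
  | 0 => fun _ => 1
  | m + 1 => stepG (x m) (L m - m) (refF L x m)

lemma refF_spec (L : ℕ → ℕ) (hL : ∀ i, i + 1 ≤ L i) (z : ℂ) (hz : 0 < z.im) (μ : ℕ → ℝ)
    (hμ : ∀ i, 0 < μ i) (m : ℕ) :
    PhaseInt z (refF L (fun i => μ i * z) m) ∧ refF L (fun i => μ i * z) m 0 ≠ 0 := by
  induction m with
  | zero =>
    refine ⟨?_, by simp [refF]⟩
    intro i j _
    simp [refF, om, hz.le]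
  | succ m ih =>
    have hz' : 0 < ((μ m : ℂ) * z).im := by
      simpa using mul_pos (hμ m) hz
    have h1 := ih.1.scale (μ m) (hμ m).le
    have hM : 0 < L m - m := by have := hL m; omega
    refine ⟨?_, h1.step_ne hz' _ hM ih.2⟩
    have h2 := (h1.step hz' (L m - m)).scale (μ m)⁻¹ (inv_nonneg.2 (hμ m).le)
    have e : (((μ m)⁻¹ : ℝ) : ℂ) * ((μ m : ℂ) * z) = z := by
      have : (μ m : ℂ) ≠ 0 := by exact_mod_cast (hμ m).ne'
      push_cast
      field_simp
    rw [e] at h2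
    exact h2

/-- Weight of a word. -/
noncomputable def wt (x : ℕ → ℂ) {m : ℕ} (p : Fin (m + 1) → ℕ) : ℂ :=
  ∏ i : Fin m, if p i.castSucc < p i.succ then x i else 1

open Classical in
/-- Number of unused columns below the last rook. -/
noncomputable def rk {m : ℕ} (p : Fin (m + 1) → ℕ) : ℕ :=
  Nat.count (fun c => c ∉ Set.range p) (p (Fin.last m))

open Classical in
lemma count_compl (U : Finset ℕ) (N : ℕ) (hU : ∀ u ∈ U, u < N) :
    Nat.count (fun c => c ∉ U) N = N - U.card := by
  rw [Nat.count_eq_card_filter_range]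
  have : (Finset.range N).filter (fun c => c ∉ U) = Finset.range N \ U := by
    ext; simp
  rw [this, Finset.card_sdiff_of_subset (fun u hu => Finset.mem_range.2 (hU u hu)), Finset.card_range]

open Classical in
/-- Summation over available columns, reindexed by rank. -/
lemma sum_avail (U : Finset ℕ) (N : ℕ) (hU : ∀ u ∈ U, u < N) (a : ℕ) (ha : a ∈ U) (y : ℂ)
    (g : ℕ → ℂ) :
    ∑ c : Fin N, (if (c : ℕ) ∉ U then (if a < (c : ℕ) then y else 1) *
        g (Nat.count (fun c => c ∉ U) c) else 0) =
      ∑ j ∈ Finset.range (N - U.card),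
        (if Nat.count (fun c => c ∉ U) a ≤ j then y else 1) * g j := by
  have hinf : {c | c ∉ U}.Infinite := U.finite_toSet.infinite_compl
  rw [Fin.sum_univ_eq_sum_range (fun c => if c ∉ U then (if a < c then y else 1) *
        g (Nat.count (fun c => c ∉ U) c) else 0) N, ← Finset.sum_filter]
  rw [← count_compl U N hU]
  refine Finset.sum_bij' (fun c _ => Nat.count (fun c => c ∉ U) c)
    (fun j _ => Nat.nth (fun c => c ∉ U) j) ?_ ?_ ?_ ?_ ?_
  · intro c hc
    simp only [Finset.mem_filter, Finset.mem_range] at hc ⊢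
    exact Nat.count_strict_mono hc.2 hc.1
  · intro j hj
    simp only [Finset.mem_filter, Finset.mem_range] at hj ⊢
    exact ⟨Nat.nth_lt_of_lt_count hj, Nat.nth_mem_of_infinite hinf j⟩
  · intro c hc
    exact Nat.nth_count (Finset.mem_filter.1 hc).2
  · intro j hj
    exact Nat.count_nth_of_infinite hinf j
  · intro c hc
    have hcU := (Finset.mem_filter.1 hc).2
    have hne : a ≠ c := fun h => hcU (h ▸ ha)
    have : a < c ↔ Nat.count (fun c => c ∉ U) a ≤ Nat.count (fun c => c ∉ U) c := by
      constructor
      · intro h; exact Nat.count_monotone _ h.le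
      · intro h
        by_contra h'
        have : c < a := by omega
        have := Nat.count_strict_mono (p := fun c => c ∉ U) hcU this
        omega
    simp only [this]

lemma wt_snoc (x : ℕ → ℂ) {m : ℕ} (p : Fin (m + 1) → ℕ) (c : ℕ) :
    wt x (Fin.snoc p c : Fin (m + 2) → ℕ) =
      wt x p * (if p (Fin.last m) < c then x m else 1) := by
  rw [wt, Fin.prod_univ_castSucc, wt]
  congr 1
  · refine Finset.prod_congr rfl fun i _ => ?_
    rw [← Fin.castSucc_succ]
    simp only [Fin.snoc_castSucc, Fin.val_castSucc]
  · rw [Fin.succ_last]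
    simp only [Fin.snoc_castSucc, Fin.snoc_last, Fin.val_last]

lemma inj_snoc {m : ℕ} (p : Fin (m + 1) → ℕ) (c : ℕ) :
    Function.Injective (Fin.snoc p c : Fin (m + 2) → ℕ) ↔
      Function.Injective p ∧ c ∉ Set.range p := by
  exact Fin.snoc_injective_iff

open Classical in
lemma rk_snoc {m : ℕ} (p : Fin (m + 1) → ℕ) (c : ℕ) :
    rk (Fin.snoc p c : Fin (m + 2) → ℕ) = Nat.count (fun c => c ∉ Set.range p) c := by
  rw [rk, Fin.snoc_last, Nat.count_eq_card_filter_range, Nat.count_eq_card_filter_range]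
  congr 1
  refine Finset.filter_congr fun d hd => ?_
  have hd' : d ≠ c := (Finset.mem_range.1 hd).ne
  rw [Fin.range_snoc]
  simp [hd']

open Classical in
lemma rook_sum (L : ℕ → ℕ) (hmono : Monotone L) (x : ℕ → ℂ) (m : ℕ) :
    ∀ g : ℕ → ℂ,
    ∑ p : (∀ i : Fin (m + 1), Fin (L i)),
      (if Function.Injective (fun i => (p i : ℕ)) then
        wt x (fun i => (p i : ℕ)) * g (rk (fun i => (p i : ℕ))) else 0) =
      ∑ k ∈ Finset.range (L m - m), refF L x m k * g k := by
  induction m with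
  | zero =>
    intro g
    rw [← (Equiv.piUnique (fun i : Fin 1 => Fin (L i))).symm.sum_comp]
    have : ∀ c : Fin (L 0), (if Function.Injective
        (fun i => (((Equiv.piUnique (fun i : Fin 1 => Fin (L i))).symm c) i : ℕ)) then
        wt x (fun i => (((Equiv.piUnique (fun i : Fin 1 => Fin (L i))).symm c) i : ℕ)) *
        g (rk (fun i => (((Equiv.piUnique (fun i : Fin 1 => Fin (L i))).symm c) i : ℕ))) else 0)
        = g c := by
      intro c
      rw [if_pos (Function.injective_of_subsingleton _)]
      have hf : (fun i => (((Equiv.piUnique (fun i : Fin 1 => Fin (L i))).symm c) i : ℕ))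
          = fun _ => (c : ℕ) := by
        funext i
        obtain rfl : i = 0 := Subsingleton.elim _ _
        rfl
      rw [hf]
      have hr : rk (fun _ : Fin 1 => (c : ℕ)) = c := by
        rw [rk, Nat.count_eq_card_filter_range, Finset.filter_true_of_mem, Finset.card_range]
        intro d hd
        have := (Finset.mem_range.1 hd).ne
        rintro ⟨_, h⟩
        exact this h.symm
      rw [hr]
      simp [wt]
    refine (Finset.sum_congr rfl fun c _ => this c).trans ?_
    simp only [refF, one_mul, Nat.sub_zero]
    exact Fin.sum_univ_eq_sum_range g (L 0)
  | succ m ih =>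
    intro g
    rw [← (Fin.snocEquiv (fun i : Fin (m + 2) => Fin (L i))).sum_comp, Fintype.sum_prod_type_right]
    have hsn : ∀ (c : Fin (L (m + 1))) (p : ∀ i : Fin (m + 1), Fin (L i)),
        (fun i => ((Fin.snocEquiv (fun i : Fin (m + 2) => Fin (L i)) (c, p) i : Fin _) : ℕ)) =
        (Fin.snoc (fun i => (p i : ℕ)) (c : ℕ) : Fin (m + 2) → ℕ) := by
      intro c p
      funext i
      refine Fin.lastCases ?_ (fun i => ?_) i
      · simp [Fin.snocEquiv]
      · simp [Fin.snocEquiv]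
    have key : ∀ p : (∀ i : Fin (m + 1), Fin (L i)),
        (∑ c : Fin (L (m + 1)), if Function.Injective (Fin.snoc (fun i => (p i : ℕ)) (c : ℕ) : Fin (m + 2) → ℕ) then
          wt x (Fin.snoc (fun i => (p i : ℕ)) (c : ℕ) : Fin (m + 2) → ℕ) *
          g (rk (Fin.snoc (fun i => (p i : ℕ)) (c : ℕ) : Fin (m + 2) → ℕ)) else 0) =
        (if Function.Injective (fun i => (p i : ℕ)) then
        wt x (fun i => (p i : ℕ)) * (fun k => ∑ j ∈ Finset.range (L (m + 1) - (m + 1)),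
          (if k ≤ j then x m else 1) * g j) (rk (fun i => (p i : ℕ))) else 0) := by
      intro p
      simp only [inj_snoc, wt_snoc, rk_snoc]
      by_cases hp : Function.Injective (fun i => (p i : ℕ))
      · simp only [hp, true_and, if_true]
        have hU : ∀ u ∈ Finset.univ.image (fun i => (p i : ℕ)), u < L (m + 1) := by
          intro u hu
          simp only [Finset.mem_image, Finset.mem_univ, true_and] at hu
          obtain ⟨i, rfl⟩ := hu
          exact (p i).isLt.trans_le (hmono (by have := i.isLt; omega))
        have hs := sum_avail (Finset.univ.image (fun i => (p i : ℕ))) (L (m + 1)) hU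
          (p (Fin.last m)) (Finset.mem_image_of_mem _ (Finset.mem_univ _)) (x m) g
        rw [Finset.card_image_of_injective _ hp, Finset.card_univ, Fintype.card_fin] at hs
        have hmem : ∀ c, c ∉ Finset.univ.image (fun i => (p i : ℕ)) ↔
            c ∉ Set.range (fun i => (p i : ℕ)) := by
          intro c; simp
        simp only [hmem] at hs
        rw [rk, ← hs, Finset.mul_sum]
        refine Finset.sum_congr rfl fun c _ => ?_
        split_ifs <;> ring
      · simp [hp]
    have hstep := ih (fun k => ∑ j ∈ Finset.range (L (m + 1) - (m + 1)),
          (if k ≤ j then x m else 1) * g j)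
    simp only [← key, ← hsn] at hstep
    refine hstep.trans ?_
    simp only [Finset.mul_sum, refF, stepG, Finset.sum_mul]
    rw [Finset.sum_comm]
    refine Finset.sum_congr rfl fun j _ => Finset.sum_congr rfl fun k _ => ?_
    ring

lemma aeval_rook (L : ℕ → ℕ) (hmono : Monotone L) (m : ℕ) (μ : ℕ → ℝ) (z : ℂ) :
    Polynomial.aeval z (MvPolynomial.aeval (fun i : Fin (m + 1 - 1) => Polynomial.C (μ i) * Polynomial.X)
      (rookEulerianMv (fun i : Fin (m + 1) => L i))) =
    ∑ k ∈ Finset.range (L m - m), refF L (fun i => μ i * z) m k := by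
  classical
  have h := rook_sum L hmono (fun i => μ i * z) m (fun _ => 1)
  simp only [mul_one] at h
  rw [← h, rookEulerianMv, map_sum, map_sum, RookPlacements, Finset.sum_filter]
  refine Finset.sum_congr rfl fun p _ => ?_
  have hi : (∀ i j : Fin (m + 1), i ≠ j → (p i : ℕ) ≠ (p j : ℕ)) ↔
      Function.Injective (fun i => (p i : ℕ)) := by
    constructor
    · intro h i j hij
      by_contra hne
      exact h i j hne hij
    · intro h i j hne hij
      exact hne (h hij)
  simp only [hi]
  split_ifs
  · rw [map_prod, map_prod, ascSet, Finset.prod_filter, wt]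
    refine Finset.prod_congr rfl fun i _ => ?_
    simp only [MvPolynomial.aeval_X, map_mul, Polynomial.aeval_C, Polynomial.aeval_X]
    rfl
  · rfl

/-- For every Ferrers board `λ = (λ_1 ≤ … ≤ λ_n)` of positive integers with `λ_i ≥ i`, the
multivariate rook-Eulerian polynomial `Q^λ(x)` is same-phase stable: for every tuple
`μ = (μ_1, …, μ_{n-1})` of positive reals, the univariate polynomial
`t ↦ Q^λ(t μ_1, …, t μ_{n-1})` is real-rooted. -/
theorem rookEulerianMv_samePhaseStable (n : ℕ) (L : Fin n → ℕ) (hmono : Monotone L)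
    (hL : ∀ i : Fin n, (i : ℕ) + 1 ≤ L i)
    (μ : Fin (n - 1) → ℝ) (hμ : ∀ i, 0 < μ i) :
    RealRooted (MvPolynomial.aeval (fun i => Polynomial.C (μ i) * Polynomial.X)
      (rookEulerianMv L)) := by
  cases n with
  | zero =>
    have : MvPolynomial.aeval (fun i => Polynomial.C (μ i) * Polynomial.X)
      (rookEulerianMv L) = (1 : ℝ[X]) := by
      have h1 : RookPlacements L = Finset.univ := by
        ext p; simp [RookPlacements]
      have h2 : ∀ p, ascSet L p = ∅ := by
        intro p; ext i; exact absurd i.isLt (by simp)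
      simp [rookEulerianMv, h1, h2]
    rw [this]
    exact ⟨one_ne_zero, fun z hz => by simp at hz⟩
  | succ m =>
    obtain ⟨L', hmono', hL', rfl⟩ : ∃ L' : ℕ → ℕ, Monotone L' ∧ (∀ i, i + 1 ≤ L' i) ∧
        L = fun i : Fin (m + 1) => L' i := by
      refine ⟨fun i => L ⟨min i m, by omega⟩ + (i - m), ?_, ?_, ?_⟩
      · intro i j hij
        have : L ⟨min i m, by omega⟩ ≤ L ⟨min j m, by omega⟩ := hmono (by
          simp only [Fin.mk_le_mk]; omega)
        simp only
        omega
      · intro i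
        have := hL ⟨min i m, by omega⟩
        simp only at this ⊢
        omega
      · funext i
        have h1 : min (i : ℕ) m = i := by have := i.isLt; omega
        have h2 : (i : ℕ) - m = 0 := by have := i.isLt; omega
        simp [h1, h2]
    obtain ⟨μ', hμ', rfl⟩ : ∃ μ' : ℕ → ℝ, (∀ i, 0 < μ' i) ∧
        μ = fun i : Fin (m + 1 - 1) => μ' i := by
      refine ⟨fun i => if h : i < m + 1 - 1 then μ ⟨i, h⟩ else 1, ?_, ?_⟩
      · intro i
        dsimp only
        split_ifs
        · exact hμ _
        · exact one_pos
      · funext i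
        have := i.isLt
        simp only [this, dif_pos]
    have key : ∀ z : ℂ, 0 < z.im → Polynomial.aeval z (MvPolynomial.aeval
        (fun i : Fin (m + 1 - 1) => Polynomial.C (μ' i) * Polynomial.X)
        (rookEulerianMv (fun i : Fin (m + 1) => L' i))) ≠ 0 := by
      intro z hz
      rw [aeval_rook L' hmono' m μ' z]
      obtain ⟨h1, h2⟩ := refF_spec L' hL' z hz μ' hμ' m
      exact h1.sum_ne hz _ (by have := hL' m; omega) h2
    refine ⟨?_, ?_⟩
    · intro h0
      refine key Complex.I (by simp) ?_
      rw [h0, map_zero]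
    · intro z hz
      rcases lt_trichotomy z.im 0 with h | h | h
      · exfalso
        refine key ((starRingEnd ℂ) z) (by simpa using h) ?_
        rw [Polynomial.aeval_conj, hz, map_zero]
      · exact h
      · exact absurd hz (key z h)
end

section
/- For the permutation π = [4, 6, 2, 1, 7, 3, 5] ∈ S_7, the descent-generating polynomial of the lower Bruhat interval, Q^{π}(t) = Σ_{σ ≤_B π} t^{des(σ)}, equals 1 + 43t + 196t² + 168t³ + 23t⁴ + t⁵, and this polynomial is not real-rooted (it has a pair of non-real complex roots). -/
open Polynomial

/-- The number of inversions of a permutation: pairs of positions `i < j` with `σ i > σ j`. -/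
def invCount {n : ℕ} (σ : Equiv.Perm (Fin n)) : ℕ :=
  (Finset.univ.filter fun p : Fin n × Fin n => p.1 < p.2 ∧ σ p.2 < σ p.1).card

/-- One step in the Bruhat order: `τ` is obtained from `σ` by swapping two (not
necessarily adjacent) entries in one-line notation, strictly increasing the number
of inversions. -/
def BruhatStep {n : ℕ} (σ τ : Equiv.Perm (Fin n)) : Prop :=
  (∃ i j : Fin n, i ≠ j ∧ τ = σ * Equiv.swap i j) ∧ invCount σ < invCount τ

/-- The Bruhat order: `σ ≤_B π` iff there is a chain from `σ` to `π` of swaps, each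
strictly increasing the number of inversions. -/
def BruhatLE {n : ℕ} (σ π : Equiv.Perm (Fin n)) : Prop :=
  Relation.ReflTransGen BruhatStep σ π

/-- The number of descents of a permutation: indices `i` with `σ_i > σ_{i+1}`. -/
def desCount {n : ℕ} (σ : Equiv.Perm (Fin n)) : ℕ :=
  (Finset.univ.filter fun i : Fin n =>
    ∃ h : (i : ℕ) + 1 < n, σ ⟨(i : ℕ) + 1, h⟩ < σ i).card

open scoped Classical in
/-- The descent-generating polynomial `Q^π(t) = Σ_{σ ≤_B π} t^{des(σ)}` of the lower
Bruhat interval `[id, π]_B`. -/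
noncomputable def bruhatDesPoly {n : ℕ} (π : Equiv.Perm (Fin n)) : Polynomial ℝ :=
  ∑ σ : Equiv.Perm (Fin n), if BruhatLE σ π then X ^ desCount σ else 0

/-- The permutation `π = [4, 6, 2, 1, 7, 3, 5] ∈ S_7` (in 0-based form). -/
noncomputable def pi7 : Equiv.Perm (Fin 7) :=
  Equiv.ofBijective ![3, 5, 1, 0, 6, 2, 4] (by decide)

/-! ### Part 1: encoding permutations of `Fin 7` as natural numbers in base 8 -/

/-- The `i`-th base-8 digit. -/
def dig (c i : ℕ) : ℕ := Nat.mod (Nat.div c (Nat.pow 8 i)) 8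

lemma dig_def (c i : ℕ) : dig c i = (c / 8 ^ i) % 8 := rfl

/-- The code of a permutation. -/
def code (σ : Equiv.Perm (Fin 7)) : ℕ :=
  ∑ i : Fin 7, (σ i : ℕ) * 8 ^ (i : ℕ)

/-- Exchange two digits. -/
def swapC (c i j : ℕ) : ℕ :=
  Nat.sub (Nat.add (Nat.add c (Nat.mul (dig c j) (Nat.pow 8 i))) (Nat.mul (dig c i) (Nat.pow 8 j)))
    (Nat.add (Nat.mul (dig c i) (Nat.pow 8 i)) (Nat.mul (dig c j) (Nat.pow 8 j)))

lemma swapC_def (c i j : ℕ) : swapC c i j =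
  (c + dig c j * 8 ^ i + dig c i * 8 ^ j) - (dig c i * 8 ^ i + dig c j * 8 ^ j) := rfl

/-- Indicator of a strict inequality. -/
def gtN (a b : ℕ) : ℕ := Nat.sub 1 (Nat.sub (Nat.add b 1) a)

lemma gtN_def (a b : ℕ) : gtN a b = if b < a then 1 else 0 := by
  have h : gtN a b = 1 - (b + 1 - a) := rfl
  rw [h]
  split <;> omega

def invD (a b c d e f g : ℕ) : ℕ :=
  (Nat.add (Nat.add (Nat.add (Nat.add (Nat.add (Nat.add (Nat.add (Nat.add (Nat.add (Nat.add (gtN a b) (gtN a c)) (gtN a d)) (gtN a e)) (gtN a f)) (gtN a g))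
    (Nat.add (Nat.add (Nat.add (Nat.add (gtN b c) (gtN b d)) (gtN b e)) (gtN b f)) (gtN b g)))
    (Nat.add (Nat.add (Nat.add (gtN c d) (gtN c e)) (gtN c f)) (gtN c g)))
    (Nat.add (Nat.add (gtN d e) (gtN d f)) (gtN d g)))
    (Nat.add (gtN e f) (gtN e g)))
    (gtN f g))

lemma invD_def (a b c d e f g : ℕ) : invD a b c d e f g =
  (gtN a b + gtN a c + gtN a d + gtN a e + gtN a f + gtN a g) +
  (gtN b c + gtN b d + gtN b e + gtN b f + gtN b g) +
  (gtN c d + gtN c e + gtN c f + gtN c g) +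
  (gtN d e + gtN d f + gtN d g) + (gtN e f + gtN e g) + gtN f g := rfl

def invC (c : ℕ) : ℕ :=
  invD (dig c 0) (dig c 1) (dig c 2) (dig c 3) (dig c 4) (dig c 5) (dig c 6)

def desC (c : ℕ) : ℕ :=
  gtN (dig c 0) (dig c 1) + gtN (dig c 1) (dig c 2) + gtN (dig c 2) (dig c 3) +
  gtN (dig c 3) (dig c 4) + gtN (dig c 4) (dig c 5) + gtN (dig c 5) (dig c 6)

lemma dig_code (σ : Equiv.Perm (Fin 7)) (i : Fin 7) : dig (code σ) i = σ i := by
  have h := fun k : Fin 7 => (σ k).isLt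
  have h0 := h 0
  have h1 := h 1
  have h2 := h 2
  have h3 := h 3
  have h4 := h 4
  have h5 := h 5
  have h6 := h 6
  simp only [dig_def, code, Fin.sum_univ_seven]
  fin_cases i <;> simp <;> omega

lemma code_injective : Function.Injective code := by
  intro σ τ h
  ext i
  rw [← dig_code σ i, ← dig_code τ i, h]

lemma code_swap (σ : Equiv.Perm (Fin 7)) (i j : Fin 7) (hij : i ≠ j) :
    code (σ * Equiv.swap i j) = swapC (code σ) i j := by
  have key : code (σ * Equiv.swap i j) + ((σ i : ℕ) * 8 ^ (i : ℕ) + (σ j : ℕ) * 8 ^ (j : ℕ))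
      = code σ + (σ j : ℕ) * 8 ^ (i : ℕ) + (σ i : ℕ) * 8 ^ (j : ℕ) := by
    have hj : j ∈ (Finset.univ.erase i : Finset (Fin 7)) := by simp [hij.symm]
    have e1 : ∀ f : Fin 7 → ℕ, ∑ k, f k
        = ∑ k ∈ (Finset.univ.erase i).erase j, f k + f j + f i := by
      intro f
      rw [Finset.sum_erase_add _ _ hj, Finset.sum_erase_add _ _ (Finset.mem_univ i)]
    have e2 : ∑ k ∈ (Finset.univ.erase i).erase j,
          (((σ * Equiv.swap i j) k : Fin 7) : ℕ) * 8 ^ (k : ℕ)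
        = ∑ k ∈ (Finset.univ.erase i).erase j, (σ k : ℕ) * 8 ^ (k : ℕ) := by
      refine Finset.sum_congr rfl fun k hk => ?_
      simp only [Finset.mem_erase] at hk
      rw [Equiv.Perm.mul_apply, Equiv.swap_apply_of_ne_of_ne hk.2.1 hk.1]
    unfold code
    rw [e1 (fun k => (((σ * Equiv.swap i j) k : Fin 7) : ℕ) * 8 ^ (k : ℕ)),
      e1 (fun k => (σ k : ℕ) * 8 ^ (k : ℕ)), e2]
    simp only [Equiv.Perm.mul_apply, Equiv.swap_apply_left, Equiv.swap_apply_right]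
    omega
  rw [swapC_def, dig_code, dig_code]
  omega

lemma invCount_eq (σ : Equiv.Perm (Fin 7)) : invCount σ = invC (code σ) := by
  have h := dig_code σ
  have h0 := h 0
  have h1 := h 1
  have h2 := h 2
  have h3 := h 3
  have h4 := h 4
  have h5 := h 5
  have h6 := h 6
  simp only [Fin.isValue, Fin.val_zero, Fin.val_one] at h0 h1
  change dig _ 2 = _ at h2
  change dig _ 3 = _ at h3
  change dig _ 4 = _ at h4
  change dig _ 5 = _ at h5
  change dig _ 6 = _ at h6
  unfold invCount invC
  simp only [invD_def, gtN_def]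
  rw [h0, h1, h2, h3, h4, h5, h6, Finset.card_filter, Fintype.sum_prod_type]
  simp only [Fin.sum_univ_seven, Fin.lt_def]
  simp

lemma desCount_eq (σ : Equiv.Perm (Fin 7)) : desCount σ = desC (code σ) := by
  have h := dig_code σ
  have h0 := h 0
  have h1 := h 1
  have h2 := h 2
  have h3 := h 3
  have h4 := h 4
  have h5 := h 5
  have h6 := h 6
  simp only [Fin.isValue, Fin.val_zero, Fin.val_one] at h0 h1
  change dig _ 2 = _ at h2
  change dig _ 3 = _ at h3
  change dig _ 4 = _ at h4
  change dig _ 5 = _ at h5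
  change dig _ 6 = _ at h6
  unfold desCount desC
  simp only [gtN_def]
  have g : ∀ i j : Fin 7, (i : ℕ) + 1 = (j : ℕ) →
      ((∃ h : (i : ℕ) + 1 < 7, σ ⟨(i : ℕ) + 1, h⟩ < σ i) ↔ (σ j : ℕ) < (σ i : ℕ)) := by
    intro i j hij
    have hj : (i : ℕ) + 1 < 7 := hij ▸ j.isLt
    have hj2 : (⟨(i : ℕ) + 1, hj⟩ : Fin 7) = j := Fin.ext hij
    constructor
    · rintro ⟨h, hlt⟩
      rw [hj2] at hlt
      exact hlt
    · intro hlt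
      refine ⟨hj, ?_⟩
      rw [hj2]
      exact hlt
  have g6 : ¬ ∃ h : ((6 : Fin 7) : ℕ) + 1 < 7, σ ⟨((6 : Fin 7) : ℕ) + 1, h⟩ < σ 6 := by
    rintro ⟨h, -⟩
    exact absurd h (by decide)
  rw [h0, h1, h2, h3, h4, h5, h6, Finset.card_filter, Fin.sum_univ_seven, if_neg g6]
  simp only [g 0 1 rfl, g 1 2 rfl, g 2 3 rfl, g 3 4 rfl, g 4 5 rfl, g 5 6 rfl, add_zero]

/-! ### Part 2: computing the lower interval -/

/-- All pairs of positions. -/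
def prs : List (ℕ × ℕ) :=
  [(0,1),(0,2),(0,3),(0,4),(0,5),(0,6),(1,2),(1,3),(1,4),(1,5),(1,6),(2,3),(2,4),(2,5),(2,6),
   (3,4),(3,5),(3,6),(4,5),(4,6),(5,6)]

/-- Codes of all elements one Bruhat step below. -/
def downs (c : ℕ) : List ℕ :=
  (prs.map fun p => swapC c p.1 p.2).filter fun d => Nat.ble (Nat.add (invC d) 1) (invC c)

/-- Insert without repetition. -/
def ins (c : ℕ) (l : List ℕ) : List ℕ := bif l.any (Nat.beq c) then l else c :: l

def nextLayer (l : List ℕ) : List ℕ :=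
  l.foldr (fun c acc => ((downs c).filter fun d => Nat.beq (Nat.add (invC d) 1) (invC c)).foldr ins acc) []

def pcode : ℕ := 1138795

/-- The layers of the interval (each by number of inversions), from the top. -/
def layers : ℕ → List ℕ → List (List ℕ)
  | 0, l => [l]
  | n + 1, l => l :: layers n (nextLayer l)

def interval : List ℕ := (layers 10 [pcode]).flatten

/-- The codes of the 432 elements of the interval, explicitly, by number of inversions. -/
def litL : List (List ℕ) :=
  [[1138795],
   [1138921, 1171562, 1139019, 1237075, 1400931, 1139243, 1253483, 1654891],
   [1171625, 1139033, 1171786, 1237082, 1237131, 1401057, 1433698, 1401099, 1466451, 1139432,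
    1140265, 1172010, 1139523, 1141259, 1237523, 1401379, 1253609, 1257578, 1253707, 1265747,
    1515619, 1253931, 1655017, 1687658, 1655115, 1658979, 1655339, 1712235],
   [1171793, 1237145, 1237194, 1433761, 1401113, 1433866, 1466458, 1466507, 1140328, 1172136,
    1172521, 1139544, 1140545, 1172290, 1141273, 1174026, 1141315, 1237530, 1237635, 1238027,
    1401568, 1402401, 1434146, 1401603, 1402891, 1466899, 1257641, 1253721, 1257802, 1265754,
    1265803, 1515745, 1519714, 1515787, 1523795, 1254120, 1254953, 1258026, 1254211, 1255947,
    1266195, 1516067, 1687721, 1655129, 1687882, 1659105, 1691746, 1659147, 1655528, 1656361,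
    1688106, 1655619, 1657355, 1659427, 1712361, 1716330, 1712459, 1724499, 1744995, 1712683],
   [1237201, 1433873, 1466521, 1466570, 1172584, 1140552, 1172304, 1172801, 1174033, 1141336,
    1141441, 1174082, 1237656, 1237698, 1238041, 1238538, 1238083, 1402464, 1434272, 1434657,
    1401624, 1402625, 1434370, 1402905, 1435658, 1402947, 1466906, 1467011, 1467403, 1257809,
    1265817, 1265866, 1519777, 1515801, 1519882, 1523802, 1523851, 1255016, 1258152, 1258537,
    1254232, 1255233, 1258306, 1255961, 1260042, 1256003, 1266202, 1266307, 1266699, 1516256,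
    1517089, 1520162, 1516291, 1517579, 1524243, 1687889, 1691809, 1659161, 1691914, 1656424,
    1688232, 1688617, 1655640, 1656641, 1688386, 1657369, 1690122, 1657411, 1659616, 1660449,
    1692194, 1659651, 1660939, 1716393, 1712473, 1716554, 1724506, 1724555, 1745121, 1749090,
    1745163, 1753171, 1712872, 1713705, 1716778, 1712963, 1714699, 1724947, 1745443],
   [1466577, 1172808, 1141448, 1174096, 1174145, 1237712, 1238545, 1238104, 1238209, 1238594,
    1434720, 1402632, 1434384, 1434881, 1435665, 1402968, 1403073, 1435714, 1467032, 1467074,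
    1467417, 1467914, 1467459, 1265873, 1519889, 1523865, 1523914, 1258600, 1255240, 1258320,
    1258817, 1260049, 1256024, 1256129, 1260098, 1266328, 1266370, 1266713, 1267210, 1266755,
    1517152, 1520288, 1520673, 1516312, 1517313, 1520386, 1517593, 1521674, 1517635, 1524250,
    1524355, 1524747, 1691921, 1688680, 1656648, 1688400, 1688897, 1690129, 1657432, 1657537,
    1690178, 1660512, 1692320, 1692705, 1659672, 1660673, 1692418, 1660953, 1693706, 1660995,
    1716561, 1724569, 1724618, 1749153, 1745177, 1749258, 1753178, 1753227, 1713768, 1716904,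
    1717289, 1712984, 1713985, 1717058, 1714713, 1718794, 1714755, 1724954, 1725059, 1725451,
    1745632, 1746465, 1749538, 1745667, 1746955, 1753619],
   [1174152, 1238216, 1238608, 1238657, 1434888, 1403080, 1435728, 1435777, 1467088, 1467921,
    1467480, 1467585, 1467970, 1523921, 1258824, 1256136, 1260112, 1260161, 1266384, 1267217,
    1266776, 1266881, 1267266, 1520736, 1517320, 1520400, 1520897, 1521681, 1517656, 1517761,
    1521730, 1524376, 1524418, 1524761, 1525258, 1524803, 1688904, 1657544, 1690192, 1690241,
    1692768, 1660680, 1692432, 1692929, 1693713, 1661016, 1661121, 1693762, 1724625, 1749265,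
    1753241, 1753290, 1717352, 1713992, 1717072, 1717569, 1718801, 1714776, 1714881, 1718850,
    1725080, 1725122, 1725465, 1725962, 1725507, 1746528, 1749664, 1750049, 1745688, 1746689,
    1749762, 1746969, 1751050, 1747011, 1753626, 1753731, 1754123],
   [1238664, 1435784, 1467592, 1467984, 1468033, 1260168, 1266888, 1267280, 1267329, 1520904,
    1517768, 1521744, 1521793, 1524432, 1525265, 1524824, 1524929, 1525314, 1690248, 1692936,
    1661128, 1693776, 1693825, 1753297, 1717576, 1714888, 1718864, 1718913, 1725136, 1725969,
    1725528, 1725633, 1726018, 1750112, 1746696, 1749776, 1750273, 1751057, 1747032, 1747137,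
    1751106, 1753752, 1753794, 1754137, 1754634, 1754179],
   [1468040, 1267336, 1521800, 1524936, 1525328, 1525377, 1693832, 1718920, 1725640, 1726032,
    1726081, 1750280, 1747144, 1751120, 1751169, 1753808, 1754641, 1754200, 1754305, 1754690],
   [1525384, 1726088, 1751176, 1754312, 1754704, 1754753],
   [1754760]]

def lit : List ℕ := litL.flatten

set_option maxRecDepth 100000 in
lemma layers_eq : layers 10 [pcode] = litL := by decide +kernel

lemma interval_eq : interval = lit := congrArg List.flatten layers_eq

/-- Boolean test for absence of repetitions. -/
def nd : List ℕ → Bool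
  | [] => true
  | a :: l => bif l.any (Nat.beq a) then false else nd l

lemma nodup_of_nd (l : List ℕ) (h : nd l = true) : l.Nodup := by
  induction l with
  | nil => exact List.nodup_nil
  | cons a l ih =>
    unfold nd at h
    cases hb : l.any (Nat.beq a) with
    | true => rw [hb] at h; exact absurd h (by simp)
    | false =>
      rw [hb] at h
      refine List.nodup_cons.2 ⟨fun hm => ?_, ih h⟩
      have : l.any (Nat.beq a) = true := List.any_eq_true.2 ⟨a, hm, Nat.beq_refl a⟩
      rw [hb] at this
      exact absurd this (by simp)

set_option maxRecDepth 100000 in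
lemma lit_nd : nd lit = true := by decide +kernel

lemma lit_nodup : lit.Nodup := nodup_of_nd _ lit_nd

set_option maxRecDepth 100000 in
lemma lit_closed :
    (litL.flatten.all fun c => (downs c).all fun d =>
      (litL.getD (Nat.sub 10 (invC d)) []).any (Nat.beq d)) = true := by decide +kernel

set_option maxRecDepth 100000 in
lemma lit_des : ((lit.map desC).isPerm
    (List.replicate 1 0 ++ List.replicate 43 1 ++ List.replicate 196 2 ++
      List.replicate 168 3 ++ List.replicate 23 4 ++ List.replicate 1 5)) = true := by
  decide +kernel

lemma closed_spec (L : List (List ℕ))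
    (h : (L.flatten.all fun c => (downs c).all fun d =>
      (L.getD (Nat.sub 10 (invC d)) []).any (Nat.beq d)) = true)
    (c : ℕ) (hc : c ∈ L.flatten) (d : ℕ) (hd : d ∈ downs c) : d ∈ L.flatten := by
  have h1 := List.all_eq_true.1 (List.all_eq_true.1 h _ hc) _ hd
  obtain ⟨e, he1, he2⟩ := List.any_eq_true.1 h1
  rw [Nat.eq_of_beq_eq_true he2]
  refine List.mem_flatten.2 ⟨_, ?_, he1⟩
  generalize Nat.sub 10 (invC d) = k at he1
  rw [List.getD_eq_getElem?_getD] at he1 ⊢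
  cases hk : L[k]? with
  | none => rw [hk] at he1; simp at he1
  | some l => exact List.mem_of_getElem? hk

lemma code_pi7 : code pi7 = pcode := by
  unfold code
  rw [Fin.sum_univ_seven]
  simp only [pi7, Equiv.ofBijective_apply]
  decide +kernel

lemma mem_lit_of_le (σ : Equiv.Perm (Fin 7)) (h : BruhatLE σ pi7) : code σ ∈ lit := by
  unfold BruhatLE at h
  induction h using Relation.ReflTransGen.head_induction_on with
  | refl =>
    rw [code_pi7, ← interval_eq]
    simp [interval, layers]
  | @head σ τ hstep _ ih =>
    obtain ⟨⟨i, j, hij, hτ⟩, hlt⟩ := hstep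
    have hlt2 : invC (code σ) < invC (code τ) := by
      rwa [invCount_eq, invCount_eq] at hlt
    have aux : ∀ i j : Fin 7, i < j → τ = σ * Equiv.swap i j → code σ ∈ downs (code τ) := by
      intro i j hij hτ
      have hσ : σ = τ * Equiv.swap i j := by
        rw [hτ, mul_assoc, Equiv.swap_mul_self, mul_one]
      have hc : code σ = swapC (code τ) i j := by
        rw [← code_swap τ i j hij.ne, ← hσ]
      have hp : ∀ i j : Fin 7, i < j → ((i : ℕ), (j : ℕ)) ∈ prs := by decide
      unfold downs
      rw [List.mem_filter]
      refine ⟨List.mem_map.2 ⟨((i : ℕ), (j : ℕ)), hp i j hij, hc.symm⟩, ?_⟩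
      exact Nat.ble_eq_true_of_le hlt2
    have hd : code σ ∈ downs (code τ) := by
      rcases lt_or_gt_of_ne hij with h | h
      · exact aux i j h hτ
      · exact aux j i h (by rw [hτ, Equiv.swap_comm])
    exact closed_spec litL lit_closed _ ih _ hd

/-- All codes in the list come from permutations below `pi7`. -/
def Good (l : List ℕ) : Prop := ∀ c ∈ l, ∃ σ, code σ = c ∧ BruhatLE σ pi7

lemma good_downs (c d : ℕ) (hc : ∃ σ, code σ = c ∧ BruhatLE σ pi7) (hd : d ∈ downs c) :
    ∃ σ, code σ = d ∧ BruhatLE σ pi7 := by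
  obtain ⟨τ, rfl, hle⟩ := hc
  unfold downs at hd
  rw [List.mem_filter, List.mem_map] at hd
  obtain ⟨⟨p, hp, rfl⟩, hlt⟩ := hd
  have hpr : ∀ p ∈ prs, p.1 < 7 ∧ p.2 < 7 ∧ p.1 ≠ p.2 := by decide
  obtain ⟨h1, h2, h3⟩ := hpr p hp
  have hne : (⟨p.1, h1⟩ : Fin 7) ≠ ⟨p.2, h2⟩ := fun h => h3 (Fin.mk.inj_iff.1 h)
  have hs := code_swap τ ⟨p.1, h1⟩ ⟨p.2, h2⟩ hne
  refine ⟨_, hs, Relation.ReflTransGen.head ⟨⟨_, _, hne, ?_⟩, ?_⟩ hle⟩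
  · rw [mul_assoc, Equiv.swap_mul_self, mul_one]
  · rw [invCount_eq, invCount_eq, hs]
    exact Nat.le_of_ble_eq_true hlt

lemma good_ins (c : ℕ) (l : List ℕ) (hc : ∃ σ, code σ = c ∧ BruhatLE σ pi7) (hl : Good l) :
    Good (ins c l) := by
  unfold ins
  cases l.any (Nat.beq c) with
  | true => exact hl
  | false =>
    intro d hd
    rcases List.mem_cons.1 hd with rfl | h
    · exact hc
    · exact hl d h

lemma good_foldr_ins (m l : List ℕ) (hm : Good m) (hl : Good l) : Good (m.foldr ins l) := by
  induction m with
  | nil => exact hl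
  | cons c m ih =>
    exact good_ins _ _ (hm c (by simp)) (ih fun d hd => hm d (by simp [hd]))

lemma good_nextLayer (l : List ℕ) (hl : Good l) : Good (nextLayer l) := by
  unfold nextLayer
  induction l with
  | nil => intro c hc; simp at hc
  | cons c l ih =>
    refine good_foldr_ins _ _ ?_ (ih fun d hd => hl d (by simp [hd]))
    intro d hd
    exact good_downs c d (hl c (by simp)) (List.mem_filter.1 hd).1

lemma good_layers (n : ℕ) (l : List ℕ) (hl : Good l) : Good (layers n l).flatten := by
  induction n generalizing l with
  | zero => simpa [layers] using hl
  | succ n ih =>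
    intro c hc
    simp only [layers, List.flatten_cons, List.mem_append] at hc
    rcases hc with h | h
    · exact hl c h
    · exact ih _ (good_nextLayer l hl) c h

lemma good_lit : Good lit := by
  rw [← interval_eq]
  apply good_layers
  intro c hc
  rw [List.mem_singleton] at hc
  exact ⟨pi7, by rw [hc, code_pi7], Relation.ReflTransGen.refl⟩

lemma bruhatDesPoly_eq : bruhatDesPoly pi7 =
    1 + C 43 * X + C 196 * X ^ 2 + C 168 * X ^ 3 + C 23 * X ^ 4 + X ^ 5 := by
  classical
  have h1 : bruhatDesPoly pi7 =
      ∑ σ ∈ Finset.univ.filter (fun σ => BruhatLE σ pi7), (X : Polynomial ℝ) ^ desC (code σ) := by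
    unfold bruhatDesPoly
    rw [Finset.sum_filter]
    refine Finset.sum_congr rfl fun σ _ => ?_
    rw [desCount_eq]
  have h2 : (Finset.univ.filter (fun σ => BruhatLE σ pi7)).image code = lit.toFinset := by
    ext c
    simp only [Finset.mem_image, Finset.mem_filter, Finset.mem_univ, true_and, List.mem_toFinset]
    constructor
    · rintro ⟨σ, hσ, rfl⟩
      exact mem_lit_of_le σ hσ
    · intro hc
      obtain ⟨σ, h, h'⟩ := good_lit c hc
      exact ⟨σ, h', h⟩
  have h3 : bruhatDesPoly pi7 = ∑ c ∈ lit.toFinset, (X : Polynomial ℝ) ^ desC c := by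
    rw [h1, ← h2, Finset.sum_image fun a _ b _ h => code_injective h]
  have h4 : bruhatDesPoly pi7 =
      ((lit.map desC).map fun k => (X : Polynomial ℝ) ^ k).sum := by
    rw [h3, List.sum_toFinset _ lit_nodup, List.map_map]
    rfl
  rw [h4, ((List.isPerm_iff.1 lit_des).map _).sum_eq]
  simp only [List.map_append, List.map_replicate, List.sum_append, List.sum_replicate,
    nsmul_eq_mul]
  simp only [map_ofNat]
  push_cast
  ring

/-! ### Part 3: the polynomial is not real-rooted -/

lemma no_five_reals (a b c d e : ℝ)
    (h : ∀ x : ℝ, 1 + 43 * x + 196 * x ^ 2 + 168 * x ^ 3 + 23 * x ^ 4 + x ^ 5 =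
      (x - a) * ((x - b) * ((x - c) * ((x - d) * (x - e))))) : False := by
  have h0 := h 0
  have h1 := h 1
  have h2 := h (-1)
  have h3 := h 2
  have h4 := h (-2)
  have e1 : a + b + c + d + e = -23 := by linarith
  have e2 : a*b + a*c + a*d + a*e + b*c + b*d + b*e + c*d + c*e + d*e = 168 := by linarith
  have e3 : a*b*c + a*b*d + a*b*e + a*c*d + a*c*e + a*d*e + b*c*d + b*c*e + b*d*e + c*d*e
      = -196 := by linarith
  have e4 : a*b*c*d + a*b*c*e + a*b*d*e + a*c*d*e + b*c*d*e = 43 := by linarith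
  have key : a^4 + b^4 + c^4 + d^4 + e^4 = (-23)^4 - 4 * (-23)^2 * 168 + 2 * 168^2
      + 4 * (-23) * (-196) - 4 * 43 := by
    rw [← e1, ← e2, ← e3, ← e4]
    ring
  have : 0 ≤ a^4 + b^4 + c^4 + d^4 + e^4 := by positivity
  norm_num at key
  linarith

lemma not_realRooted :
    ¬ RealRooted (1 + C 43 * X + C 196 * X ^ 2 + C 168 * X ^ 3 + C 23 * X ^ 4 + X ^ 5) := by
  rintro ⟨-, hz⟩
  set Q : Polynomial ℂ :=
    1 + C 43 * X + C 196 * X ^ 2 + C 168 * X ^ 3 + C 23 * X ^ 4 + X ^ 5 with hQ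
  have hdeg : Q.natDegree = 5 := by rw [hQ]; compute_degree!
  have hmon : Q.Monic := by rw [hQ]; monicity!
  have hsplit : Q.Splits := IsAlgClosed.splits Q
  have hcard : Q.roots.card = 5 := by rw [← hdeg]; exact hsplit.natDegree_eq_card_roots.symm
  have hprod : Q = (Q.roots.map (X - C ·)).prod := hsplit.eq_prod_roots_of_monic hmon
  have him : ∀ z ∈ Q.roots, ((z.re : ℝ) : ℂ) = z := by
    intro z hzr
    have h1 : Q.eval z = 0 := (Polynomial.mem_roots'.1 hzr).2
    have h2 : z.im = 0 := by
      apply hz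
      rw [hQ] at h1
      simp at h1
      simpa using h1
    apply Complex.ext <;> simp [h2]
  generalize Q.roots = R at hcard hprod him
  obtain ⟨a, R1, rfl, hcard1⟩ := Multiset.card_eq_succ_iff.1 hcard
  obtain ⟨b, R2, rfl, hcard2⟩ := Multiset.card_eq_succ_iff.1 hcard1
  obtain ⟨c, d, e, rfl⟩ := Multiset.card_eq_three.1 hcard2
  have ha := him a (by simp)
  have hb := him b (by simp)
  have hc := him c (by simp)
  have hd := him d (by simp)
  have he := him e (by simp)
  apply no_five_reals a.re b.re c.re d.re e.re
  intro x
  have h := congrArg (Polynomial.eval (x : ℂ)) hprod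
  rw [hQ] at h
  simp at h
  rw [← ha, ← hb, ← hc, ← hd, ← he] at h
  exact_mod_cast h

/-- For `π = [4, 6, 2, 1, 7, 3, 5] ∈ S_7`, the descent-generating polynomial of the lower
Bruhat interval is `1 + 43t + 196t² + 168t³ + 23t⁴ + t⁵`, and it is not real-rooted. -/
theorem bruhatDesPoly_pi7 :
    bruhatDesPoly pi7 =
      1 + C 43 * X + C 196 * X ^ 2 + C 168 * X ^ 3 + C 23 * X ^ 4 + X ^ 5 ∧
    ¬ RealRooted (1 + C 43 * X + C 196 * X ^ 2 + C 168 * X ^ 3 + C 23 * X ^ 4 + X ^ 5) := by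
  exact ⟨bruhatDesPoly_eq, not_realRooted⟩
end

section
/- For every permutation π ∈ S_6, the descent-generating polynomial of the lower Bruhat interval, Σ_{σ ≤_B π} t^{des(σ)}, is real-rooted. -/
open Polynomial

namespace S6

/-- Force a natural number before passing it to a continuation. -/
def strict (n : Nat) (k : Nat → Bool) : Bool :=
  Nat.rec (motive := fun _ => Bool) (k 0) (fun m _ => k (Nat.succ m)) n

/-- Six-ary search trees used to store the table of lower intervals. -/
inductive Tr : Type
  | nil : Tr
  | lf (v : Nat) : Tr
  | nd (t0 t1 t2 t3 t4 t5 : Tr) : Tr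

def child (t : Tr) (i : Nat) : Tr :=
  match t with
  | Tr.nd t0 t1 t2 t3 t4 t5 =>
    match i with
    | 0 => t0
    | 1 => t1
    | 2 => t2
    | 3 => t3
    | 4 => t4
    | _ => t5
  | _ => Tr.nil

def val (t : Tr) : Nat :=
  match t with
  | Tr.lf v => v
  | _ => 0

def get (T : Tr) (a b c d e : Nat) : Nat :=
  val (child (child (child (child (child T a) b) c) d) e)

/-- Update the `i`-th child (continuation passing style). -/
def updNd (t0 t1 t2 t3 t4 t5 : Tr) (i : Nat) (g : Tr → (Tr → Bool) → Bool)
    (k : Tr → Bool) : Bool :=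
  match i with
  | 0 => g t0 fun x => k (Tr.nd x t1 t2 t3 t4 t5)
  | 1 => g t1 fun x => k (Tr.nd t0 x t2 t3 t4 t5)
  | 2 => g t2 fun x => k (Tr.nd t0 t1 x t3 t4 t5)
  | 3 => g t3 fun x => k (Tr.nd t0 t1 t2 x t4 t5)
  | 4 => g t4 fun x => k (Tr.nd t0 t1 t2 t3 x t5)
  | _ => g t5 fun x => k (Tr.nd t0 t1 t2 t3 t4 x)

def upd (t : Tr) (i : Nat) (g : Tr → (Tr → Bool) → Bool) (k : Tr → Bool) : Bool :=
  match t with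
  | Tr.nd t0 t1 t2 t3 t4 t5 => updNd t0 t1 t2 t3 t4 t5 i g k
  | _ => updNd Tr.nil Tr.nil Tr.nil Tr.nil Tr.nil Tr.nil i g k

def ins (T : Tr) (a b c d e v : Nat) (k : Tr → Bool) : Bool :=
  upd T a (fun T k => upd T b (fun T k => upd T c (fun T k => upd T d (fun T k =>
    upd T e (fun _ k => k (Tr.lf v)) k) k) k) k) k

/-- Indicator of `x < y`. -/
def ind (x y : Nat) : Nat := cond (Nat.ble (Nat.succ x) y) 1 0

def lh1 (a b : Nat) : Nat := ind b a
def lh2 (a b c : Nat) : Nat := Nat.add (ind b a) (ind c a)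
def lh3 (a b c d : Nat) : Nat := Nat.add (lh2 a b c) (ind d a)
def lh4 (a b c d e : Nat) : Nat := Nat.add (lh3 a b c d) (ind e a)
def lh5 (a b c d e f : Nat) : Nat := Nat.add (lh4 a b c d e) (ind f a)

def invL (a b c d e f : Nat) : Nat :=
  Nat.add (lh5 a b c d e f) (Nat.add (lh4 b c d e f) (Nat.add (lh3 c d e f)
    (Nat.add (lh2 d e f) (lh1 e f))))

def desL (a b c d e f : Nat) : Nat :=
  Nat.add (ind b a) (Nat.add (ind c b) (Nat.add (ind d c) (Nat.add (ind e d) (ind f e))))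

def rkL (a b c d e f : Nat) : Nat :=
  Nat.add (Nat.mul 120 (lh5 a b c d e f)) (Nat.add (Nat.mul 24 (lh4 b c d e f))
    (Nat.add (Nat.mul 6 (lh3 c d e f)) (Nat.add (Nat.mul 2 (lh2 d e f)) (lh1 e f))))

def posL (a b c d e f : Nat) : Nat :=
  Nat.add (Nat.mul 60 (rkL a b c d e f)) (Nat.mul 10 (desL a b c d e f))

def tm (T : Tr) (n a b c d e f : Nat) : Nat :=
  cond (Nat.ble (Nat.succ (invL a b c d e f)) n) (get T a b c d e) 0

def rowN (T : Tr) (n a b c d e f : Nat) : Nat :=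
  Nat.lor (Nat.pow 2 (posL a b c d e f)) <|
  Nat.lor (tm T n b a c d e f) <|
  Nat.lor (tm T n c b a d e f) <|
  Nat.lor (tm T n d b c a e f) <|
  Nat.lor (tm T n e b c d a f) <|
  Nat.lor (tm T n f b c d e a) <|
  Nat.lor (tm T n a c b d e f) <|
  Nat.lor (tm T n a d c b e f) <|
  Nat.lor (tm T n a e c d b f) <|
  Nat.lor (tm T n a f c d e b) <|
  Nat.lor (tm T n a b d c e f) <|
  Nat.lor (tm T n a b e d c f) <|
  Nat.lor (tm T n a b f d e c) <|
  Nat.lor (tm T n a b c e d f) <|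
  Nat.lor (tm T n a b c f e d) <|
  tm T n a b c d f e

/-- Strict evaluation of the row at a permutation. -/
def row (T : Tr) (a b c d e f : Nat) (k : Nat → Bool) : Bool :=
  strict (invL a b c d e f) fun n => strict (rowN T n a b c d e f) k

def co (V d : Nat) : Nat := Nat.mod (Nat.div V (Nat.pow 1024 d)) 1024

/-- Even part of the homogenised polynomial at `-p/q`. -/
def evP (c0 c2 c4 p q : Nat) : Nat :=
  Nat.add (Nat.mul c0 (Nat.pow q 5)) (Nat.add
    (Nat.mul c2 (Nat.mul (Nat.pow p 2) (Nat.pow q 3)))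
    (Nat.mul c4 (Nat.mul (Nat.pow p 4) q)))

/-- Odd part of the homogenised polynomial at `-p/q`. -/
def odP (c1 c3 c5 p q : Nat) : Nat :=
  Nat.add (Nat.mul c1 (Nat.mul p (Nat.pow q 4))) (Nat.add
    (Nat.mul c3 (Nat.mul (Nat.pow p 3) (Nat.pow q 2)))
    (Nat.mul c5 (Nat.pow p 5)))

def sgE (c0 c1 c2 c3 c4 c5 p q : Nat) : Bool :=
  Nat.ble (Nat.succ (odP c1 c3 c5 p q)) (evP c0 c2 c4 p q)

def sgO (c0 c1 c2 c3 c4 c5 p q : Nat) : Bool :=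
  Nat.ble (Nat.succ (evP c0 c2 c4 p q)) (odP c1 c3 c5 p q)

/-- One if the signs at `-p/q` and `-p'/q'` are strictly opposite, zero otherwise. -/
def chg (c0 c1 c2 c3 c4 c5 p q p' q' : Nat) : Nat :=
  cond (cond (sgE c0 c1 c2 c3 c4 c5 p q) (sgO c0 c1 c2 c3 c4 c5 p' q')
    (cond (sgO c0 c1 c2 c3 c4 c5 p q) (sgE c0 c1 c2 c3 c4 c5 p' q') false)) 1 0

def chgs (c0 c1 c2 c3 c4 c5 : Nat) : Nat :=
  Nat.add (chg c0 c1 c2 c3 c4 c5 0 1 9 41) <|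
  Nat.add (chg c0 c1 c2 c3 c4 c5 9 41 57 172) <|
  Nat.add (chg c0 c1 c2 c3 c4 c5 57 172 8 9) <|
  Nat.add (chg c0 c1 c2 c3 c4 c5 8 9 21 16) <|
  Nat.add (chg c0 c1 c2 c3 c4 c5 21 16 89 17) <|
  chg c0 c1 c2 c3 c4 c5 89 17 63 1

/-- `c_d` vanishes if `d` exceeds the number `m` of sign changes. -/
def degOK (m d c : Nat) : Bool := cond (Nat.ble d m) true (Nat.beq c 0)

def rrC (c0 c1 c2 c3 c4 c5 : Nat) : Bool :=
  strict (chgs c0 c1 c2 c3 c4 c5) fun m =>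
    cond (Nat.ble 1 c0) (cond (degOK m 1 c1) (cond (degOK m 2 c2) (cond (degOK m 3 c3)
      (cond (degOK m 4 c4) (degOK m 5 c5) false) false) false) false) false

def eq6 (c0 c1 c2 c3 c4 c5 x0 x1 x2 x3 x4 x5 : Nat) : Bool :=
  cond (Nat.beq c0 x0) (cond (Nat.beq c1 x1) (cond (Nat.beq c2 x2) (cond (Nat.beq c3 x3)
    (cond (Nat.beq c4 x4) (Nat.beq c5 x5) false) false) false) false) false

/-- The six polynomials with a multiple root. -/
def special (c0 c1 c2 c3 c4 c5 : Nat) : Bool :=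
  cond (eq6 c0 c1 c2 c3 c4 c5 1 2 1 0 0 0) true <|
  cond (eq6 c0 c1 c2 c3 c4 c5 1 3 3 1 0 0) true <|
  cond (eq6 c0 c1 c2 c3 c4 c5 1 11 19 9 0 0) true <|
  cond (eq6 c0 c1 c2 c3 c4 c5 1 12 22 12 1 0) true <|
  cond (eq6 c0 c1 c2 c3 c4 c5 1 6 9 0 0 0) true <|
  eq6 c0 c1 c2 c3 c4 c5 1 8 18 8 1 0

def rrV (V : Nat) : Bool :=
  strict V fun V =>
  strict (co V 0) fun c0 => strict (co V 1) fun c1 => strict (co V 2) fun c2 =>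
  strict (co V 3) fun c3 => strict (co V 4) fun c4 => strict (co V 5) fun c5 =>
  cond (rrC c0 c1 c2 c3 c4 c5) true (special c0 c1 c2 c3 c4 c5)

/-- Consistency of the Lehmer code, which gives injectivity of the ranking. -/
def lehmerOK (a b c d e f : Nat) : Bool :=
  cond (Nat.beq a (lh5 a b c d e f))
    (cond (Nat.beq b (Nat.add (lh4 b c d e f) (ind a b)))
      (cond (Nat.beq c (Nat.add (lh3 c d e f) (Nat.add (ind a c) (ind b c))))
        (cond (Nat.beq d (Nat.add (lh2 d e f) (Nat.add (ind a d) (Nat.add (ind b d) (ind c d)))))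
          (cond (Nat.beq e (Nat.add (lh1 e f)
              (Nat.add (ind a e) (Nat.add (ind b e) (Nat.add (ind c e) (ind d e))))))
            (Nat.beq 15 (Nat.add a (Nat.add b (Nat.add c (Nat.add d (Nat.add e f))))))
            false) false) false) false) false

def chk (T : Tr) (a b c d e f : Nat) : Bool :=
  row T a b c d e f fun v =>
    cond (Nat.beq (get T a b c d e) v)
      (cond (rrV (Nat.mod v 1152921504606846975)) (lehmerOK a b c d e f) false) false

def allD (g : Nat → Bool) : Bool :=
  cond (g 0) (cond (g 1) (cond (g 2) (cond (g 3) (cond (g 4) (g 5) false) false) false) false) false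

/-- Run `x` unless two of the digits agree. -/
def ne1 (a b : Nat) (x : Bool) : Bool := cond (Nat.beq a b) true x

def checkAll (T : Tr) : Bool :=
  allD fun a => allD fun b => ne1 a b <|
  allD fun c => ne1 a c <| ne1 b c <|
  allD fun d => ne1 a d <| ne1 b d <| ne1 c d <|
  allD fun e => ne1 a e <| ne1 b e <| ne1 c e <| ne1 d e <|
  allD fun f => ne1 a f <| ne1 b f <| ne1 c f <| ne1 d f <| ne1 e f <|
  chk T a b c d e f

abbrev Act : Type := Tr → (Tr → Bool) → Bool

def loopD (g : Nat → Act) : Act := fun T k =>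
  g 0 T fun T => g 1 T fun T => g 2 T fun T => g 3 T fun T => g 4 T fun T => g 5 T k

def skp (a b : Nat) (x : Act) : Act := fun T k => cond (Nat.beq a b) (k T) (x T k)

def build : Act :=
  loopD fun a => loopD fun b => skp a b <|
  loopD fun c => skp a c <| skp b c <|
  loopD fun d => skp a d <| skp b d <| skp c d <|
  loopD fun e => skp a e <| skp b e <| skp c e <| skp d e <|
  loopD fun f => skp a f <| skp b f <| skp c f <| skp d f <| skp e f <|
  fun T k => row T a b c d e f fun v => ins T a b c d e v k

def main : Bool := build Tr.nil checkAll

set_option maxRecDepth 100000 in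
theorem main_true : main = true := by decide +kernel

theorem strict_eq (n : Nat) (k : Nat → Bool) : strict n k = k n := by
  cases n <;> rfl

theorem cond_false' {x y : Bool} : cond x y false = true ↔ x = true ∧ y = true := by
  cases x <;> simp

/-- An action that only calls its continuation. -/
def Good (g : Act) : Prop := ∀ T k, g T k = true → ∃ T', k T' = true

theorem good_updNd {t0 t1 t2 t3 t4 t5 : Tr} {i : Nat} {g : Act} (hg : Good g)
    {k : Tr → Bool} (h : updNd t0 t1 t2 t3 t4 t5 i g k = true) : ∃ T', k T' = true := by
  unfold updNd at h
  split at h <;> (obtain ⟨x, hx⟩ := hg _ _ h; exact ⟨_, hx⟩)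

theorem good_upd {i : Nat} {g : Act} (hg : Good g) : Good (fun T k => upd T i g k) := by
  intro T k h
  simp only at h
  unfold upd at h
  split at h <;> exact good_updNd hg h

theorem good_ins (a b c d e v : Nat) : Good (fun T k => ins T a b c d e v k) := by
  unfold ins
  exact good_upd (good_upd (good_upd (good_upd (good_upd fun T k h => ⟨_, h⟩))))

theorem good_loopD {g : Nat → Act} (hg : ∀ i, Good (g i)) : Good (loopD g) := by
  intro T k h
  unfold loopD at h
  obtain ⟨_, h⟩ := hg _ _ _ h
  obtain ⟨_, h⟩ := hg _ _ _ h
  obtain ⟨_, h⟩ := hg _ _ _ h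
  obtain ⟨_, h⟩ := hg _ _ _ h
  obtain ⟨_, h⟩ := hg _ _ _ h
  exact hg _ _ _ h

theorem good_skp {a b : Nat} {g : Act} (hg : Good g) : Good (skp a b g) := by
  intro T k h
  unfold skp at h
  cases hb : Nat.beq a b
  · rw [hb] at h; exact hg _ _ h
  · rw [hb] at h; exact ⟨_, h⟩

theorem good_build : Good build := by
  unfold build
  repeat' first
    | refine good_loopD fun _ => ?_
    | refine good_skp ?_
  intro T k h
  simp only [row, strict_eq] at h
  exact good_ins _ _ _ _ _ _ _ _ h

theorem exists_table : ∃ T, checkAll T = true := good_build _ _ main_true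

theorem allD_spec {g : Nat → Bool} (h : allD g = true) {i : Nat} (hi : i < 6) : g i = true := by
  simp only [allD, cond_false'] at h
  obtain ⟨h0, h1, h2, h3, h4, h5⟩ := h
  interval_cases i <;> assumption

theorem ne1_spec {a b : Nat} {x : Bool} (h : ne1 a b x = true) (hab : a ≠ b) : x = true := by
  have : Nat.beq a b = false := by
    cases hb : Nat.beq a b
    · rfl
    · exact absurd (Nat.eq_of_beq_eq_true hb) hab
  simpa [ne1, this] using h

theorem ind_eq (x y : Nat) : ind x y = if x < y then 1 else 0 := by
  unfold ind
  by_cases h : x < y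
  · rw [if_pos h, Nat.ble_eq_true_of_le h]; rfl
  · have : Nat.ble (Nat.succ x) y = false := by
      cases hb : Nat.ble (Nat.succ x) y
      · rfl
      · exact absurd (Nat.le_of_ble_eq_true hb) h
    rw [if_neg h, this]; rfl

/-- Value of a permutation as a natural number. -/
def vl (σ : Equiv.Perm (Fin 6)) (i : Fin 6) : Nat := (σ i : Nat)

def inv' (σ : Equiv.Perm (Fin 6)) : Nat :=
  invL (vl σ 0) (vl σ 1) (vl σ 2) (vl σ 3) (vl σ 4) (vl σ 5)

def pos' (σ : Equiv.Perm (Fin 6)) : Nat :=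
  posL (vl σ 0) (vl σ 1) (vl σ 2) (vl σ 3) (vl σ 4) (vl σ 5)

def des' (σ : Equiv.Perm (Fin 6)) : Nat :=
  desL (vl σ 0) (vl σ 1) (vl σ 2) (vl σ 3) (vl σ 4) (vl σ 5)

def rk' (σ : Equiv.Perm (Fin 6)) : Nat :=
  rkL (vl σ 0) (vl σ 1) (vl σ 2) (vl σ 3) (vl σ 4) (vl σ 5)

def R (T : Tr) (σ : Equiv.Perm (Fin 6)) : Nat :=
  get T (vl σ 0) (vl σ 1) (vl σ 2) (vl σ 3) (vl σ 4)

theorem vl_ne (σ : Equiv.Perm (Fin 6)) {i j : Fin 6} (h : i ≠ j) : vl σ i ≠ vl σ j := by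
  intro h'
  exact h (σ.injective (Fin.ext h'))

theorem vl_lt (σ : Equiv.Perm (Fin 6)) (i : Fin 6) : vl σ i < 6 := (σ i).2

theorem chk_spec {T : Tr} (hT : checkAll T = true) (σ : Equiv.Perm (Fin 6)) :
    chk T (vl σ 0) (vl σ 1) (vl σ 2) (vl σ 3) (vl σ 4) (vl σ 5) = true := by
  have n (i j : Fin 6) (h : i ≠ j) := vl_ne σ h
  have h := allD_spec hT (vl_lt σ 0)
  have h := ne1_spec (allD_spec h (vl_lt σ 1)) (n 0 1 (by decide))
  have h := ne1_spec (ne1_spec (allD_spec h (vl_lt σ 2)) (n 0 2 (by decide))) (n 1 2 (by decide))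
  have h := ne1_spec (ne1_spec (ne1_spec (allD_spec h (vl_lt σ 3))
    (n 0 3 (by decide))) (n 1 3 (by decide))) (n 2 3 (by decide))
  have h := ne1_spec (ne1_spec (ne1_spec (ne1_spec (allD_spec h (vl_lt σ 4))
    (n 0 4 (by decide))) (n 1 4 (by decide))) (n 2 4 (by decide))) (n 3 4 (by decide))
  exact ne1_spec (ne1_spec (ne1_spec (ne1_spec (ne1_spec (allD_spec h (vl_lt σ 5))
    (n 0 5 (by decide))) (n 1 5 (by decide))) (n 2 5 (by decide))) (n 3 5 (by decide)))
    (n 4 5 (by decide))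

theorem chk_parts {T : Tr} (hT : checkAll T = true) (σ : Equiv.Perm (Fin 6)) :
    R T σ = rowN T (inv' σ) (vl σ 0) (vl σ 1) (vl σ 2) (vl σ 3) (vl σ 4) (vl σ 5) ∧
    rrV (R T σ % 1152921504606846975) = true ∧
    lehmerOK (vl σ 0) (vl σ 1) (vl σ 2) (vl σ 3) (vl σ 4) (vl σ 5) = true := by
  have h := chk_spec hT σ
  simp only [chk, row, strict_eq, cond_false'] at h
  obtain ⟨h1, h2, h3⟩ := h
  have h1' := Nat.eq_of_beq_eq_true h1
  refine ⟨h1', ?_, h3⟩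
  have : R T σ = rowN T (inv' σ) (vl σ 0) (vl σ 1) (vl σ 2) (vl σ 3) (vl σ 4) (vl σ 5) := h1'
  rw [this]
  exact h2

theorem invCount_eq (σ : Equiv.Perm (Fin 6)) : invCount σ = inv' σ := by
  unfold invCount inv' invL
  simp only [lh1, lh2, lh3, lh4, lh5, ind_eq, vl, Nat.add_eq]
  rw [Finset.card_filter, Fintype.sum_prod_type]
  simp only [Fin.sum_univ_six, Fin.lt_def]
  simp
  ring

theorem desCount_eq (σ : Equiv.Perm (Fin 6)) : desCount σ = des' σ := by
  unfold desCount des' desL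
  simp only [ind_eq, Nat.add_eq]
  rw [Finset.card_filter, Fin.sum_univ_six]
  have h0 : (∃ h : ((0 : Fin 6) : ℕ) + 1 < 6, σ ⟨((0 : Fin 6) : ℕ) + 1, h⟩ < σ 0) ↔
      vl σ 1 < vl σ 0 := ⟨fun ⟨_, h⟩ => h, fun h => ⟨by decide, h⟩⟩
  have h1 : (∃ h : ((1 : Fin 6) : ℕ) + 1 < 6, σ ⟨((1 : Fin 6) : ℕ) + 1, h⟩ < σ 1) ↔
      vl σ 2 < vl σ 1 := ⟨fun ⟨_, h⟩ => h, fun h => ⟨by decide, h⟩⟩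
  have h2 : (∃ h : ((2 : Fin 6) : ℕ) + 1 < 6, σ ⟨((2 : Fin 6) : ℕ) + 1, h⟩ < σ 2) ↔
      vl σ 3 < vl σ 2 := ⟨fun ⟨_, h⟩ => h, fun h => ⟨by decide, h⟩⟩
  have h3 : (∃ h : ((3 : Fin 6) : ℕ) + 1 < 6, σ ⟨((3 : Fin 6) : ℕ) + 1, h⟩ < σ 3) ↔
      vl σ 4 < vl σ 3 := ⟨fun ⟨_, h⟩ => h, fun h => ⟨by decide, h⟩⟩
  have h4 : (∃ h : ((4 : Fin 6) : ℕ) + 1 < 6, σ ⟨((4 : Fin 6) : ℕ) + 1, h⟩ < σ 4) ↔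
      vl σ 5 < vl σ 4 := ⟨fun ⟨_, h⟩ => h, fun h => ⟨by decide, h⟩⟩
  have h5 : ¬ (∃ h : ((5 : Fin 6) : ℕ) + 1 < 6, σ ⟨((5 : Fin 6) : ℕ) + 1, h⟩ < σ 5) :=
    fun ⟨h, _⟩ => absurd h (by decide)
  rw [if_congr h0 rfl rfl, if_congr h1 rfl rfl, if_congr h2 rfl rfl, if_congr h3 rfl rfl,
    if_congr h4 rfl rfl, if_neg h5]
  omega

theorem lh_bounds (x y : Nat) : ind x y ≤ 1 := by
  rw [ind_eq]; split <;> omega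

theorem des'_le (σ : Equiv.Perm (Fin 6)) : des' σ ≤ 5 := by
  unfold des' desL
  simp only [Nat.add_eq]
  have := lh_bounds (vl σ 1) (vl σ 0)
  have := lh_bounds (vl σ 2) (vl σ 1)
  have := lh_bounds (vl σ 3) (vl σ 2)
  have := lh_bounds (vl σ 4) (vl σ 3)
  have := lh_bounds (vl σ 5) (vl σ 4)
  omega

theorem pos'_eq (σ : Equiv.Perm (Fin 6)) : pos' σ = 60 * rk' σ + 10 * des' σ := rfl

theorem lh_le (a b c d e f : Nat) : lh1 a b ≤ 1 ∧ lh2 a b c ≤ 2 ∧ lh3 a b c d ≤ 3 ∧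
    lh4 a b c d e ≤ 4 ∧ lh5 a b c d e f ≤ 5 := by
  simp only [lh1, lh2, lh3, lh4, lh5, Nat.add_eq]
  have := lh_bounds b a
  have := lh_bounds c a
  have := lh_bounds d a
  have := lh_bounds e a
  have := lh_bounds f a
  omega

theorem ind_diff {a e e' : Nat} (h : e < e') (hn : a ≠ e) :
    (ind a e' = ind a e + 1 ∧ e < a ∧ a < e') ∨ (ind a e' = ind a e ∧ (a < e ∨ e' ≤ a)) := by
  simp only [ind_eq]
  split_ifs <;> omega

theorem lehmer_aux {a b c d e e' L : Nat} (h : e < e') (ha : a ≠ e) (hb : b ≠ e) (hc : c ≠ e)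
    (hd : d ≠ e) (hab : a ≠ b) (hac : a ≠ c) (had : a ≠ d) (hbc : b ≠ c) (hbd : b ≠ d)
    (hcd : c ≠ d) (h1 : e = L + (ind a e + (ind b e + (ind c e + ind d e))))
    (h2 : e' = L + (ind a e' + (ind b e' + (ind c e' + ind d e')))) : False := by
  rcases ind_diff h ha with ⟨xa, _, _⟩ | ⟨xa, ya⟩ <;>
  rcases ind_diff h hb with ⟨xb, _, _⟩ | ⟨xb, yb⟩ <;>
  rcases ind_diff h hc with ⟨xc, _, _⟩ | ⟨xc, yc⟩ <;>
  rcases ind_diff h hd with ⟨xd, _, _⟩ | ⟨xd, yd⟩ <;>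
  rw [xa, xb, xc, xd] at h2 <;> clear xa xb xc xd <;> omega

theorem rk'_inj {T : Tr} (hT : checkAll T = true) {σ τ : Equiv.Perm (Fin 6)}
    (h : rk' σ = rk' τ) : σ = τ := by
  have h1 := (chk_parts hT σ).2.2
  have h2 := (chk_parts hT τ).2.2
  have n (i j : Fin 6) (h : i ≠ j) := vl_ne σ h
  have m (i j : Fin 6) (h : i ≠ j) := vl_ne τ h
  unfold rk' rkL at h
  simp only [Nat.add_eq, Nat.mul_eq] at h
  simp only [lehmerOK, cond_false', Nat.beq_eq, Nat.add_eq] at h1 h2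
  have b1 := lh_le (vl σ 0) (vl σ 1) (vl σ 2) (vl σ 3) (vl σ 4) (vl σ 5)
  have b2 := lh_le (vl σ 1) (vl σ 2) (vl σ 3) (vl σ 4) (vl σ 5) 0
  have b3 := lh_le (vl σ 2) (vl σ 3) (vl σ 4) (vl σ 5) 0 0
  have b4 := lh_le (vl σ 3) (vl σ 4) (vl σ 5) 0 0 0
  have b5 := lh_le (vl σ 4) (vl σ 5) 0 0 0 0
  have d1 := lh_le (vl τ 0) (vl τ 1) (vl τ 2) (vl τ 3) (vl τ 4) (vl τ 5)
  have d2 := lh_le (vl τ 1) (vl τ 2) (vl τ 3) (vl τ 4) (vl τ 5) 0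
  have d3 := lh_le (vl τ 2) (vl τ 3) (vl τ 4) (vl τ 5) 0 0
  have d4 := lh_le (vl τ 3) (vl τ 4) (vl τ 5) 0 0 0
  have d5 := lh_le (vl τ 4) (vl τ 5) 0 0 0 0
  replace b1 := b1.2.2.2.2
  replace b2 := b2.2.2.2.1
  replace b3 := b3.2.2.1
  replace b4 := b4.2.1
  replace b5 := b5.1
  replace d1 := d1.2.2.2.2
  replace d2 := d2.2.2.2.1
  replace d3 := d3.2.2.1
  replace d4 := d4.2.1
  replace d5 := d5.1
  obtain ⟨p0, p1, p2, p3, p4, p5⟩ := h1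
  obtain ⟨q0, q1, q2, q3, q4, q5⟩ := h2
  have e0 : vl σ 0 = vl τ 0 := by omega
  have e1 : vl σ 1 = vl τ 1 := by
    have := n 0 1 (by decide); have := m 0 1 (by decide)
    have hl : lh4 (vl σ 1) (vl σ 2) (vl σ 3) (vl σ 4) (vl σ 5) =
      lh4 (vl τ 1) (vl τ 2) (vl τ 3) (vl τ 4) (vl τ 5) := by omega
    rw [hl, e0, ind_eq] at p1; rw [ind_eq] at q1
    split at p1 <;> split at q1 <;> omega
  have e2 : vl σ 2 = vl τ 2 := by
    have := n 0 2 (by decide); have := m 0 2 (by decide)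
    have := n 1 2 (by decide); have := m 1 2 (by decide)
    have := m 0 1 (by decide)
    have hl : lh3 (vl σ 2) (vl σ 3) (vl σ 4) (vl σ 5) =
      lh3 (vl τ 2) (vl τ 3) (vl τ 4) (vl τ 5) := by omega
    rw [hl, e0, e1] at p2; simp only [ind_eq] at p2 q2
    clear p0 p1 p3 p4 q0 q1 q3 q4
    clear h p5 q5 b1 b2 b3 b4 b5 d1 d2 d3 d4 d5 hl
    split_ifs at p2 q2 <;> omega
  have e3 : vl σ 3 = vl τ 3 := by
    have := n 0 3 (by decide); have := m 0 3 (by decide)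
    have := n 1 3 (by decide); have := m 1 3 (by decide)
    have := n 2 3 (by decide); have := m 2 3 (by decide)
    have := m 0 1 (by decide); have := m 0 2 (by decide); have := m 1 2 (by decide)
    have hl : lh2 (vl σ 3) (vl σ 4) (vl σ 5) =
      lh2 (vl τ 3) (vl τ 4) (vl τ 5) := by omega
    rw [hl, e0, e1, e2] at p3; simp only [ind_eq] at p3 q3
    clear p0 p1 p2 p4 q0 q1 q2 q4
    clear h p5 q5 b1 b2 b3 b4 b5 d1 d2 d3 d4 d5 hl
    split_ifs at p3 q3 <;> omega
  have e4 : vl σ 4 = vl τ 4 := by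
    have hl : lh1 (vl σ 4) (vl σ 5) = lh1 (vl τ 4) (vl τ 5) := by omega
    rw [hl, e0, e1, e2, e3] at p4
    have n0 := n 0 4 (by decide)
    have n1 := n 1 4 (by decide)
    have n2 := n 2 4 (by decide)
    have n3 := n 3 4 (by decide)
    rw [e0] at n0
    rw [e1] at n1
    rw [e2] at n2
    rw [e3] at n3
    rcases lt_trichotomy (vl σ 4) (vl τ 4) with hlt | heq | hlt
    · exact (lehmer_aux hlt n0 n1 n2 n3 (m 0 1 (by decide)) (m 0 2 (by decide))
        (m 0 3 (by decide)) (m 1 2 (by decide)) (m 1 3 (by decide)) (m 2 3 (by decide)) p4 q4).elim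
    · exact heq
    · exact (lehmer_aux hlt (m 0 4 (by decide)) (m 1 4 (by decide)) (m 2 4 (by decide))
        (m 3 4 (by decide)) (m 0 1 (by decide)) (m 0 2 (by decide)) (m 0 3 (by decide))
        (m 1 2 (by decide)) (m 1 3 (by decide)) (m 2 3 (by decide)) q4 p4).elim
  have e5 : vl σ 5 = vl τ 5 := by omega
  ext i
  change vl σ i = vl τ i
  fin_cases i <;> assumption

theorem pos'_inj {T : Tr} (hT : checkAll T = true) : Function.Injective pos' := by
  intro σ τ h
  rw [pos'_eq, pos'_eq] at h
  have := des'_le σ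
  have := des'_le τ
  exact rk'_inj hT (by omega)

/-- The fifteen pairs of positions. -/
def prs : List (Fin 6 × Fin 6) :=
  [(0, 1), (0, 2), (0, 3), (0, 4), (0, 5), (1, 2), (1, 3), (1, 4), (1, 5), (2, 3), (2, 4), (2, 5),
    (3, 4), (3, 5), (4, 5)]

theorem prs_complete : ∀ i j : Fin 6, i ≠ j → (i, j) ∈ prs ∨ (j, i) ∈ prs := by decide

theorem prs_ne : ∀ p ∈ prs, p.1 ≠ p.2 := by decide

/-- Contribution of a neighbour. -/
def nb (T : Tr) (n : Nat) (σ : Equiv.Perm (Fin 6)) : Nat := if inv' σ < n then R T σ else 0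

theorem tm_eq (T : Tr) (n : Nat) (σ : Equiv.Perm (Fin 6)) {a b c d e f : Nat}
    (h0 : vl σ 0 = a) (h1 : vl σ 1 = b) (h2 : vl σ 2 = c) (h3 : vl σ 3 = d)
    (h4 : vl σ 4 = e) (h5 : vl σ 5 = f) : tm T n a b c d e f = nb T n σ := by
  subst h0 h1 h2 h3 h4 h5
  unfold nb tm
  change cond (Nat.ble (Nat.succ (inv' σ)) n) (R T σ) 0 = _
  by_cases h : inv' σ < n
  · rw [if_pos h, Nat.ble_eq_true_of_le h]; rfl
  · have : Nat.ble (Nat.succ (inv' σ)) n = false := by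
      cases hb : Nat.ble (Nat.succ (inv' σ)) n
      · rfl
      · exact absurd (Nat.le_of_ble_eq_true hb) h
    rw [if_neg h, this]; rfl

theorem vl_swap (π : Equiv.Perm (Fin 6)) (i j k l : Fin 6) (h : Equiv.swap i j k = l) :
    vl (π * Equiv.swap i j) k = vl π l := by
  subst h; rfl

theorem R_eq {T : Tr} (hT : checkAll T = true) (π : Equiv.Perm (Fin 6)) :
    R T π = 2 ^ pos' π |||
      (prs.map fun p => nb T (inv' π) (π * Equiv.swap p.1 p.2)).foldr (· ||| ·) 0 := by
  rw [(chk_parts hT π).1]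
  simp only [prs, List.map_cons, List.map_nil, List.foldr_cons, List.foldr_nil, Nat.or_zero]
  unfold rowN
  rw [tm_eq T _ (π * Equiv.swap 0 1) (a := vl π 1),
    tm_eq T _ (π * Equiv.swap 0 2) (a := vl π 2),
    tm_eq T _ (π * Equiv.swap 0 3) (a := vl π 3),
    tm_eq T _ (π * Equiv.swap 0 4) (a := vl π 4),
    tm_eq T _ (π * Equiv.swap 0 5) (a := vl π 5),
    tm_eq T _ (π * Equiv.swap 1 2) (b := vl π 2),
    tm_eq T _ (π * Equiv.swap 1 3) (b := vl π 3),
    tm_eq T _ (π * Equiv.swap 1 4) (b := vl π 4),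
    tm_eq T _ (π * Equiv.swap 1 5) (b := vl π 5),
    tm_eq T _ (π * Equiv.swap 2 3) (c := vl π 3),
    tm_eq T _ (π * Equiv.swap 2 4) (c := vl π 4),
    tm_eq T _ (π * Equiv.swap 2 5) (c := vl π 5),
    tm_eq T _ (π * Equiv.swap 3 4) (d := vl π 4),
    tm_eq T _ (π * Equiv.swap 3 5) (d := vl π 5),
    tm_eq T _ (π * Equiv.swap 4 5) (e := vl π 5)]
  · rfl
  all_goals exact vl_swap _ _ _ _ _ (by decide)

theorem testBit_foldr (l : List Nat) (m : Nat) :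
    (l.foldr (· ||| ·) 0).testBit m = true ↔ ∃ x ∈ l, x.testBit m = true := by
  induction l with
  | nil => simp
  | cons a l ih => simp [Nat.testBit_or, ih]

theorem testBit_R {T : Tr} (hT : checkAll T = true) (π : Equiv.Perm (Fin 6)) (m : Nat) :
    (R T π).testBit m = true ↔ pos' π = m ∨
      ∃ τ, BruhatStep τ π ∧ (R T τ).testBit m = true := by
  rw [R_eq hT, Nat.testBit_or, Bool.or_eq_true, testBit_foldr, Nat.testBit_two_pow,
    decide_eq_true_iff]
  refine or_congr Iff.rfl ⟨?_, ?_⟩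
  · rintro ⟨x, hx, hb⟩
    obtain ⟨p, hp, rfl⟩ := List.mem_map.1 hx
    unfold nb at hb
    split at hb
    · rename_i hlt
      refine ⟨π * Equiv.swap p.1 p.2, ⟨⟨p.1, p.2, prs_ne p hp, ?_⟩, ?_⟩, hb⟩
      · rw [mul_assoc, Equiv.swap_mul_self, mul_one]
      · rwa [invCount_eq, invCount_eq]
    · simp at hb
  · rintro ⟨τ, ⟨⟨i, j, hij, h⟩, hlt⟩, hb⟩
    have h' : τ = π * Equiv.swap i j := by
      rw [h, mul_assoc, Equiv.swap_mul_self, mul_one]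
    rw [invCount_eq, invCount_eq] at hlt
    refine ⟨R T τ, List.mem_map.2 ?_, hb⟩
    rcases prs_complete i j hij with hp | hp
    · refine ⟨_, hp, ?_⟩
      simp only [← h', nb, if_pos hlt]
    · refine ⟨_, hp, ?_⟩
      simp only [Equiv.swap_comm j i, ← h', nb, if_pos hlt]

theorem testBit_iff {T : Tr} (hT : checkAll T = true) (m : Nat) : ∀ (n : Nat)
    (π : Equiv.Perm (Fin 6)), invCount π = n →
    ((R T π).testBit m = true ↔ ∃ σ, BruhatLE σ π ∧ pos' σ = m) := by
  intro n
  induction n using Nat.strong_induction_on with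
  | _ n ih =>
    intro π hπ
    rw [testBit_R hT]
    constructor
    · rintro (h | ⟨τ, hs, hb⟩)
      · exact ⟨π, Relation.ReflTransGen.refl, h⟩
      · obtain ⟨σ, h1, h2⟩ := (ih _ (hπ ▸ hs.2) τ rfl).1 hb
        exact ⟨σ, Relation.ReflTransGen.tail h1 hs, h2⟩
    · rintro ⟨σ, h1, h2⟩
      rcases Relation.ReflTransGen.cases_tail h1 with h | ⟨τ, h3, hs⟩
      · exact Or.inl (h ▸ h2)
      · exact Or.inr ⟨τ, hs, (ih _ (hπ ▸ hs.2) τ rfl).2 ⟨σ, h3, h2⟩⟩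

open scoped Classical in
/-- The lower interval. -/
noncomputable def low (π : Equiv.Perm (Fin 6)) : Finset (Equiv.Perm (Fin 6)) :=
  Finset.univ.filter fun σ => BruhatLE σ π

theorem R_sum {T : Tr} (hT : checkAll T = true) (π : Equiv.Perm (Fin 6)) :
    R T π = ∑ σ ∈ low π, 2 ^ pos' σ := by
  classical
  have h1 : (R T π).bitIndices.toFinset = (low π).image pos' := by
    ext m
    simp only [List.mem_toFinset, Nat.mem_bitIndices, Finset.mem_image, low, Finset.mem_filter,
      Finset.mem_univ, true_and]
    exact testBit_iff hT m _ π rfl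
  rw [← Finset.sum_toFinset_bitIndices_two_pow (R T π), h1,
    Finset.sum_image fun a _ b _ h => pos'_inj hT h]

/-- Number of elements of the lower interval with `d` descents. -/
noncomputable def cnt (π : Equiv.Perm (Fin 6)) (d : Nat) : Nat :=
  ((low π).filter fun σ => des' σ = d).card

theorem cnt_lt (π : Equiv.Perm (Fin 6)) (d : Nat) : cnt π d < 1024 := by
  have : cnt π d ≤ (Finset.univ : Finset (Equiv.Perm (Fin 6))).card :=
    Finset.card_le_card (Finset.subset_univ _)
  rw [Finset.card_univ, Fintype.card_perm, Fintype.card_fin] at this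
  have h6 : Nat.factorial 6 = 720 := rfl
  omega

theorem sum_fib {M : Type*} [Semiring M] (π : Equiv.Perm (Fin 6)) (f : Nat → M) :
    ∑ σ ∈ low π, f (des' σ) = cnt π 0 * f 0 + cnt π 1 * f 1 + cnt π 2 * f 2 + cnt π 3 * f 3
      + cnt π 4 * f 4 + cnt π 5 * f 5 := by
  have h : ∀ σ ∈ low π, des' σ ∈ Finset.range 6 := fun σ _ => by
    rw [Finset.mem_range]; have := des'_le σ; omega
  rw [← Finset.sum_fiberwise_of_maps_to h]
  have : ∀ d ∈ Finset.range 6, ∑ σ ∈ (low π).filter (fun σ => des' σ = d), f (des' σ) =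
      cnt π d * f d := by
    intro d _
    rw [Finset.sum_congr rfl (g := fun _ => f d), Finset.sum_const, nsmul_eq_mul]; · rfl
    intro σ hσ
    rw [(Finset.mem_filter.1 hσ).2]
  rw [Finset.sum_congr rfl this]
  simp [Finset.sum_range_succ]

theorem pow_mod (r d : Nat) :
    2 ^ (60 * r + 10 * d) ≡ 1024 ^ d [MOD 1152921504606846975] := by
  have h : (2 : ℕ) ^ (60 * r + 10 * d) = (2 ^ 60) ^ r * 1024 ^ d := by
    rw [pow_add, pow_mul, pow_mul]; norm_num
  have h60 : (2 : ℕ) ^ 60 ≡ 1 [MOD 1152921504606846975] := by decide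
  rw [h]
  simpa using (h60.pow r).mul_right (1024 ^ d)

theorem modEq_sum {ι : Type*} (s : Finset ι) (f g : ι → Nat) (n : Nat)
    (h : ∀ i ∈ s, f i ≡ g i [MOD n]) : ∑ i ∈ s, f i ≡ ∑ i ∈ s, g i [MOD n] := by
  classical
  induction s using Finset.induction_on with
  | empty => simp [Nat.ModEq.refl]
  | insert a s ha ih =>
    rw [Finset.sum_insert ha, Finset.sum_insert ha]
    exact (h _ (Finset.mem_insert_self _ _)).add (ih fun i hi => h i (Finset.mem_insert_of_mem hi))

theorem R_mod {T : Tr} (hT : checkAll T = true) (π : Equiv.Perm (Fin 6)) :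
    R T π % 1152921504606846975 = cnt π 0 + cnt π 1 * 1024 + cnt π 2 * 1048576 +
      cnt π 3 * 1073741824 + cnt π 4 * 1099511627776 + cnt π 5 * 1125899906842624 := by
  have h1 : R T π ≡ ∑ σ ∈ low π, 1024 ^ des' σ [MOD 1152921504606846975] := by
    rw [R_sum hT]
    exact modEq_sum _ _ _ _ fun σ _ => by rw [pos'_eq]; exact pow_mod _ _
  rw [sum_fib π (fun d => 1024 ^ d)] at h1
  simp only [Nat.cast_id] at h1
  norm_num at h1
  rw [h1]
  have hfact : (720 : ℕ) = Nat.factorial 6 := rfl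
  have hc : cnt π 5 ≤ 720 := by
    have : cnt π 5 ≤ (Finset.univ : Finset (Equiv.Perm (Fin 6))).card :=
      Finset.card_le_card (Finset.subset_univ _)
    rw [Finset.card_univ, Fintype.card_perm, Fintype.card_fin] at this
    omega
  have := cnt_lt π 0
  have := cnt_lt π 1
  have := cnt_lt π 2
  have := cnt_lt π 3
  have := cnt_lt π 4
  apply Nat.mod_eq_of_lt
  omega

/-- The polynomial with given natural coefficients. -/
noncomputable def pol (c0 c1 c2 c3 c4 c5 : Nat) : ℝ[X] :=
  (c0 : ℝ[X]) + (c1 : ℝ[X]) * X + (c2 : ℝ[X]) * X ^ 2 + (c3 : ℝ[X]) * X ^ 3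
    + (c4 : ℝ[X]) * X ^ 4 + (c5 : ℝ[X]) * X ^ 5

theorem poly_eq (π : Equiv.Perm (Fin 6)) : bruhatDesPoly π =
    pol (cnt π 0) (cnt π 1) (cnt π 2) (cnt π 3) (cnt π 4) (cnt π 5) := by
  classical
  have h := sum_fib π (fun d => (X : ℝ[X]) ^ d)
  simp only [pow_zero, mul_one, pow_one] at h
  rw [pol, ← h, bruhatDesPoly, low, Finset.sum_filter]
  refine Finset.sum_congr rfl fun σ _ => ?_
  rw [desCount_eq]

theorem rr_cnt (π : Equiv.Perm (Fin 6)) :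
    (rrC (cnt π 0) (cnt π 1) (cnt π 2) (cnt π 3) (cnt π 4) (cnt π 5) = true ∨
    special (cnt π 0) (cnt π 1) (cnt π 2) (cnt π 3) (cnt π 4) (cnt π 5) = true) := by
  obtain ⟨T, hT⟩ := exists_table
  have h := (chk_parts hT π).2.1
  rw [R_mod hT] at h
  have := cnt_lt π 0
  have := cnt_lt π 1
  have := cnt_lt π 2
  have := cnt_lt π 3
  have := cnt_lt π 4
  have := cnt_lt π 5
  generalize cnt π 0 = c0 at *
  generalize cnt π 1 = c1 at *
  generalize cnt π 2 = c2 at *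
  generalize cnt π 3 = c3 at *
  generalize cnt π 4 = c4 at *
  generalize cnt π 5 = c5 at *
  simp only [rrV, strict_eq] at h
  generalize hV : c0 + c1 * 1024 + c2 * 1048576 + c3 * 1073741824 + c4 * 1099511627776 +
    c5 * 1125899906842624 = V at h
  have e0 : co V 0 = c0 := by
    change V / 1 % 1024 = c0; omega
  have e1 : co V 1 = c1 := by
    change V / 1024 % 1024 = c1; omega
  have e2 : co V 2 = c2 := by
    change V / 1048576 % 1024 = c2; omega
  have e3 : co V 3 = c3 := by
    change V / 1073741824 % 1024 = c3; omega
  have e4 : co V 4 = c4 := by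
    change V / 1099511627776 % 1024 = c4; omega
  have e5 : co V 5 = c5 := by
    change V / 1125899906842624 % 1024 = c5; omega
  rw [e0, e1, e2, e3, e4, e5] at h
  cases hr : rrC c0 c1 c2 c3 c4 c5
  · rw [hr] at h; exact Or.inr h
  · exact Or.inl rfl

theorem pol_eval (c0 c1 c2 c3 c4 c5 : Nat) (x : ℝ) : (pol c0 c1 c2 c3 c4 c5).eval x =
    c0 + c1 * x + c2 * x ^ 2 + c3 * x ^ 3 + c4 * x ^ 4 + c5 * x ^ 5 := by
  simp [pol]

theorem pol_aeval (c0 c1 c2 c3 c4 c5 : Nat) (x : ℂ) : aeval x (pol c0 c1 c2 c3 c4 c5) =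
    c0 + c1 * x + c2 * x ^ 2 + c3 * x ^ 3 + c4 * x ^ 4 + c5 * x ^ 5 := by
  simp [pol]

theorem pol_ne {c0 c1 c2 c3 c4 c5 : Nat} (h : 1 ≤ c0) : pol c0 c1 c2 c3 c4 c5 ≠ 0 := by
  intro h0
  have := pol_eval c0 c1 c2 c3 c4 c5 0
  rw [h0] at this
  have h1 : (c0 : ℝ) = 0 := by simpa using this.symm
  have h2 : c0 = 0 := by exact_mod_cast h1
  omega

/-- A nonzero polynomial with at least as many distinct real roots as its degree is real-rooted. -/
theorem realRooted_of_card {p : ℝ[X]} (hp : p ≠ 0) (s : Finset ℝ) (hs : ∀ x ∈ s, p.eval x = 0)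
    (hc : p.natDegree ≤ s.card) : RealRooted p := by
  refine ⟨hp, fun z hz => ?_⟩
  have h1 : s.val ≤ p.roots := by
    rw [Multiset.le_iff_subset s.nodup]
    intro x hx
    exact (mem_roots hp).2 (hs x hx)
  have h2 : s.card ≤ p.roots.card := Multiset.card_le_card h1
  have h3 : p.Splits := splits_iff_card_roots.2 (le_antisymm (card_roots' p) (hc.trans h2))
  have h4 : (p.map (algebraMap ℝ ℂ)).roots = p.roots.map (algebraMap ℝ ℂ) := h3.roots_map _
  have h5 : z ∈ (p.map (algebraMap ℝ ℂ)).roots := by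
    rw [mem_roots (by rwa [Ne, Polynomial.map_eq_zero]), IsRoot, eval_map_algebraMap]
    exact hz
  rw [h4, Multiset.mem_map] at h5
  obtain ⟨r, _, rfl⟩ := h5
  simp

theorem eval_hom (c0 c1 c2 c3 c4 c5 p q : Nat) (hq : 0 < q) :
    (pol c0 c1 c2 c3 c4 c5).eval (-((p : ℝ) / q)) * (q : ℝ) ^ 5 =
      (evP c0 c2 c4 p q : ℝ) - (odP c1 c3 c5 p q : ℝ) := by
  have hq' : (q : ℝ) ≠ 0 := by positivity
  rw [pol_eval]
  simp only [evP, odP, Nat.add_eq, Nat.mul_eq, Nat.pow_eq]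
  push_cast
  field_simp
  ring

theorem sgE_spec {c0 c1 c2 c3 c4 c5 p q : Nat} (hq : 0 < q)
    (h : sgE c0 c1 c2 c3 c4 c5 p q = true) :
    0 < (pol c0 c1 c2 c3 c4 c5).eval (-((p : ℝ) / q)) := by
  have h1 : odP c1 c3 c5 p q < evP c0 c2 c4 p q := Nat.le_of_ble_eq_true h
  have h2 : (odP c1 c3 c5 p q : ℝ) < evP c0 c2 c4 p q := by exact_mod_cast h1
  have h3 := eval_hom c0 c1 c2 c3 c4 c5 p q hq
  have h4 : (0 : ℝ) < (q : ℝ) ^ 5 := by positivity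
  by_contra hn
  nlinarith [mul_nonneg (neg_nonneg.2 (not_lt.1 hn)) h4.le]

theorem sgO_spec {c0 c1 c2 c3 c4 c5 p q : Nat} (hq : 0 < q)
    (h : sgO c0 c1 c2 c3 c4 c5 p q = true) :
    (pol c0 c1 c2 c3 c4 c5).eval (-((p : ℝ) / q)) < 0 := by
  have h1 : evP c0 c2 c4 p q < odP c1 c3 c5 p q := Nat.le_of_ble_eq_true h
  have h2 : (evP c0 c2 c4 p q : ℝ) < odP c1 c3 c5 p q := by exact_mod_cast h1
  have h3 := eval_hom c0 c1 c2 c3 c4 c5 p q hq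
  have h4 : (0 : ℝ) < (q : ℝ) ^ 5 := by positivity
  by_contra hn
  nlinarith [mul_nonneg (not_lt.1 hn) h4.le]

/-- A sign change yields a set of roots in the interval with as many elements as counted. -/
theorem chg_spec {c0 c1 c2 c3 c4 c5 p q p' q' : Nat} (hq : 0 < q) (hq' : 0 < q')
    (hlt : (p : ℝ) / q < (p' : ℝ) / q') :
    ∃ s : Finset ℝ, s.card = chg c0 c1 c2 c3 c4 c5 p q p' q' ∧
      ∀ x ∈ s, (pol c0 c1 c2 c3 c4 c5).eval x = 0 ∧
        x ∈ Set.Ioo (-((p' : ℝ) / q')) (-((p : ℝ) / q)) := by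
  have hle : -((p' : ℝ) / q') ≤ -((p : ℝ) / q) := by linarith
  have hcont : ContinuousOn (fun x => (pol c0 c1 c2 c3 c4 c5).eval x)
      (Set.Icc (-((p' : ℝ) / q')) (-((p : ℝ) / q))) :=
    (pol c0 c1 c2 c3 c4 c5).continuous.continuousOn
  have key : chg c0 c1 c2 c3 c4 c5 p q p' q' = 0 ∨ (chg c0 c1 c2 c3 c4 c5 p q p' q' = 1 ∧
      ∃ x ∈ Set.Ioo (-((p' : ℝ) / q')) (-((p : ℝ) / q)),
        (pol c0 c1 c2 c3 c4 c5).eval x = 0) := by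
    unfold chg
    cases h1 : sgE c0 c1 c2 c3 c4 c5 p q
    · cases h2 : sgO c0 c1 c2 c3 c4 c5 p q
      · left; rfl
      · cases h3 : sgE c0 c1 c2 c3 c4 c5 p' q'
        · left; rfl
        · right
          refine ⟨rfl, ?_⟩
          obtain ⟨x, hx, hx0⟩ := intermediate_value_Ioo' hle hcont
            ⟨sgO_spec hq h2, sgE_spec hq' h3⟩
          exact ⟨x, hx, hx0⟩
    · cases h3 : sgO c0 c1 c2 c3 c4 c5 p' q'
      · left; rfl
      · right
        refine ⟨rfl, ?_⟩
        obtain ⟨x, hx, hx0⟩ := intermediate_value_Ioo hle hcont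
          ⟨sgO_spec hq' h3, sgE_spec hq h1⟩
        exact ⟨x, hx, hx0⟩
  rcases key with h | ⟨h, x, hx, hx0⟩
  · exact ⟨∅, by rw [h]; rfl, by simp⟩
  · refine ⟨{x}, by rw [h]; rfl, fun y hy => ?_⟩
    rw [Finset.mem_singleton.1 hy]
    exact ⟨hx0, hx⟩

/-- Glue root sets of adjacent intervals. -/
theorem glue {f : ℝ → ℝ} {a b c : ℝ} {m n : Nat} (hab : a < b) (hbc : b < c)
    (h1 : ∃ s : Finset ℝ, s.card = m ∧ ∀ x ∈ s, f x = 0 ∧ x ∈ Set.Ioo b c)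
    (h2 : ∃ s : Finset ℝ, s.card = n ∧ ∀ x ∈ s, f x = 0 ∧ x ∈ Set.Ioo a b) :
    ∃ s : Finset ℝ, s.card = Nat.add m n ∧ ∀ x ∈ s, f x = 0 ∧ x ∈ Set.Ioo a c := by
  classical
  obtain ⟨s, hs, hs'⟩ := h1
  obtain ⟨t, ht, ht'⟩ := h2
  refine ⟨s ∪ t, ?_, ?_⟩
  · rw [Finset.card_union_of_disjoint, hs, ht]; · rfl
    rw [Finset.disjoint_left]
    intro x hx hx'
    have := (hs' x hx).2.1
    have := (ht' x hx').2.2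
    linarith
  · intro x hx
    rcases Finset.mem_union.1 hx with hx | hx
    · obtain ⟨h0, h1, h2⟩ := hs' x hx
      exact ⟨h0, by linarith, h2⟩
    · obtain ⟨h0, h1, h2⟩ := ht' x hx
      exact ⟨h0, h1, by linarith⟩

theorem chgs_spec (c0 c1 c2 c3 c4 c5 : Nat) :
    ∃ s : Finset ℝ, s.card = chgs c0 c1 c2 c3 c4 c5 ∧
      ∀ x ∈ s, (pol c0 c1 c2 c3 c4 c5).eval x = 0 := by
  have h : ∃ s : Finset ℝ, s.card = chgs c0 c1 c2 c3 c4 c5 ∧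
      ∀ x ∈ s, (pol c0 c1 c2 c3 c4 c5).eval x = 0 ∧
        x ∈ Set.Ioo (-(((63 : ℕ) : ℝ) / (1 : ℕ))) (-(((0 : ℕ) : ℝ) / (1 : ℕ))) := by
    unfold chgs
    refine glue ?_ ?_ (chg_spec ?_ ?_ ?_) ?_
    rotate_left 5
    refine glue ?_ ?_ (chg_spec ?_ ?_ ?_) ?_
    rotate_left 5
    refine glue ?_ ?_ (chg_spec ?_ ?_ ?_) ?_
    rotate_left 5
    refine glue ?_ ?_ (chg_spec ?_ ?_ ?_) ?_
    rotate_left 5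
    refine glue ?_ ?_ (chg_spec ?_ ?_ ?_) (chg_spec ?_ ?_ ?_)
    all_goals norm_num
  obtain ⟨s, hs, h⟩ := h
  exact ⟨s, hs, fun x hx => (h x hx).1⟩

theorem degOK_spec {m d c : Nat} (h : degOK m d c = true) (hd : m < d) : c = 0 := by
  unfold degOK at h
  cases hb : Nat.ble d m
  · rw [hb] at h; exact Nat.eq_of_beq_eq_true h
  · have := Nat.le_of_ble_eq_true hb
    omega

theorem pol_coeff (c0 c1 c2 c3 c4 c5 n : Nat) (h1 : n = 1 → c1 = 0) (h2 : n = 2 → c2 = 0)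
    (h3 : n = 3 → c3 = 0) (h4 : n = 4 → c4 = 0) (h5 : n = 5 → c5 = 0) (h0 : n ≠ 0) :
    (pol c0 c1 c2 c3 c4 c5).coeff n = 0 := by
  simp only [pol, ← C_eq_natCast, coeff_add, coeff_C_mul, coeff_X_pow, coeff_C, coeff_X]
  rw [if_neg h0]
  have e1 : (c1 : ℝ) * (if 1 = n then 1 else 0) = 0 := by
    split
    · rw [h1 (by omega)]; simp
    · simp
  have e2 : (c2 : ℝ) * (if n = 2 then 1 else 0) = 0 := by
    split
    · rw [h2 (by omega)]; simp
    · simp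
  have e3 : (c3 : ℝ) * (if n = 3 then 1 else 0) = 0 := by
    split
    · rw [h3 (by omega)]; simp
    · simp
  have e4 : (c4 : ℝ) * (if n = 4 then 1 else 0) = 0 := by
    split
    · rw [h4 (by omega)]; simp
    · simp
  have e5 : (c5 : ℝ) * (if n = 5 then 1 else 0) = 0 := by
    split
    · rw [h5 (by omega)]; simp
    · simp
  rw [e1, e2, e3, e4, e5]
  simp

theorem rrC_sound {c0 c1 c2 c3 c4 c5 : Nat} (h : rrC c0 c1 c2 c3 c4 c5 = true) :
    RealRooted (pol c0 c1 c2 c3 c4 c5) := by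
  simp only [rrC, strict_eq, cond_false'] at h
  obtain ⟨h0, h1, h2, h3, h4, h5⟩ := h
  obtain ⟨s, hs, hr⟩ := chgs_spec c0 c1 c2 c3 c4 c5
  refine realRooted_of_card (pol_ne (Nat.le_of_ble_eq_true h0)) s hr ?_
  rw [hs, natDegree_le_iff_coeff_eq_zero]
  intro n hn
  apply pol_coeff
  · rintro rfl; exact degOK_spec h1 hn
  · rintro rfl; exact degOK_spec h2 hn
  · rintro rfl; exact degOK_spec h3 hn
  · rintro rfl; exact degOK_spec h4 hn
  · rintro rfl; exact degOK_spec h5 hn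
  · omega

theorem eq6_spec {c0 c1 c2 c3 c4 c5 x0 x1 x2 x3 x4 x5 : Nat}
    (h : eq6 c0 c1 c2 c3 c4 c5 x0 x1 x2 x3 x4 x5 = true) :
    c0 = x0 ∧ c1 = x1 ∧ c2 = x2 ∧ c3 = x3 ∧ c4 = x4 ∧ c5 = x5 := by
  simpa only [eq6, cond_false', Nat.beq_eq] using h

theorem lin_real {z : ℂ} {a : ℝ} (ha : a ≠ 0) (h : 1 + (a : ℂ) * z = 0) : z.im = 0 := by
  have h2 := congrArg Complex.im h
  simp at h2
  tauto

theorem quad_real {z : ℂ} {a : ℝ} (ha : 4 ≤ a ^ 2) (h : 1 + (a : ℂ) * z + z ^ 2 = 0) :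
    z.im = 0 := by
  have h1 := congrArg Complex.re h
  have h2 := congrArg Complex.im h
  simp [pow_two] at h1 h2
  by_contra hz
  have h3 : a + 2 * z.re = 0 := by
    have : z.im * (a + 2 * z.re) = 0 := by linarith
    rcases mul_eq_zero.1 this with h | h
    · exact absurd h hz
    · exact h
  have h4 : z.re = -a / 2 := by linarith
  rw [h4] at h1
  have : 0 < z.im * z.im := mul_self_pos.2 hz
  nlinarith

theorem special_sound {c0 c1 c2 c3 c4 c5 : Nat} (h : special c0 c1 c2 c3 c4 c5 = true) :
    RealRooted (pol c0 c1 c2 c3 c4 c5) := by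
  have one : ∀ z : ℂ, 1 + z = 0 → z.im = 0 := fun z hz =>
    lin_real (a := 1) one_ne_zero (by simpa using hz)
  have hc : ∀ {x y : Bool}, cond x true y = true → x = true ∨ y = true := by
    intro x y; cases x <;> simp
  unfold special at h
  rcases hc h with h | h
  · obtain ⟨rfl, rfl, rfl, rfl, rfl, rfl⟩ := eq6_spec h
    refine ⟨pol_ne (by norm_num), fun z hz => ?_⟩
    rw [pol_aeval] at hz
    push_cast at hz
    have : (1 + z) ^ 2 = 0 := by linear_combination hz
    exact one z (pow_eq_zero_iff two_ne_zero |>.1 this)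
  rcases hc h with h | h
  · obtain ⟨rfl, rfl, rfl, rfl, rfl, rfl⟩ := eq6_spec h
    refine ⟨pol_ne (by norm_num), fun z hz => ?_⟩
    rw [pol_aeval] at hz
    push_cast at hz
    have : (1 + z) ^ 3 = 0 := by linear_combination hz
    exact one z (pow_eq_zero_iff three_ne_zero |>.1 this)
  rcases hc h with h | h
  · obtain ⟨rfl, rfl, rfl, rfl, rfl, rfl⟩ := eq6_spec h
    refine ⟨pol_ne (by norm_num), fun z hz => ?_⟩
    rw [pol_aeval] at hz
    push_cast at hz
    have : (1 + z) ^ 2 * (1 + ((9 : ℝ) : ℂ) * z) = 0 := by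
      push_cast; linear_combination hz
    rcases mul_eq_zero.1 this with h | h
    · exact one z (pow_eq_zero_iff two_ne_zero |>.1 h)
    · exact lin_real (by norm_num) h
  rcases hc h with h | h
  · obtain ⟨rfl, rfl, rfl, rfl, rfl, rfl⟩ := eq6_spec h
    refine ⟨pol_ne (by norm_num), fun z hz => ?_⟩
    rw [pol_aeval] at hz
    push_cast at hz
    have : (1 + z) ^ 2 * (1 + ((10 : ℝ) : ℂ) * z + z ^ 2) = 0 := by
      push_cast; linear_combination hz
    rcases mul_eq_zero.1 this with h | h
    · exact one z (pow_eq_zero_iff two_ne_zero |>.1 h)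
    · exact quad_real (by norm_num) h
  rcases hc h with h | h
  · obtain ⟨rfl, rfl, rfl, rfl, rfl, rfl⟩ := eq6_spec h
    refine ⟨pol_ne (by norm_num), fun z hz => ?_⟩
    rw [pol_aeval] at hz
    push_cast at hz
    have : (1 + ((3 : ℝ) : ℂ) * z) ^ 2 = 0 := by
      push_cast; linear_combination hz
    exact lin_real (by norm_num) (pow_eq_zero_iff two_ne_zero |>.1 this)
  · obtain ⟨rfl, rfl, rfl, rfl, rfl, rfl⟩ := eq6_spec h
    refine ⟨pol_ne (by norm_num), fun z hz => ?_⟩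
    rw [pol_aeval] at hz
    push_cast at hz
    have : (1 + ((4 : ℝ) : ℂ) * z + z ^ 2) ^ 2 = 0 := by
      push_cast; linear_combination hz
    exact quad_real (by norm_num) (pow_eq_zero_iff two_ne_zero |>.1 this)

end S6

/-- For every permutation `π ∈ S_6`, the descent-generating polynomial of the lower Bruhat
interval `[id, π]_B` is real-rooted. -/
theorem bruhatDesPoly_S6_realRooted (π : Equiv.Perm (Fin 6)) :
    RealRooted (bruhatDesPoly π) := by
  rw [S6.poly_eq]
  rcases S6.rr_cnt π with h | h
  · exact S6.rrC_sound h
  · exact S6.special_sound h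
end
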